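/- If (G, S, L) is a canvas with V(S) = {v1, v2} (and S edgeless), |L(v1)| ≥ 2 and |L(v2)| ≥ 2, then G has an L-coloring. -/

import Mathlib

/-!
Common definitions: plane graphs (given by a concrete embedding in the plane),
outer face, canvases, list colorings, governments, harmonicas and coloring
harmonicas, following Postle–Thomas,
"Five-list-coloring graphs on surfaces III".
-/

open Set

universe u

/-- A finite simple graph together with an embedding in the plane:
each vertex gets a point, each edge a simple arc joining its endpoints;
arcs avoid other vertices, and two distinct edges meet only in common
endpoints. -/
structure PlaneGraph (V : Type u) where
  verts : Set V
  Adj : V → V → Prop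
  finite_verts : verts.Finite
  adj_symm : ∀ u v, Adj u v → Adj v u
  adj_irrefl : ∀ v, ¬Adj v v
  adj_mem : ∀ u v, Adj u v → u ∈ verts
  pos : V → ℝ × ℝ
  arc : Sym2 V → Set (ℝ × ℝ)
  pos_injOn : Set.InjOn pos verts
  arc_arc : ∀ u v, Adj u v → ∃ f : ℝ → ℝ × ℝ,
    ContinuousOn f (Set.Icc 0 1) ∧ Set.InjOn f (Set.Icc 0 1) ∧
    f '' Set.Icc 0 1 = arc s(u, v) ∧ f 0 = pos u ∧ f 1 = pos v
  arc_avoid : ∀ u v, Adj u v → ∀ w ∈ verts, pos w ∈ arc s(u, v) → w = u ∨ w = v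
  arc_meet : ∀ u v x y, Adj u v → Adj x y → s(u, v) ≠ s(x, y) →
    arc s(u, v) ∩ arc s(x, y) ⊆ pos '' (({u, v} : Set V) ∩ ({x, y} : Set V))

namespace PlaneGraph

variable {V : Type u}

/-- The point set of the drawing of the plane graph. -/
def image (G : PlaneGraph V) : Set (ℝ × ℝ) :=
  G.pos '' G.verts ∪ ⋃ (u : V) (v : V) (_ : G.Adj u v), G.arc s(u, v)

/-- The outer (unbounded) face of the drawing. -/
def outerFace (G : PlaneGraph V) : Set (ℝ × ℝ) :=
  {p | p ∉ G.image ∧ ¬Bornology.IsBounded (connectedComponentIn G.imageᶜ p)}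

/-- A vertex incident with (i.e. on the boundary of) the outer face. -/
def OnOuter (G : PlaneGraph V) (v : V) : Prop := G.pos v ∈ frontier G.outerFace

/-- An edge incident with (i.e. on the boundary of) the outer face. -/
def EdgeOnOuter (G : PlaneGraph V) (u v : V) : Prop :=
  G.arc s(u, v) ⊆ frontier G.outerFace

/-- The vertices of the boundary of the outer face. -/
def boundaryVerts (G : PlaneGraph V) : Set V := {v | v ∈ G.verts ∧ G.OnOuter v}

/-- Connectivity of a plane graph. -/
def Connected (G : PlaneGraph V) : Prop :=
  G.verts.Nonempty ∧ ∀ u ∈ G.verts, ∀ v ∈ G.verts, Relation.ReflTransGen G.Adj u v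

/-- `H` is a (plane) subgraph of `G`, drawn the same way. -/
def IsSubgraph (H G : PlaneGraph V) : Prop :=
  H.verts ⊆ G.verts ∧ (∀ u v, H.Adj u v → G.Adj u v) ∧
  (∀ v ∈ H.verts, H.pos v = G.pos v) ∧
  (∀ u v, H.Adj u v → H.arc s(u, v) = G.arc s(u, v))

/-- Delete a set of vertices (and all incident edges) from a plane graph. -/
def deleteVerts (G : PlaneGraph V) (s : Set V) : PlaneGraph V where
  verts := G.verts \ s
  Adj u v := G.Adj u v ∧ u ∉ s ∧ v ∉ s
  finite_verts := G.finite_verts.subset Set.diff_subset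
  adj_symm := fun u v h => ⟨G.adj_symm u v h.1, h.2.2, h.2.1⟩
  adj_irrefl := fun v h => G.adj_irrefl v h.1
  adj_mem := fun u v h => ⟨G.adj_mem u v h.1, h.2.1⟩
  pos := G.pos
  arc := G.arc
  pos_injOn := G.pos_injOn.mono Set.diff_subset
  arc_arc := fun u v h => G.arc_arc u v h.1
  arc_avoid := fun u v h w hw hm => G.arc_avoid u v h.1 w hw.1 hm
  arc_meet := fun u v x y h h' hne => G.arc_meet u v x y h.1 h'.1 hne

/-- `G` has a proper coloring from the lists `L`. -/
def HasLColoring (G : PlaneGraph V) (L : V → Finset ℕ) : Prop :=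
  ∃ φ : V → ℕ, (∀ v ∈ G.verts, φ v ∈ L v) ∧ ∀ u v, G.Adj u v → φ u ≠ φ v

/-- A vertex of degree exactly one. -/
def DegreeOne (G : PlaneGraph V) (x : V) : Prop :=
  (∃ a, G.Adj x a) ∧ ∀ a b, G.Adj x a → G.Adj x b → a = b

end PlaneGraph

/-- The cyclic successor of an index in a list. -/
def cycNext {V : Type u} (C : List V) (i : Fin C.length) : Fin C.length :=
  ⟨((i : ℕ) + 1) % C.length, Nat.mod_lt _ (lt_of_le_of_lt (Nat.zero_le _) i.isLt)⟩

/-- The list `C` is a cycle of `G` whose image is exactly the boundary of the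
outer face of `G`; i.e. `G` is a plane graph with outer cycle `C`. -/
def PlaneGraph.IsOuterCycle {V : Type u} (G : PlaneGraph V) (C : List V) : Prop :=
  C.Nodup ∧ 3 ≤ C.length ∧ (∀ v ∈ C, v ∈ G.verts) ∧
  (∀ i : Fin C.length, G.Adj (C.get i) (C.get (cycNext C i))) ∧
  frontier G.outerFace =
    G.pos '' {v | v ∈ C} ∪ ⋃ i : Fin C.length, G.arc s(C.get i, C.get (cycNext C i))

/-- `pq` is an edge of the cycle (given as a list) `C`. -/
def IsCycleEdge {V : Type u} (C : List V) (p q : V) : Prop :=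
  ∃ i : Fin C.length, s(p, q) = s(C.get i, C.get (cycNext C i))

/-- `(G, S, L)` is a canvas, where the subgraph `S` of the boundary of the
outer face of `G` is given by its vertex set `Sverts` and adjacency `SAdj`. -/
structure IsCanvas {V : Type u} (G : PlaneGraph V) (Sverts : Set V) (SAdj : V → V → Prop)
    (L : V → Finset ℕ) : Prop where
  sadj_symm : ∀ u v, SAdj u v → SAdj v u
  sadj_sub : ∀ u v, SAdj u v → G.Adj u v
  sadj_mem : ∀ u v, SAdj u v → u ∈ Sverts
  sverts_sub : Sverts ⊆ G.verts
  sverts_outer : ∀ v ∈ Sverts, G.OnOuter v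
  sedges_outer : ∀ u v, SAdj u v → G.EdgeOnOuter u v
  lists_nonempty : ∀ v ∈ G.verts, (L v).Nonempty
  card_inner : ∀ v ∈ G.verts, ¬G.OnOuter v → 5 ≤ (L v).card
  card_outside_S : ∀ v ∈ G.verts, v ∉ Sverts → 3 ≤ (L v).card
  scolorable : ∃ φ : V → ℕ, (∀ v ∈ Sverts, φ v ∈ L v) ∧ ∀ u v, SAdj u v → φ u ≠ φ v

/-- The adjacency relation of the single-edge path `p₁p₂`. -/
def pathAdj {V : Type u} (p1 p2 : V) : V → V → Prop :=
  fun u v => (u = p1 ∧ v = p2) ∨ (u = p2 ∧ v = p1)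

/-- `(G, P, L)` is a canvas whose precolored subgraph is a path `P = p₁p₂` of
length one (in the boundary of the outer face of `G`). -/
def IsPathCanvas {V : Type u} (G : PlaneGraph V) (p1 p2 : V) (L : V → Finset ℕ) : Prop :=
  p1 ≠ p2 ∧ IsCanvas G {p1, p2} (pathAdj p1 p2) L

/-- `c = (c₁, c₂)` is a proper `L`-coloring of the edge `p₁p₂`. -/
def ProperEdgeColoring {V : Type u} (L : V → Finset ℕ) (p1 p2 : V) (c : ℕ × ℕ) : Prop :=
  c.1 ∈ L p1 ∧ c.2 ∈ L p2 ∧ c.1 ≠ c.2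

/-- `Φ_T(P', 𝒞)`: the colorings of the edge `q₁q₂` extendable to an `L`-coloring
of `G` whose restriction to `p₁p₂` lies in `C`. -/
def Phi {V : Type u} (G : PlaneGraph V) (L : V → Finset ℕ) (p1 p2 q1 q2 : V)
    (C : Set (ℕ × ℕ)) : Set (ℕ × ℕ) :=
  {c | ∃ φ : V → ℕ, (∀ v ∈ G.verts, φ v ∈ L v) ∧ (∀ u v, G.Adj u v → φ u ≠ φ v) ∧
    (φ p1, φ p2) ∈ C ∧ φ q1 = c.1 ∧ φ q2 = c.2}

/-- The set of colors used on the first vertex of the path. -/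
def fstColors (C : Set (ℕ × ℕ)) : Set ℕ := Prod.fst '' C

/-- The set of colors used on the second vertex of the path. -/
def sndColors (C : Set (ℕ × ℕ)) : Set ℕ := Prod.snd '' C

/-- A dictatorship: at least two (distinct) colorings, all agreeing on one of
the two vertices (the dictator). -/
def IsDictatorship (C : Set (ℕ × ℕ)) : Prop :=
  (∃ c ∈ C, ∃ d ∈ C, c ≠ d) ∧
  ((∃ a, ∀ c ∈ C, c.1 = a) ∨ (∃ a, ∀ c ∈ C, c.2 = a))

/-- A democracy: exactly the two colorings `(x, y)` and `(y, x)`. -/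
def IsDemocracy (C : Set (ℕ × ℕ)) : Prop :=
  ∃ x y : ℕ, x ≠ y ∧ C = {(x, y), (y, x)}

/-- A government is a dictatorship or a democracy. -/
def IsGovernment (C : Set (ℕ × ℕ)) : Prop := IsDictatorship C ∨ IsDemocracy C

/-- A confederacy: not a government, but the union of two governments. -/
def IsConfederacy (C : Set (ℕ × ℕ)) : Prop :=
  ¬IsGovernment C ∧ ∃ C1 C2 : Set (ℕ × ℕ), IsGovernment C1 ∧ IsGovernment C2 ∧ C = C1 ∪ C2

/-- The canvas `(G, p₁p₂, L)` is a harmonica from the path `p₁p₂` to the path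
`q₁q₂` with government `C`. -/
inductive IsHarmonica {V : Type u} (L : V → Finset ℕ) :
    PlaneGraph V → V → V → V → V → Set (ℕ × ℕ) → Prop where
  /-- Rule (i): `G = P = P'`. -/
  | same (G : PlaneGraph V) (p1 p2 q1 q2 : V) (C : Set (ℕ × ℕ))
      (hcanvas : IsPathCanvas G p1 p2 L)
      (hproper : ∀ c ∈ C, ProperEdgeColoring L p1 p2 c)
      (hgov : IsGovernment C)
      (hq : (q1 = p1 ∧ q2 = p2) ∨ (q1 = p2 ∧ q2 = p1))
      (hverts : G.verts = {p1, p2})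
      (hedges : ∀ u v, G.Adj u v → pathAdj p1 p2 u v) :
      IsHarmonica L G p1 p2 q1 q2 C
  /-- Rule (ii): `C` is a dictatorship, `G = P ∪ P'`, `V(P) ∩ V(P') = {z}`
  where `z` is the dictator. -/
  | cherry (G : PlaneGraph V) (p1 p2 q1 q2 z : V) (C : Set (ℕ × ℕ))
      (hcanvas : IsPathCanvas G p1 p2 L)
      (hproper : ∀ c ∈ C, ProperEdgeColoring L p1 p2 c)
      (hdict : IsDictatorship C)
      (hq : q1 ≠ q2) (hqadj : G.Adj q1 q2) (hqout : G.EdgeOnOuter q1 q2)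
      (hverts : G.verts = {p1, p2, q1, q2})
      (hedges : ∀ u v, G.Adj u v → pathAdj p1 p2 u v ∨ pathAdj q1 q2 u v)
      (hz : (({p1, p2} : Set V) ∩ ({q1, q2} : Set V)) = {z})
      (hzdict : (z = p1 ∧ ∃ a, ∀ c ∈ C, c.1 = a) ∨ (z = p2 ∧ ∃ a, ∀ c ∈ C, c.2 = a)) :
      IsHarmonica L G p1 p2 q1 q2 C
  /-- Rule (iii): `C` is a dictatorship with dictator `z ∈ V(P)` in color `c`,
  sitting on a triangle `z u₁ u₂`. -/
  | dict (G : PlaneGraph V) (p1 p2 q1 q2 z w u1 u2 : V) (c : ℕ) (L0 : Finset ℕ)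
      (C C' : Set (ℕ × ℕ))
      (hcanvas : IsPathCanvas G p1 p2 L)
      (hproper : ∀ d ∈ C, ProperEdgeColoring L p1 p2 d)
      (hdict : IsDictatorship C)
      (hq : q1 ≠ q2) (hqadj : G.Adj q1 q2) (hqout : G.EdgeOnOuter q1 q2)
      (hz : (z = p1 ∧ w = p2 ∧ (∀ d ∈ C, d.1 = c) ∧
              (u1 = w → sndColors C = (L0 : Set ℕ)) ∧
              (u2 = w → sndColors C = (L0 : Set ℕ))) ∨
            (z = p2 ∧ w = p1 ∧ (∀ d ∈ C, d.2 = c) ∧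
              (u1 = w → fstColors C = (L0 : Set ℕ)) ∧
              (u2 = w → fstColors C = (L0 : Set ℕ))))
      (hzu1 : G.Adj z u1) (hzu2 : G.Adj z u2) (hu12 : G.Adj u1 u2)
      (hL0 : L0.card = 2)
      (hLu1 : u1 ∉ ({p1, p2} : Set V) → L u1 = L0 ∪ {c})
      (hLu2 : u2 ∉ ({p1, p2} : Set V) → L u2 = L0 ∪ {c})
      (hu1P : u1 ∈ ({p1, p2} : Set V) → u1 = w)
      (hu2P : u2 ∈ ({p1, p2} : Set V) → u2 = w)
      (hdem : IsDemocracy C')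
      (hC'1 : fstColors C' = (L0 : Set ℕ)) (hC'2 : sndColors C' = (L0 : Set ℕ))
      (hrec : IsHarmonica L (G.deleteVerts (({p1, p2} : Set V) \ {u1, u2})) u1 u2 q1 q2 C') :
      IsHarmonica L G p1 p2 q1 q2 C
  /-- Rule (iv), with `i = 1`: `C` is a democracy, `z` is a common neighbor of
  `p₁, p₂`, and `p₁` is deleted. -/
  | demo1 (G : PlaneGraph V) (p1 p2 q1 q2 z : V) (a b c : ℕ) (L0 : Finset ℕ)
      (C C' : Set (ℕ × ℕ))
      (hcanvas : IsPathCanvas G p1 p2 L)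
      (hproper : ∀ d ∈ C, ProperEdgeColoring L p1 p2 d)
      (hdemC : IsDemocracy C)
      (hq : q1 ≠ q2) (hqadj : G.Adj q1 q2) (hqout : G.EdgeOnOuter q1 q2)
      (hz1 : G.Adj z p1) (hz2 : G.Adj z p2)
      (hLz : L z = L0 ∪ {c})
      (hC1 : fstColors C = (L0 : Set ℕ)) (hC2 : sndColors C = (L0 : Set ℕ))
      (hab : a ≠ b) (hL0ab : (L0 : Set ℕ) = {a, b})
      (hC' : C' = {(c, a), (c, b)})
      (hrec : IsHarmonica L (G.deleteVerts {p1}) z p2 q1 q2 C') :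
      IsHarmonica L G p1 p2 q1 q2 C
  /-- Rule (iv), with `i = 2`: `C` is a democracy, `z` is a common neighbor of
  `p₁, p₂`, and `p₂` is deleted. -/
  | demo2 (G : PlaneGraph V) (p1 p2 q1 q2 z : V) (a b c : ℕ) (L0 : Finset ℕ)
      (C C' : Set (ℕ × ℕ))
      (hcanvas : IsPathCanvas G p1 p2 L)
      (hproper : ∀ d ∈ C, ProperEdgeColoring L p1 p2 d)
      (hdemC : IsDemocracy C)
      (hq : q1 ≠ q2) (hqadj : G.Adj q1 q2) (hqout : G.EdgeOnOuter q1 q2)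
      (hz1 : G.Adj z p1) (hz2 : G.Adj z p2)
      (hLz : L z = L0 ∪ {c})
      (hC1 : fstColors C = (L0 : Set ℕ)) (hC2 : sndColors C = (L0 : Set ℕ))
      (hab : a ≠ b) (hL0ab : (L0 : Set ℕ) = {a, b})
      (hC' : C' = {(c, a), (c, b)})
      (hrec : IsHarmonica L (G.deleteVerts {p2}) z p1 q1 q2 C') :
      IsHarmonica L G p1 p2 q1 q2 C

/-- `(G, L)` is a coloring harmonica from `uv` to `w` (source `Sum.inr (u, v)`)
or from `u` to `w` (source `Sum.inl u`). -/
inductive IsColoringHarmonica {V : Type u} [DecidableEq V] :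
    PlaneGraph V → (V → Finset ℕ) → V ⊕ V × V → V → Prop where
  /-- `G` is a triangle with vertex set `{u, v, w}`, `L(u) = L(v) = L(w)` and
  `|L(u)| = 2`. -/
  | tri (G : PlaneGraph V) (L : V → Finset ℕ) (u v w : V)
      (hconn : G.Connected) (huv : u ≠ v) (huw : u ≠ w) (hvw : v ≠ w)
      (hu : G.OnOuter u) (hv : G.OnOuter v) (hw : G.OnOuter w)
      (huvout : G.EdgeOnOuter u v)
      (hverts : G.verts = {u, v, w})
      (hadjuv : G.Adj u v) (hadjvw : G.Adj v w) (hadjuw : G.Adj u w)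
      (hLuv : L u = L v) (hLvw : L v = L w) (hcard : (L u).card = 2) :
      IsColoringHarmonica G L (Sum.inr (u, v)) w
  /-- There is a triangle `uvz` on the outer face; delete one or both of
  `u, v` and recurse from `z`. -/
  | step (G : PlaneGraph V) (L : V → Finset ℕ) (u v w z : V) (s : Set V)
      (hconn : G.Connected) (huv : u ≠ v) (huw : u ≠ w) (hvw : v ≠ w)
      (hu : G.OnOuter u) (hv : G.OnOuter v) (hw : G.OnOuter w)
      (huvout : G.EdgeOnOuter u v)
      (hadjuv : G.Adj u v) (hadjuz : G.Adj u z) (hadjvz : G.Adj v z)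
      (hz : G.OnOuter z)
      (hLuv : L u = L v) (hsub : L u ⊆ L z)
      (hcardu : (L u).card = 2) (hcardz : (L z).card = 3)
      (hs : s = {u} ∨ s = {v} ∨ s = ({u, v} : Set V))
      (hrec : IsColoringHarmonica (G.deleteVerts s)
        (Function.update L z (L z \ L u)) (Sum.inl z) w) :
      IsColoringHarmonica G L (Sum.inr (u, v)) w
  /-- `|L(u)| = 1`, `u` sits on a triangle `uxy`; delete `u` and recurse
  from `xy`. -/
  | vert (G : PlaneGraph V) (L : V → Finset ℕ) (u w x y : V)
      (hconn : G.Connected) (huw : u ≠ w)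
      (hu : G.OnOuter u) (hw : G.OnOuter w)
      (hx : G.OnOuter x) (hy : G.OnOuter y)
      (hadjux : G.Adj u x) (hadjuy : G.Adj u y) (hadjxy : G.Adj x y)
      (hcardu : (L u).card = 1)
      (hLxy : L x \ L u = L y \ L u) (hcardx : (L x \ L u).card = 2)
      (hrec : IsColoringHarmonica (G.deleteVerts {u})
        (Function.update (Function.update L x (L x \ L u)) y (L y \ L u))
        (Sum.inr (x, y)) w) :
      IsColoringHarmonica G L (Sum.inl u) w

/-- `(G, L)` contains a coloring harmonica `(H, L')` with the given source and
target: `H` is a subgraph of `G` and `L'` agrees with `L` on `V(H)`. -/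
def ContainsColoringHarmonica {V : Type u} [DecidableEq V] (G : PlaneGraph V)
    (L : V → Finset ℕ) (st : V ⊕ V × V) (w : V) : Prop :=
  ∃ (H : PlaneGraph V) (L' : V → Finset ℕ), H.IsSubgraph G ∧
    (∀ x ∈ H.verts, L' x = L x) ∧ IsColoringHarmonica H L' st w

/-- `v` is a cutvertex of the boundary of the outer face of `G`. -/
def BoundaryCutvertex {V : Type u} (G : PlaneGraph V) (v : V) : Prop :=
  ∃ a b : V, a ∈ G.boundaryVerts ∧ b ∈ G.boundaryVerts ∧ a ≠ v ∧ b ≠ v ∧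
    Relation.ReflTransGen (fun x y => G.Adj x y ∧ G.EdgeOnOuter x y) a b ∧
    ¬Relation.ReflTransGen
      (fun x y => G.Adj x y ∧ G.EdgeOnOuter x y ∧ x ≠ v ∧ y ≠ v) a b

open Classical in
/-- The list assignment of the democratic reduction `T(P, L0, x)`:
remove the colors of `L0` from the list of `x` and from the lists of all
neighbors of `P` other than `y`. -/
noncomputable def reducedL {V : Type u} (G : PlaneGraph V) (L : V → Finset ℕ)
    (L0 : Finset ℕ) (Q : List V) (x y : V) : V → Finset ℕ := fun w =>
  if w = x ∨ (w ≠ y ∧ ∃ p ∈ Q, G.Adj w p) then L w \ L0 else L w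

/-- The vertex set of the precolored subgraph of the democratic reduction:
`S ∖ V(P)`, together with `x` as an isolated vertex if its new list is
smaller than 3. -/
def reducedSverts {V : Type u} (Sverts : Set V) (Q : List V) (x : V)
    (L' : V → Finset ℕ) : Set V :=
  {v | (v ∈ Sverts ∧ v ∉ Q) ∨ (v = x ∧ (L' x).card < 3)}

/-- The adjacency of the precolored subgraph of the democratic reduction:
`S ∖ V(P)`. -/
def reducedSAdj {V : Type u} (SAdj : V → V → Prop) (Q : List V) : V → V → Prop :=
  fun u v => SAdj u v ∧ u ∉ Q ∧ v ∉ Q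




section Comb
open Classical

/-- Reachability along edges of `E` inside the vertex set `S`. -/
def RS {V : Type u} (E : Finset (Sym2 V)) (S : Set V) : V → V → Prop :=
  Relation.ReflTransGen (fun a b => s(a, b) ∈ E ∧ a ∈ S ∧ b ∈ S)

/-- The combinatorial properties of (edge set, boundary vertices) of a plane graph that we use. -/
structure GoodClass {V : Type u} (Good : Finset (Sym2 V) → Set V → Prop) : Prop where
  noloop : ∀ {E B}, Good E B → ∀ v, s(v, v) ∉ E
  fin : ∀ {E B}, Good E B → B.Finite
  mono : ∀ {E B E'}, Good E B → E' ⊆ E → Good E' B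
  del : ∀ {E B x}, Good E B → x ∈ B →
    Good (E.filter (fun e => x ∉ e)) (B ∪ {n | s(x, n) ∈ E})
  edge : ∀ {E B u v}, Good E B → s(u, v) ∈ E → Good (E.erase s(u, v)) {u, v}
  sep : ∀ {E B x y1 y2 y3}, Good E B → x ∈ B → y1 ∈ B → y2 ∈ B → y3 ∈ B →
    ∀ S1 S2 S3 : Set V, x ∈ S1 → x ∈ S2 → x ∈ S3 → y1 ∈ S1 → y2 ∈ S2 → y3 ∈ S3 →
    y2 ∉ S1 → y3 ∉ S1 → y1 ∉ S2 → y3 ∉ S2 → y1 ∉ S3 → y2 ∉ S3 →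
    RS E S1 x y1 → RS E S2 x y2 → RS E S3 x y3 →
    RS E S3ᶜ y1 y2 → RS E S2ᶜ y1 y3 → RS E S1ᶜ y2 y3 → False

variable {V : Type u}

def Proper (E : Finset (Sym2 V)) (φ : V → ℕ) : Prop := ∀ u v, s(u, v) ∈ E → φ u ≠ φ v

/-- Lists are large enough outside `X`. -/
def OKL (B : Set V) (L : V → Finset ℕ) (X : Set V) : Prop :=
  ∀ v, v ∉ X → 3 ≤ (L v).card ∧ (v ∉ B → 5 ≤ (L v).card)

lemma RS.symm {E : Finset (Sym2 V)} {S : Set V} {a b : V} (h : RS E S a b) : RS E S b a := by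
  unfold RS at *
  induction h with
  | refl => exact .refl
  | tail _ h ih => exact .head ⟨by rw [Sym2.eq_swap]; exact h.1, h.2.2, h.2.1⟩ ih

lemma RS.single {E : Finset (Sym2 V)} {S : Set V} {a b : V} (h : s(a, b) ∈ E) (ha : a ∈ S)
    (hb : b ∈ S) : RS E S a b := Relation.ReflTransGen.single ⟨h, ha, hb⟩

lemma RS.trans {E : Finset (Sym2 V)} {S : Set V} {a b c : V} (h : RS E S a b) (h' : RS E S b c) :
    RS E S a c := Relation.ReflTransGen.trans h h'

lemma RS.mono {E : Finset (Sym2 V)} {S T : Set V} {a b : V} (h : RS E S a b) (hST : S ⊆ T) :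
    RS E T a b := by
  unfold RS at *
  exact Relation.ReflTransGen.mono (fun x y hxy => ⟨hxy.1, hST hxy.2.1, hST hxy.2.2⟩) _ _ h

lemma RS.mem {E : Finset (Sym2 V)} {S : Set V} {a b : V} (h : RS E S a b) (ha : a ∈ S) : b ∈ S := by
  unfold RS at *
  induction h with
  | refl => exact ha
  | tail _ h ih => exact h.2.2

structure Split (E : Finset (Sym2 V)) (u w : V) (K K' : Set V) : Prop where
  edge : s(u, w) ∈ E
  cover : ∀ v, v ∈ K ∨ v ∈ K' ∨ v = u ∨ v = w
  disj : ∀ v, v ∈ K → v ∉ K'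
  uK : u ∉ K
  wK : w ∉ K
  uK' : u ∉ K'
  wK' : w ∉ K'
  noedge : ∀ a b, s(a, b) ∈ E → a ∈ K → b ∉ K'
  touch : ∃ a b, s(a, b) ∈ E ∧ a ∈ K
  touch' : ∃ a b, s(a, b) ∈ E ∧ a ∈ K'

lemma Split.symm {E : Finset (Sym2 V)} {u w : V} {K K' : Set V} (h : Split E u w K K') :
    Split E u w K' K :=
  ⟨h.edge, fun v => by have := h.cover v; tauto, fun v h1 h2 => h.disj v h2 h1, h.uK', h.wK', h.uK,
    h.wK, fun a b hab ha hb => h.noedge b a (by rw [Sym2.eq_swap]; exact hab) hb ha, h.touch', h.touch⟩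

/-- edges of one side -/
noncomputable def side (E : Finset (Sym2 V)) (u w : V) (K : Set V) : Finset (Sym2 V) :=
  E.filter (fun e => ∀ x ∈ e, x ∈ K ∨ x = u ∨ x = w)

lemma mem_side {E : Finset (Sym2 V)} {u w : V} {K : Set V} {a b : V} :
    s(a, b) ∈ side E u w K ↔ s(a, b) ∈ E ∧ (a ∈ K ∨ a = u ∨ a = w) ∧ (b ∈ K ∨ b = u ∨ b = w) := by
  simp [side]

lemma side_sub {E : Finset (Sym2 V)} {u w : V} {K : Set V} : side E u w K ⊆ E :=
  Finset.filter_subset _ _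

lemma Split.card_lt {E : Finset (Sym2 V)} {u w : V} {K K' : Set V} (h : Split E u w K K') :
    (side E u w K).card < E.card := by
  obtain ⟨a, b, hab, ha⟩ := h.touch'
  apply Finset.card_lt_card
  refine ⟨side_sub, fun hs => ?_⟩
  have h1 := mem_side.1 (hs hab)
  rcases h1.2.1 with h2 | h2 | h2
  · exact h.disj _ h2 ha
  · exact h.uK' (h2 ▸ ha)
  · exact h.wK' (h2 ▸ ha)

lemma Split.edge_mem {E : Finset (Sym2 V)} {u w : V} {K K' : Set V} (h : Split E u w K K') :
    s(u, w) ∈ side E u w K := mem_side.2 ⟨h.edge, by simp, by simp⟩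

lemma Split.cases {E : Finset (Sym2 V)} {u w : V} {K K' : Set V} (h : Split E u w K K') {a b : V}
    (hab : s(a, b) ∈ E) : s(a, b) ∈ side E u w K ∨ s(a, b) ∈ side E u w K' := by
  have h1 := h.cover a
  have h2 := h.cover b
  have h3 := h.noedge a b hab
  have h4 := h.noedge b a (by rw [Sym2.eq_swap]; exact hab)
  simp only [mem_side]
  tauto

lemma Split.glue {E : Finset (Sym2 V)} {u w : V} {K K' : Set V} (h : Split E u w K K')
    {φ φ' : V → ℕ} (hφ : Proper (side E u w K) φ) (hφ' : Proper (side E u w K') φ')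
    (hu : φ u = φ' u) (hw : φ w = φ' w) : Proper E (fun v => if v ∈ K then φ v else φ' v) := by
  have key : ∀ v, (v ∈ K ∨ v = u ∨ v = w) → (if v ∈ K then φ v else φ' v) = φ v := by
    intro v hv
    split_ifs with hk
    · rfl
    · rcases hv with hv | rfl | rfl
      · exact absurd hv hk
      · exact hu.symm
      · exact hw.symm
  have key' : ∀ v, (v ∈ K' ∨ v = u ∨ v = w) → (if v ∈ K then φ v else φ' v) = φ' v := by
    intro v hv
    rw [if_neg]
    rcases hv with hv | rfl | rfl
    · exact fun hk => h.disj _ hk hv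
    · exact h.uK
    · exact h.wK
  intro a b hab
  rcases h.cases hab with h1 | h1
  · have h2 := mem_side.1 h1
    simp only [key a h2.2.1, key b h2.2.2]
    exact hφ _ _ h1
  · have h2 := mem_side.1 h1
    simp only [key' a h2.2.1, key' b h2.2.2]
    exact hφ' _ _ h1

/-- No chord splits. -/
def NoSplit (E : Finset (Sym2 V)) (B : Set V) : Prop :=
  ∀ u w K K', u ∈ B → w ∈ B → ¬ Split E u w K K'

def Deg2 (E : Finset (Sym2 V)) (B : Set V) : Prop :=
  ∀ x ∈ B, ∀ a ∈ B, ∀ b ∈ B, ∀ c ∈ B, s(x, a) ∈ E → s(x, b) ∈ E → s(x, c) ∈ E →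
    a = b ∨ a = c ∨ b = c

variable {Good : Finset (Sym2 V) → Set V → Prop}

lemma GoodClass.ne (H : GoodClass Good) {E B} (hG : Good E B) {a b : V} (h : s(a, b) ∈ E) : a ≠ b := by
  rintro rfl
  exact H.noloop hG _ h

/-- If `a`, `b` are not joined off `{x,y}`, we get a split. -/
lemma split_of_not_reach (H : GoodClass Good) {E B} (hG : Good E B) {x y a b : V} 
    (hxy : s(x, y) ∈ E) (hxa : s(x, a) ∈ E) (hxb : s(x, b) ∈ E) (hay : a ≠ y) (hby : b ≠ y)
    (hn : ¬ RS E ({x, y}ᶜ) a b) : ∃ K K', Split E x y K K' := by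
  have ha : a ∈ ({x, y}ᶜ : Set V) := by simp [(H.ne hG hxa).symm, hay]
  have hb : b ∈ ({x, y}ᶜ : Set V) := by simp [(H.ne hG hxb).symm, hby]
  have hK : ∀ v, RS E ({x, y}ᶜ) a v → v ≠ x ∧ v ≠ y := fun v hv => by
    have := hv.mem ha; simpa using this
  refine ⟨{v | RS E ({x, y}ᶜ) a v}, {v | ¬ RS E ({x, y}ᶜ) a v ∧ v ≠ x ∧ v ≠ y},
    hxy, ?_, ?_, ?_, ?_, ?_, ?_, ?_, ?_, ?_⟩
  · intro v; simp only [Set.mem_ofPred_eq]; tauto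
  · rintro v h1 ⟨h2, -⟩; exact h2 h1
  · intro h; exact (hK _ h).1 rfl
  · intro h; exact (hK _ h).2 rfl
  · rintro ⟨-, h, -⟩; exact h rfl
  · rintro ⟨-, -, h⟩; exact h rfl
  · rintro c d hcd hc ⟨hd, hd1, hd2⟩
    exact hd (RS.trans hc (RS.single hcd (RS.mem hc ha) (by simp [hd1, hd2])))
  · exact ⟨a, x, by rw [Sym2.eq_swap]; exact hxa, Relation.ReflTransGen.refl⟩
  · exact ⟨b, x, by rw [Sym2.eq_swap]; exact hxb, hn, by simpa using hb⟩

lemma deg2_of_noSplit (H : GoodClass Good) {E B} (hG : Good E B) (hN : NoSplit E B) : Deg2 E B := by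
  intro x hx a ha b hb c hc hxa hxb hxc
  by_contra hcon
  push Not at hcon
  obtain ⟨hab, hac, hbc⟩ := hcon
  have nxa := H.ne hG hxa
  have nxb := H.ne hG hxb
  have nxc := H.ne hG hxc
  refine H.sep hG hx ha hb hc {x, a} {x, b} {x, c} (by simp) (by simp) (by simp) (by simp) (by simp)
    (by simp) (by simp [nxb.symm, hab.symm]) (by simp [nxc.symm, hac.symm])
    (by simp [nxa.symm, hab]) (by simp [nxc.symm, hbc.symm]) (by simp [nxa.symm, hac])
    (by simp [nxb.symm, hbc]) (RS.single hxa (by simp) (by simp)) (RS.single hxb (by simp) (by simp))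
    (RS.single hxc (by simp) (by simp)) ?_ ?_ ?_
  · by_contra h
    obtain ⟨K, K', hs⟩ := split_of_not_reach H hG hxc hxa hxb hac hbc h
    exact hN _ _ _ _ hx hc hs
  · by_contra h
    obtain ⟨K, K', hs⟩ := split_of_not_reach H hG hxb hxa hxc hab hbc.symm h
    exact hN _ _ _ _ hx hb hs
  · by_contra h
    obtain ⟨K, K', hs⟩ := split_of_not_reach H hG hxa hxb hxc hab.symm hac.symm h
    exact hN _ _ _ _ hx ha hs

/-- Deleting a set of boundary vertices. -/
noncomputable def delE (E : Finset (Sym2 V)) (D : List V) : Finset (Sym2 V) :=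
  E.filter (fun e => ∀ x ∈ e, x ∉ D)

def delB (E : Finset (Sym2 V)) (B : Set V) (D : List V) : Set V := B ∪ {n | ∃ d ∈ D, s(d, n) ∈ E}

noncomputable def delL (E : Finset (Sym2 V)) (B : Set V) (D : List V) (R : Finset ℕ)
    (L : V → Finset ℕ) : V → Finset ℕ :=
  fun v => if v ∉ B ∧ ∃ d ∈ D, s(d, v) ∈ E then L v \ R else L v

lemma mem_delE {E : Finset (Sym2 V)} {D : List V} {a b : V} :
    s(a, b) ∈ delE E D ↔ s(a, b) ∈ E ∧ a ∉ D ∧ b ∉ D := by simp [delE]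

lemma GoodClass.delD (H : GoodClass Good) {E B} (hG : Good E B) (D : List V) (hD : ∀ d ∈ D, d ∈ B) :
    Good (delE E D) (delB E B D) := by
  induction D with
  | nil => 
    have h1 : delE E [] = E := by simp [delE]
    have h2 : delB E B [] = B := by simp [delB]
    rw [h1, h2]; exact hG
  | cons x D ih =>
    have ih := ih (fun d hd => hD d (by simp [hd]))
    have h := H.del ih (x := x) (Or.inl (hD x (by simp)))
    have h1 : (delE E D).filter (fun e => x ∉ e) = delE E (x :: D) := by
      ext e
      induction e with | _ a b =>
      simp only [Finset.mem_filter, mem_delE, Sym2.mem_iff, List.mem_cons]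
      constructor
      · rintro ⟨⟨h1, h2, h3⟩, h4⟩
        push Not at h4
        exact ⟨h1, by simp [h2, h4.1.symm], by simp [h3, h4.2.symm]⟩
      · rintro ⟨h1, h2, h3⟩
        push Not at h2 h3
        exact ⟨⟨h1, h2.2, h3.2⟩, by simp [h2.1.symm, h3.1.symm]⟩
    have h2 : delB E B D ∪ {n | s(x, n) ∈ delE E D} = delB E B (x :: D) := by
      ext n
      simp only [delB, Set.mem_union, Set.mem_ofPred_eq, mem_delE, List.mem_cons, exists_eq_or_imp]
      constructor
      · tauto
      · rintro (h1 | h1 | h1)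
        · tauto
        · by_cases hx : x ∈ D
          · exact Or.inl (Or.inr ⟨x, hx, h1⟩)
          · by_cases hn : n ∈ D
            · exact Or.inl (Or.inl (hD n (by simp [hn])))
            · exact Or.inr ⟨h1, hx, hn⟩
        · exact Or.inl (Or.inr h1)
    rw [← h1, ← h2]
    exact h

lemma delL_sub {E : Finset (Sym2 V)} {B : Set V} {D R} {L : V → Finset ℕ} (v : V) :
    delL E B D R L v ⊆ L v := by
  unfold delL; split_ifs
  · exact Finset.sdiff_subset
  · exact Finset.Subset.refl _

lemma delL_of_mem {E : Finset (Sym2 V)} {B : Set V} {D R} {L : V → Finset ℕ} {v : V} (h : v ∈ B) :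
    delL E B D R L v = L v := by
  simp [delL, h]

lemma delL_not_mem {E : Finset (Sym2 V)} {B : Set V} {D R} {L : V → Finset ℕ} {v d : V} {c : ℕ}
    (h : v ∉ B) (hd : d ∈ D) (he : s(d, v) ∈ E) (hc : c ∈ delL E B D R L v) : c ∉ R := by
  rw [delL, if_pos ⟨h, d, hd, he⟩] at hc
  exact (Finset.mem_sdiff.1 hc).2

lemma OKL_del {E : Finset (Sym2 V)} {B : Set V} {D : List V} {R : Finset ℕ} {L : V → Finset ℕ}
    {X : Set V} (h : OKL B L X) (hR : R.card ≤ 2) :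
    OKL (delB E B D) (delL E B D R L) X := by
  intro v hv
  have h1 := h v hv
  by_cases hvB : v ∈ B
  · rw [delL_of_mem hvB]
    exact ⟨h1.1, fun h => absurd (Or.inl hvB) h⟩
  · by_cases hd : ∃ d ∈ D, s(d, v) ∈ E
    · rw [delL, if_pos ⟨hvB, hd⟩]
      have := Finset.le_card_sdiff R (L v)
      have := h1.2 hvB
      exact ⟨by omega, fun h => absurd (Or.inr hd) h⟩
    · rw [delL, if_neg (fun h => hd h.2)]
      exact ⟨h1.1, fun _ => h1.2 hvB⟩

lemma glue_del {E : Finset (Sym2 V)} {D : List V} {φ κ : V → ℕ} (hφ : Proper (delE E D) φ)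
    (hκ : ∀ a b, a ∈ D → b ∈ D → s(a, b) ∈ E → κ a ≠ κ b)
    (hc : ∀ a b, a ∈ D → b ∉ D → s(a, b) ∈ E → κ a ≠ φ b) :
    Proper E (fun v => if v ∈ D then κ v else φ v) := by
  intro a b hab
  have hba : s(b, a) ∈ E := by rw [Sym2.eq_swap]; exact hab
  by_cases ha : a ∈ D <;> by_cases hb : b ∈ D <;> simp only [ha, hb, if_true, if_false]
  · exact hκ a b ha hb hab
  · exact hc a b ha hb hab
  · exact (hc b a hb ha hba).symm
  · exact hφ a b (mem_delE.2 ⟨hab, ha, hb⟩)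

lemma delE_card_lt {E : Finset (Sym2 V)} {D : List V} {a b : V} (hab : s(a, b) ∈ E) (ha : a ∈ D) :
    (delE E D).card < E.card := by
  apply Finset.card_lt_card
  exact ⟨Finset.filter_subset _ _, fun hs => (mem_delE.1 (hs hab)).2.1 ha⟩

end Comb

section Comb
open Classical
variable {V : Type u}
variable {Good : Finset (Sym2 V) → Set V → Prop}

noncomputable def fixL (L : V → Finset ℕ) (Y : Set V) : V → Finset ℕ :=
  fun v => if v ∈ Y then Finset.range 5 else L v

lemma OKL.fix {B : Set V} {L : V → Finset ℕ} {X : Set V} (h : OKL B L X) (Y X' : Set V)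
    (hX : ∀ v ∈ X, v ∈ Y ∨ v ∈ X') : OKL B (fixL L Y) X' := by
  intro v hv
  unfold fixL
  split_ifs with hY
  · simp
  · exact h v (fun hx => by rcases hX v hx with h | h <;> contradiction)

lemma fixL_of_not_mem {L : V → Finset ℕ} {Y : Set V} {v : V} (h : v ∉ Y) : fixL L Y v = L v := by
  simp [fixL, h]

lemma pick2 {s : Finset ℕ} (h : 3 ≤ s.card) (a b : ℕ) : ∃ c ∈ s, c ≠ a ∧ c ≠ b := by
  have h1 := Finset.le_card_sdiff {a, b} s
  have h2 : ({a, b} : Finset ℕ).card ≤ 2 := Finset.card_le_two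
  have : 0 < (s \ {a, b}).card := by omega
  obtain ⟨c, hc⟩ := Finset.card_pos.1 this
  simp at hc
  exact ⟨c, hc.1, hc.2⟩

lemma pickpair {s : Finset ℕ} (h : 3 ≤ s.card) (a : ℕ) :
    ∃ α ∈ s, ∃ β ∈ s, α ≠ β ∧ α ≠ a ∧ β ≠ a := by
  obtain ⟨c, hc, hca, -⟩ := pick2 h a a
  obtain ⟨d, hd, hda, hdc⟩ := pick2 h a c
  exact ⟨c, hc, d, hd, hdc.symm, hca, hda⟩

def ZS (Good : Finset (Sym2 V) → Set V → Prop) (n : ℕ) : Prop :=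
  ∀ E B (L : V → Finset ℕ) p1 p2 c1 c2, E.card < n → Good E B → s(p1, p2) ∈ E → p1 ∈ B → p2 ∈ B →
    c1 ≠ c2 → OKL B L {p1, p2} →
    ∃ φ, Proper E φ ∧ φ p1 = c1 ∧ φ p2 = c2 ∧ ∀ v, v ≠ p1 → v ≠ p2 → φ v ∈ L v

def ZvS (Good : Finset (Sym2 V) → Set V → Prop) (n : ℕ) : Prop :=
  ∀ E B (L : V → Finset ℕ) p c, E.card < n → Good E B → p ∈ B → OKL B L {p} →
    ∃ φ, Proper E φ ∧ φ p = c ∧ ∀ v, v ≠ p → φ v ∈ L v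

def WS (Good : Finset (Sym2 V) → Set V → Prop) (n : ℕ) : Prop :=
  ∀ E B (L : V → Finset ℕ), E.card < n → Good E B → OKL B L ∅ →
    ∃ φ, Proper E φ ∧ ∀ v, φ v ∈ L v

/-- extend over the other side of a split. -/
lemma Split.extend (H : GoodClass Good) {n : ℕ} (hZ : ZS Good n) {E B u w K K'} (hG : Good E B)
    (hu : u ∈ B) (hw : w ∈ B) (hE : E.card < n + 1)
    (hs : Split E u w K K') {L : V → Finset ℕ} {X : Set V} (hL : OKL B L X) 
    (hX : ∀ x ∈ X, x ∉ K') {φ : V → ℕ} (hφ : Proper (side E u w K) φ) :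
    ∃ ψ : V → ℕ, Proper E ψ ∧ (∀ v, v ∉ K' → ψ v = φ v) ∧ ∀ v ∈ K', ψ v ∈ L v := by
  obtain ⟨ψ, h1, h2, h3, h4⟩ := hZ (side E u w K') B (fixL L X) u w (φ u) (φ w)
    (by have := hs.symm.card_lt; omega) (H.mono hG side_sub) hs.symm.edge_mem hu hw
    (hφ _ _ hs.edge_mem) (hL.fix X _ (fun v hv => Or.inl hv))
  refine ⟨_, hs.symm.glue h1 hφ h2 h3, ?_, ?_⟩
  · intro v hv; simp [hv]
  · intro v hv
    simp only [hv, if_true]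
    have := h4 v (fun h => hs.uK' (h ▸ hv)) (fun h => hs.wK' (h ▸ hv))
    rwa [fixL_of_not_mem (fun h => hX v h hv)] at this

lemma Z_step (H : GoodClass Good) {n : ℕ} (hZ : ZS Good n) (hZv : ZvS Good n) : ZS Good (n + 1) := by
  intro E B L p1 p2 c1 c2 hE hG hp hp1 hp2 hc hL
  by_cases hN : NoSplit E B
  swap
  · unfold NoSplit at hN
    push Not at hN
    obtain ⟨u, w, K, K', hu, hw, hs⟩ := hN
    wlog hside : s(p1, p2) ∈ side E u w K generalizing K K'
    · exact this K' K hs.symm ((hs.cases hp).resolve_left hside)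
    obtain ⟨φ, h1, h2, h3, h4⟩ := hZ (side E u w K) B L p1 p2 c1 c2
      (by have := hs.card_lt; omega) (H.mono hG side_sub) hside hp1 hp2 hc hL
    have hm := mem_side.1 hside
    have hp1K : p1 ∉ K' := by
      intro h
      rcases hm.2.1 with h' | h' | h'
      · exact hs.disj _ h' h
      · exact hs.uK' (h' ▸ h)
      · exact hs.wK' (h' ▸ h)
    have hp2K : p2 ∉ K' := by
      intro h
      rcases hm.2.2 with h' | h' | h'
      · exact hs.disj _ h' h
      · exact hs.uK' (h' ▸ h)
      · exact hs.wK' (h' ▸ h)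
    obtain ⟨ψ, g1, g2, g3⟩ := hs.extend H hZ hG hu hw hE hL
      (by rintro x (rfl | rfl) <;> assumption) h1
    refine ⟨ψ, g1, by rw [g2 _ hp1K, h2], by rw [g2 _ hp2K, h3], fun v hv1 hv2 => ?_⟩
    by_cases hv : v ∈ K'
    · exact g3 v hv
    · rw [g2 v hv]; exact h4 v hv1 hv2
  · have hdeg := deg2_of_noSplit H hG hN
    have hne := H.ne hG hp
    by_cases hx : ∃ x ∈ B, s(p1, x) ∈ E ∧ x ≠ p2
    · obtain ⟨x, hxB, hpx, hxp2⟩ := hx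
      have hxp1 : x ≠ p1 := (H.ne hG hpx).symm
      have hxp : s(x, p1) ∈ E := by rw [Sym2.eq_swap]; exact hpx
      have hlx := (hL x (by simp [hxp1, hxp2])).1
      have hdel : ∀ R : Finset ℕ, R.card ≤ 2 → ∃ φ, Proper (delE E [x]) φ ∧ φ p1 = c1 ∧ φ p2 = c2 ∧
          ∀ v, v ≠ p1 → v ≠ p2 → φ v ∈ delL E B [x] R L v := by
        intro R hR
        exact hZ (delE E [x]) (delB E B [x]) (delL E B [x] R L) p1 p2 c1 c2 
          (by have := delE_card_lt (D := [x]) hxp (by simp); omega)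
          (H.delD hG [x] (by simpa)) (mem_delE.2 ⟨hp, by simp [hxp1.symm], by simp [hxp2.symm]⟩)
          (Or.inl hp1) (Or.inl hp2) hc (OKL_del hL hR)
      have hfin : ∀ (R : Finset ℕ) φ δ, δ ∈ L x → δ ∈ R → Proper (delE E [x]) φ → φ p1 = c1 → φ p2 = c2 →
          (∀ v, v ≠ p1 → v ≠ p2 → φ v ∈ delL E B [x] R L v) →
          (∀ b ∈ B, s(x, b) ∈ E → δ ≠ φ b) → 
          ∃ φ, Proper E φ ∧ φ p1 = c1 ∧ φ p2 = c2 ∧ ∀ v, v ≠ p1 → v ≠ p2 → φ v ∈ L v := by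
        intro R φ δ hδL hδR h1 h2 h3 h4 h5
        refine ⟨_, glue_del (κ := fun _ => δ) h1 ?_ ?_, ?_, ?_, ?_⟩
        · intro a b ha hb hab
          simp at ha hb
          exact absurd (ha.trans hb.symm) (H.ne hG hab)
        · intro a b ha hb hab
          simp at ha hb
          subst ha
          by_cases hbB : b ∈ B
          · exact h5 b hbB hab
          · have h6 := h4 b (fun h => hbB (h ▸ hp1)) (fun h => hbB (h ▸ hp2))
            intro h7
            exact delL_not_mem hbB (by simp) hab h6 (h7 ▸ hδR)
        · simp [hxp1.symm, h2]
        · simp [hxp2.symm, h3]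
        · intro v hv1 hv2
          by_cases hv : v = x
          · subst hv; simpa using hδL
          · simp only [List.mem_singleton, hv, if_false]
            exact delL_sub _ (h4 v hv1 hv2)
      by_cases hxp2E : s(x, p2) ∈ E
      · obtain ⟨γ, hγ, hγ1, hγ2⟩ := pick2 hlx c1 c2
        obtain ⟨φ, h1, h2, h3, h4⟩ := hdel {γ} (by simp)
        refine hfin _ φ γ hγ (by simp) h1 h2 h3 h4 ?_
        intro b hb hxb
        rcases hdeg x hxB p1 hp1 p2 hp2 b hb hxp hxp2E hxb with h | h | h
        · exact absurd h hne
        · rw [← h, h2]; exact hγ1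
        · rw [← h, h3]; exact hγ2
      · obtain ⟨α, hα, β, hβ, hαβ, hα1, hβ1⟩ := pickpair hlx c1
        obtain ⟨φ, h1, h2, h3, h4⟩ := hdel {α, β} Finset.card_le_two
        have : ∃ δ ∈ ({α, β} : Finset ℕ), ∀ b ∈ B, s(x, b) ∈ E → b ≠ p1 → δ ≠ φ b := by
          by_contra hcon
          push Not at hcon
          obtain ⟨b, hb, hxb, hb1, hb2⟩ := hcon α (by simp)
          obtain ⟨b', hb', hxb', hb1', hb2'⟩ := hcon β (by simp)
          rcases hdeg x hxB p1 hp1 b hb b' hb' hxp hxb hxb' with h | h | h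
          · exact hb1 h.symm
          · exact hb1' h.symm
          · exact hαβ (by rw [hb2, hb2', h])
        obtain ⟨δ, hδ, hδ2⟩ := this
        have hδ3 : δ ∈ L x ∧ δ ≠ c1 := by
          simp at hδ; rcases hδ with rfl | rfl <;> exact ⟨by assumption, by assumption⟩
        refine hfin _ φ δ hδ3.1 hδ h1 h2 h3 h4 ?_
        intro b hb hxb
        by_cases hbp : b = p1
        · rw [hbp, h2]; exact hδ3.2
        · exact hδ2 b hb hxb hbp
    · push Not at hx
      obtain ⟨φ, h1, h2, h3⟩ := hZv (delE E [p1]) (delB E B [p1]) (fixL (delL E B [p1] {c1} L) {p1}) p2 c2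
        (by have := delE_card_lt (D := [p1]) hp (by simp); omega)
        (H.delD hG [p1] (by simpa)) (Or.inl hp2)
        ((OKL_del hL (by simp)).fix _ _ (by rintro v (h | h) <;> simp_all))
      refine ⟨_, glue_del (κ := fun _ => c1) h1 ?_ ?_, ?_, ?_, ?_⟩
      · intro a b ha hb hab
        simp at ha hb
        exact absurd (ha.trans hb.symm) (H.ne hG hab)
      · intro a b ha hb hab
        simp at ha hb
        subst ha
        by_cases hbB : b ∈ B
        · rw [hx b hbB hab, h2]; exact hc
        · have h6 := h3 b (fun h => hbB (h ▸ hp2))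
          rw [fixL_of_not_mem (by simpa using hb)] at h6
          intro h7
          exact delL_not_mem hbB (by simp) hab h6 (by simp [h7])
      · simp
      · simp [hne.symm, h2]
      · intro v hv1 hv2
        simp only [List.mem_singleton, hv1, if_false]
        have := h3 v hv2
        rw [fixL_of_not_mem (by simpa using hv1)] at this
        exact delL_sub _ this

/-- nonisolated vertex -/
lemma Zv_step' (H : GoodClass Good) {n : ℕ} (hZ : ZS Good (n + 1)) (hW : WS Good n) 
    (E B) (L : V → Finset ℕ) (p c) (hE : E.card < n + 1) (hG : Good E B) (hp : p ∈ B)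
    (hL : OKL B L {p}) (hni : ∃ b, s(p, b) ∈ E) : 
    ∃ φ, Proper E φ ∧ φ p = c ∧ ∀ v, v ≠ p → φ v ∈ L v := by
  by_cases hx : ∃ x ∈ B, s(p, x) ∈ E
  · obtain ⟨x, hxB, hpx⟩ := hx
    have hne := H.ne hG hpx
    obtain ⟨c', hc', hcc, -⟩ := pick2 (hL x (by simp [hne.symm])).1 c c
    obtain ⟨φ, h1, h2, h3, h4⟩ := hZ E B L p x c c' hE hG hpx hp hxB hcc.symm
      (fun v hv => hL v (fun h => hv (Or.inl h)))
    refine ⟨φ, h1, h2, fun v hv => ?_⟩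
    by_cases hvx : v = x
    · subst hvx; rw [h3]; exact hc'
    · exact h4 v hv hvx
  · push Not at hx
    obtain ⟨b0, hb0⟩ := hni
    obtain ⟨φ, h1, h3⟩ := hW (delE E [p]) (delB E B [p]) (fixL (delL E B [p] {c} L) {p})
      (by have := delE_card_lt (D := [p]) hb0 (by simp); omega)
      (H.delD hG [p] (by simpa))
      ((OKL_del hL (by simp)).fix _ _ (by intro v h; simp_all))
    refine ⟨_, glue_del (κ := fun _ => c) h1 ?_ ?_, ?_, ?_⟩
    · intro a b ha hb hab
      simp at ha hb
      exact absurd (ha.trans hb.symm) (H.ne hG hab)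
    · intro a b ha hb hab
      simp at ha hb
      subst ha
      by_cases hbB : b ∈ B
      · exact absurd hab (hx b hbB)
      · have h6 := h3 b
        rw [fixL_of_not_mem (by simpa using hb)] at h6
        intro h7
        exact delL_not_mem hbB (by simp) hab h6 (by simp [h7])
    · simp
    · intro v hv1
      simp only [List.mem_singleton, hv1, if_false]
      have := h3 v
      rw [fixL_of_not_mem (by simpa using hv1)] at this
      exact delL_sub _ this

lemma W_step (H : GoodClass Good) {n : ℕ} (hZ : ZS Good (n + 1)) (hZv : ZvS Good n)
    (hW : WS Good n) : WS Good (n + 1) := by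
  intro E B L hE hG hL
  by_cases hb : ∃ b ∈ B, ∃ a, s(b, a) ∈ E
  · obtain ⟨b, hb, a, hab⟩ := hb
    have : (L b).Nonempty := Finset.card_pos.1 (by have := (hL b (by simp)).1; omega)
    obtain ⟨c, hc⟩ := this
    obtain ⟨φ, h1, h2, h3⟩ := Zv_step' H hZ hW E B L b c hE hG hb (fun v hv => hL v (by simp)) ⟨a, hab⟩
    refine ⟨φ, h1, fun v => ?_⟩
    by_cases hv : v = b
    · subst hv; rw [h2]; exact hc
    · exact h3 v hv
  · push Not at hb
    have hpick : ∀ v, ∃ c, c ∈ L v := fun v => 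
      Finset.card_pos.1 (by have := (hL v (by simp)).1; omega)
    choose f hf using hpick
    rcases E.eq_empty_or_nonempty with rfl | ⟨e, he⟩
    · exact ⟨f, fun u v h => by simp at h, hf⟩
    · induction e with | _ u w =>
      have hne := H.ne hG he
      have he' : s(w, u) ∈ E := by rw [Sym2.eq_swap]; exact he
      set L' : V → Finset ℕ := fun v => if ∃ a, s(v, a) ∈ E then (if v = w then L v \ {f u} else L v)
        else Finset.range 5 with hL'
      have hOK : OKL {u, w} L' {u} := by
        intro v hv
        simp only [hL']
        split_ifs with h1 h2
        · have h3 : v ∉ B := fun h => by obtain ⟨a, ha⟩ := h1; exact hb v h a ha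
          have := (hL v (by simp)).2 h3
          have := Finset.le_card_sdiff {f u} (L v)
          simp at this
          exact ⟨by omega, fun h => absurd (by simp [h2]) h⟩
        · have h3 : v ∉ B := fun h => by obtain ⟨a, ha⟩ := h1; exact hb v h a ha
          have := (hL v (by simp)).2 h3
          exact ⟨by omega, fun h => this⟩
        · simp
      obtain ⟨φ, h1, h2, h3⟩ := hZv (E.erase s(u, w)) {u, w} L' u (f u)
        (by have := Finset.card_erase_lt_of_mem he; omega) (H.edge hG he) (by simp) hOK
      refine ⟨fun v => if ∃ a, s(v, a) ∈ E then φ v else f v, ?_, ?_⟩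
      · intro a b hab
        have hba : s(b, a) ∈ E := by rw [Sym2.eq_swap]; exact hab
        simp only [if_pos (⟨b, hab⟩ : ∃ x, s(a, x) ∈ E), if_pos (⟨a, hba⟩ : ∃ x, s(b, x) ∈ E)]
        have hw : φ w ≠ f u := by
          have := h3 w hne.symm
          simp only [hL', if_pos (⟨u, he'⟩ : ∃ x, s(w, x) ∈ E), if_true] at this
          simp at this
          exact this.2
        by_cases hab' : s(a, b) = s(u, w)
        · rw [Sym2.eq_iff] at hab'
          rcases hab' with ⟨rfl, rfl⟩ | ⟨rfl, rfl⟩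
          · rw [h2]; exact hw.symm
          · rw [h2]; exact hw
        · exact h1 a b (Finset.mem_erase.2 ⟨hab', hab⟩)
      · intro v
        simp only
        split_ifs with hv
        · by_cases hvu : v = u
          · subst hvu; rw [h2]; exact hf v
          · have := h3 v hvu
            simp only [hL', if_pos hv] at this
            split_ifs at this
            · exact (Finset.mem_sdiff.1 this).1
            · exact this
        · exact hf v

lemma Zv_step (H : GoodClass Good) {n : ℕ} (hZ : ZS Good (n + 1)) 
    (hW : WS Good n) (hW' : WS Good (n + 1)) : ZvS Good (n + 1) := by
  intro E B L p c hE hG hp hL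
  by_cases hni : ∃ b, s(p, b) ∈ E
  · exact Zv_step' H hZ hW E B L p c hE hG hp hL hni
  · push Not at hni
    obtain ⟨φ, h1, h2⟩ := hW' E B (fixL L {p}) hE hG (hL.fix _ _ (by intro v h; simp_all))
    refine ⟨fun v => if v = p then c else φ v, ?_, by simp, ?_⟩
    · intro a b hab
      have ha : a ≠ p := by rintro rfl; exact hni _ hab
      have hb : b ≠ p := by rintro rfl; rw [Sym2.eq_swap] at hab; exact hni _ hab
      simp only [ha, hb, if_false]
      exact h1 a b hab
    · intro v hv
      have := h2 v
      rw [fixL_of_not_mem (by simpa using hv)] at this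
      simpa [hv] using this

lemma ZZW (H : GoodClass Good) (n : ℕ) : ZS Good n ∧ ZvS Good n ∧ WS Good n := by
  induction n with
  | zero => 
    exact ⟨fun _ _ _ _ _ _ _ h => absurd h (by simp), fun _ _ _ _ _ h => absurd h (by simp),
      fun _ _ _ h => absurd h (by simp)⟩
  | succ n ih =>
    have h1 := Z_step H ih.1 ih.2.1
    have h2 := W_step H h1 ih.2.1 ih.2.2
    exact ⟨h1, Zv_step H h1 ih.2.2 h2, h2⟩

lemma thomassen (H : GoodClass Good) {E B} {L : V → Finset ℕ} {p1 p2 c1 c2} (hG : Good E B)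
    (hp : s(p1, p2) ∈ E) (hp1 : p1 ∈ B) (hp2 : p2 ∈ B) (hc : c1 ≠ c2) (hL : OKL B L {p1, p2}) :
    ∃ φ, Proper E φ ∧ φ p1 = c1 ∧ φ p2 = c2 ∧ ∀ v, v ≠ p1 → v ≠ p2 → φ v ∈ L v :=
  (ZZW H (E.card + 1)).1 E B L p1 p2 c1 c2 (by omega) hG hp hp1 hp2 hc hL

lemma thomassen_v (H : GoodClass Good) {E B} {L : V → Finset ℕ} {p} (c) (hG : Good E B)
    (hp : p ∈ B) (hL : OKL B L {p}) :
    ∃ φ, Proper E φ ∧ φ p = c ∧ ∀ v, v ≠ p → φ v ∈ L v :=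
  (ZZW H (E.card + 1)).2.1 E B L p c (by omega) hG hp hL

end Comb

section Comb
open Classical
variable {V : Type u}
variable {Good : Finset (Sym2 V) → Set V → Prop}

/-- adjacency between boundary vertices -/
def BA (E : Finset (Sym2 V)) (B : Set V) (a b : V) : Prop := s(a, b) ∈ E ∧ a ∈ B ∧ b ∈ B

lemma BA.symm {E : Finset (Sym2 V)} {B : Set V} {a b : V} (h : BA E B a b) : BA E B b a :=
  ⟨by rw [Sym2.eq_swap]; exact h.1, h.2.2, h.2.1⟩

lemma BA.ne (H : GoodClass Good) {E B} (hG : Good E B) {a b : V} (h : BA E B a b) : a ≠ b :=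
  H.ne hG h.1

lemma Deg2.ba {E : Finset (Sym2 V)} {B : Set V} (h : Deg2 E B) {x a b c : V} (ha : BA E B x a)
    (hb : BA E B x b) (hc : BA E B x c) : a = b ∨ a = c ∨ b = c :=
  h x ha.2.1 a ha.2.2 b hb.2.2 c hc.2.2 ha.1 hb.1 hc.1

/-- Walks along the boundary (reversed), starting at `d`, with forbidden back vertex `y`
and avoiding `Q`. -/
inductive BWalk (E : Finset (Sym2 V)) (B Q : Set V) (d y : V) : V → List V → Prop
  | base : BWalk E B Q d y d []
  | ext {h t x} : BWalk E B Q d y h t → BA E B h x → x ∉ h :: t → x ≠ y → x ∉ Q →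
      BWalk E B Q d y x (h :: t)

structure WCtx (E : Finset (Sym2 V)) (B Q : Set V) (d y : V) : Prop where
  irr : ∀ a b, BA E B a b → a ≠ b
  deg : Deg2 E B
  dB : d ∈ B
  dQ : d ∉ Q
  dy : d ≠ y
  hd : BA E B d y ∨ ∀ w, ¬ BA E B d w

variable {E : Finset (Sym2 V)} {B Q : Set V} {d y h x : V} {t : List V}

namespace BWalk

lemma mem_d (hw : BWalk E B Q d y h t) : d ∈ h :: t := by
  induction hw with
  | base => simp
  | ext _ _ _ _ _ ih => exact List.mem_cons_of_mem _ ih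

lemma nodup (hw : BWalk E B Q d y h t) : (h :: t).Nodup := by
  induction hw with
  | base => simp
  | ext _ _ h3 _ _ ih => exact List.nodup_cons.2 ⟨h3, ih⟩

lemma memB (c : WCtx E B Q d y) (hw : BWalk E B Q d y h t) : ∀ z ∈ h :: t, z ∈ B := by
  induction hw with
  | base => intro z hz; simp at hz; rw [hz]; exact c.dB
  | ext _ h2 h3 _ _ ih =>
    intro z hz
    rcases List.mem_cons.1 hz with rfl | hz
    · exact h2.2.2
    · exact ih z hz

lemma notQ (c : WCtx E B Q d y) (hw : BWalk E B Q d y h t) : ∀ z ∈ h :: t, z ∉ Q := by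
  induction hw with
  | base => intro z hz; simp at hz; rw [hz]; exact c.dQ
  | ext _ h2 h3 _ h5 ih =>
    intro z hz
    rcases List.mem_cons.1 hz with rfl | hz
    · exact h5
    · exact ih z hz

lemma noty (c : WCtx E B Q d y) (hw : BWalk E B Q d y h t) : y ∉ h :: t := by
  induction hw with
  | base => simp [c.dy.symm]
  | ext _ h2 h3 h4 h5 ih => simp only [List.mem_cons] at *; tauto

lemma chain (hw : BWalk E B Q d y h t) : List.IsChain (BA E B) (h :: t) := by
  induction hw with
  | base => simp
  | ext _ h2 h3 h4 h5 ih => exact List.isChain_cons_cons.2 ⟨h2.symm, ih⟩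

lemma last (hw : BWalk E B Q d y h t) : (h :: t).getLast (by simp) = d := by
  induction hw with
  | base => simp
  | ext _ h2 h3 h4 h5 ih => rw [List.getLast_cons (by simp)]; exact ih

/-- if head is not `d` then the head has a neighbour in the tail -/
lemma head_nbr (hw : BWalk E B Q d y h t) : (h = d ∧ t = []) ∨ (h ≠ d ∧ ∃ p ∈ t, BA E B h p) := by
  cases hw with
  | base => exact Or.inl ⟨rfl, rfl⟩
  | @ext h t x h1 h2 h3 h4 h5 =>
    refine Or.inr ⟨?_, h, by simp, h2.symm⟩
    intro h'
    exact h3 (h' ▸ h1.mem_d)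

/-- exits from the head -/
lemma exit_aux (c : WCtx E B Q d y) (hw : BWalk E B Q d y h t) (hx : BA E B h x) (hxt : x ∉ h :: t)
    (hxy : x ≠ y) : ∀ w, BA E B h w → w ∈ h :: t ∨ (h = d ∧ w = y) ∨ w = x := by
  intro w hwA
  rcases hw.head_nbr with ⟨rfl, rfl⟩ | ⟨hne, p, hp, hhp⟩
  · have hy : BA E B h y := c.hd.resolve_right (fun h => h _ hx)
    rcases c.deg.ba hx hy hwA with h | h | h
    · exact absurd h hxy
    · exact Or.inr (Or.inr h.symm)
    · exact Or.inr (Or.inl ⟨rfl, h.symm⟩)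
  · rcases c.deg.ba hx hhp hwA with h | h | h
    · exact absurd (List.mem_cons_of_mem _ (h ▸ hp)) hxt
    · exact Or.inr (Or.inr h.symm)
    · exact Or.inl (List.mem_cons_of_mem _ (h ▸ hp))

lemma tail_nbr (c : WCtx E B Q d y) (hw : BWalk E B Q d y h t) :
    ∀ z ∈ t, ∀ w, BA E B z w → w ∈ h :: t ∨ (z = d ∧ w = y) := by
  induction hw with
  | base => simp
  | @ext h t x h1 h2 h3 h4 h5 ih =>
    intro z hz w hzw
    rcases List.mem_cons.1 hz with rfl | hz
    · rcases exit_aux c h1 h2 h3 h4 w hzw with h | h | h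
      · exact Or.inl (List.mem_cons_of_mem _ h)
      · exact Or.inr h
      · exact Or.inl (by simp [h])
    · rcases ih z hz w hzw with h | h
      · exact Or.inl (List.mem_cons_of_mem _ h)
      · exact Or.inr h

lemma coloring (c : WCtx E B Q d y) (hw : BWalk E B Q d y h t) {α β : ℕ} (hαβ : α ≠ β) {δ : ℕ}
    (hδ : δ = α ∨ δ = β) : ∃ κ : V → ℕ, κ d = δ ∧ (∀ z ∈ h :: t, κ z = α ∨ κ z = β) ∧
      ∀ a b, a ∈ h :: t → b ∈ h :: t → s(a, b) ∈ E → κ a ≠ κ b := by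
  induction hw with
  | base =>
    refine ⟨fun _ => δ, rfl, fun _ _ => hδ, ?_⟩
    intro a b ha hb hab
    simp at ha hb
    rw [ha, hb] at hab
    exact absurd rfl (c.irr _ _ ⟨hab, c.dB, c.dB⟩)
  | @ext h t x h1 h2 h3 h4 h5 ih =>
    obtain ⟨κ, k1, k2, k3⟩ := ih
    obtain ⟨ε, hε, hε'⟩ : ∃ ε, (ε = α ∨ ε = β) ∧ ε ≠ κ h := by
      by_cases hh : κ h = α
      · exact ⟨β, Or.inr rfl, by rw [hh]; exact hαβ.symm⟩
      · exact ⟨α, Or.inl rfl, Ne.symm hh⟩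
    have hxd : d ≠ x := fun h => h3 (h ▸ h1.mem_d)
    have hmem := memB c h1
    have key : ∀ b ∈ h :: t, s(x, b) ∈ E → b = h := by
      intro b hb hxb
      rcases List.mem_cons.1 hb with h | h
      · exact h
      · have := tail_nbr c h1 b h x ⟨by rw [Sym2.eq_swap]; exact hxb, hmem b hb, h2.2.2⟩
        rcases this with h' | h'
        · exact absurd h' h3
        · exact absurd h'.2 h4
    refine ⟨fun v => if v = x then ε else κ v, by simp [hxd, k1], ?_, ?_⟩
    · intro z hz
      by_cases hzx : z = x
      · simp [hzx, hε]
      · simp only [hzx, if_false]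
        exact k2 z ((List.mem_cons.1 hz).resolve_left hzx)
    · intro a b ha hb hab
      by_cases hax : a = x <;> by_cases hbx : b = x
      · subst hax; subst hbx
        exact absurd rfl (c.irr _ _ ⟨hab, h2.2.2, h2.2.2⟩)
      · simp only [hax, hbx, if_true, if_false]
        rw [hax] at hab
        rw [key b ((List.mem_cons.1 hb).resolve_left hbx) hab]
        exact hε'
      · simp only [hax, hbx, if_true, if_false]
        rw [hbx, Sym2.eq_swap] at hab
        rw [key a ((List.mem_cons.1 ha).resolve_left hax) hab]
        exact hε'.symm
      · simp only [hax, hbx, if_false]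
        exact k3 a b ((List.mem_cons.1 ha).resolve_left hax) ((List.mem_cons.1 hb).resolve_left hbx) hab

end BWalk

def WDead (E : Finset (Sym2 V)) (B : Set V) (d y h : V) (t : List V) : Prop :=
  ∀ z ∈ h :: t, ∀ w, BA E B z w → w ∈ h :: t ∨ (z = d ∧ w = y)

structure WExit (E : Finset (Sym2 V)) (B : Set V) (d y h : V) (t : List V) (x : V) : Prop where
  adj : BA E B h x
  nx : x ∉ h :: t
  xy : x ≠ y
  out : ∀ z ∈ h :: t, ∀ w, BA E B z w → w ∈ h :: t ∨ (z = d ∧ w = y) ∨ (z = h ∧ w = x)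

lemma BWalk.exit (c : WCtx E B Q d y) (hw : BWalk E B Q d y h t) (hx : BA E B h x) (hxt : x ∉ h :: t)
    (hxy : x ≠ y) : WExit E B d y h t x := by
  refine ⟨hx, hxt, hxy, fun z hz w hzw => ?_⟩
  rcases List.mem_cons.1 hz with rfl | hz
  · rcases hw.exit_aux c hx hxt hxy w hzw with h | h | h
    · exact Or.inl h
    · exact Or.inr (Or.inl h)
    · exact Or.inr (Or.inr ⟨rfl, h⟩)
  · rcases hw.tail_nbr c z hz w hzw with h | h
    · exact Or.inl h
    · exact Or.inr (Or.inl h)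

/-- maximal walks -/
lemma walk_run (c : WCtx E B Q d y) (hB : B.Finite) : ∃ h t, BWalk E B Q d y h t ∧
    ((h ≠ d ∧ BA E B h y) ∨ WDead E B d y h t ∨ ∃ x ∈ Q, WExit E B d y h t x) := by
  by_contra hcon
  push Not at hcon
  have key : ∀ n : ℕ, ∃ h t, BWalk E B Q d y h t ∧ t.length = n := by
    intro n
    induction n with
    | zero => exact ⟨d, [], .base, rfl⟩
    | succ n ih =>
      obtain ⟨h, t, hw, hn⟩ := ih
      obtain ⟨h1, h2, h3⟩ := hcon h t hw
      unfold WDead at h2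
      push Not at h2
      obtain ⟨z, hz, w, hzw, hwn, hzd⟩ := h2
      have hzh : z = h := by
        by_contra hne
        have := hw.tail_nbr c z ((List.mem_cons.1 hz).resolve_left hne) w hzw
        rcases this with h' | h'
        · exact hwn h'
        · exact hzd h'.1 h'.2
      subst hzh
      have hwy : w ≠ y := by
        rintro rfl
        by_cases hd : z = d
        · exact hzd hd rfl
        · exact h1 hd hzw
      have hwQ : w ∉ Q := fun hq => h3 w hq (hw.exit c hzw hwn hwy)
      exact ⟨w, z :: t, .ext hw hzw hwn hwy hwQ, by simp [hn]⟩
  obtain ⟨h, t, hw, hn⟩ := key hB.toFinset.card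
  have h1 := hw.nodup
  have h2 : (h :: t).toFinset ⊆ hB.toFinset := by
    intro z hz
    simp only [List.mem_toFinset] at hz
    simpa using hw.memB c z hz
  have h3 := Finset.card_le_card h2
  rw [List.toFinset_card_of_nodup h1] at h3
  simp at h3
  omega

lemma walk_halt (c : WCtx E B Q d y) (hw : BWalk E B Q d y h t) (P : V → Prop) (hP : P d) :
    (∀ z ∈ h :: t, P z) ∨ ∃ h' t' x, BWalk E B Q d y h' t' ∧ (∀ z ∈ h' :: t', P z) ∧ 
      WExit E B d y h' t' x ∧ x ∉ Q ∧ ¬ P x := by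
  induction hw with
  | base => left; intro z hz; simp at hz; rw [hz]; exact hP
  | @ext h t x h1 h2 h3 h4 h5 ih =>
    rcases ih with ih | ih
    · by_cases hPx : P x
      · left
        intro z hz
        rcases List.mem_cons.1 hz with rfl | hz
        · exact hPx
        · exact ih z hz
      · exact Or.inr ⟨h, t, x, h1, ih, h1.exit c h2 h3 h4, h5, hPx⟩
    · exact Or.inr ih

lemma walk_succ (c : WCtx E B Q d y) (hw : BWalk E B Q d y h t) (hx : WExit E B d y h t x) :
    ∃ w ∈ x :: h :: t, w ≠ y ∧ BA E B d w := by
  have hny := hw.noty c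
  cases hw with
  | base => exact ⟨x, by simp, hx.xy, hx.adj⟩
  | @ext h' t' _ h1 h2 h3 h4 h5 =>
    clear hx
    suffices ∃ w ∈ h :: h' :: t', w ≠ y ∧ BA E B d w by
      obtain ⟨w, hw, h⟩ := this
      exact ⟨w, List.mem_cons_of_mem _ hw, h⟩
    clear hny
    induction h1 generalizing h with
    | base => exact ⟨h, by simp, h4, h2⟩
    | @ext a b e g1 g2 g3 g4 g5 ih =>
      obtain ⟨w, hw, h'⟩ := ih g2 g3 g4 g5
      exact ⟨w, List.mem_cons_of_mem _ hw, h'⟩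

/-- determinism of chains -/
lemma chain_prefix (hdeg : Deg2 E B) : ∀ (l l' : List V) (a b : V), (a :: b :: l).Nodup →
    (a :: b :: l').Nodup → List.IsChain (BA E B) (a :: b :: l) → List.IsChain (BA E B) (a :: b :: l') →
    l <+: l' ∨ l' <+: l := by
  intro l
  induction l with
  | nil => intro l' a b _ _ _ _; left; simp
  | cons e l ih =>
    intro l' a b n1 n2 c1 c2
    cases l' with
    | nil => right; simp
    | cons e' l' =>
      have hab : BA E B b a := (List.isChain_cons_cons.1 c1).1.symm
      have h1 := (List.isChain_cons_cons.1 c1).2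
      have h2 := (List.isChain_cons_cons.1 c2).2
      have hbe := (List.isChain_cons_cons.1 h1).1
      have hbe' := (List.isChain_cons_cons.1 h2).1
      have hee : e = e' := by
        rcases hdeg.ba hab hbe hbe' with h | h | h
        · subst h; simp at n1
        · subst h; simp at n2
        · exact h
      subst hee
      rcases ih l' b e (List.nodup_cons.1 n1).2 (List.nodup_cons.1 n2).2 h1 h2 with h | h
      · left; exact List.cons_prefix_cons.2 ⟨rfl, h⟩
      · right; exact List.cons_prefix_cons.2 ⟨rfl, h⟩

lemma same_exit (hdeg : Deg2 E B) {q q' d1 y1 h1 d2 y2 h2 : V} {t1 t2 : List V} (hq : BA E B q q') (hqQ : q' ∈ Q)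
    (c1 : WCtx E B Q d1 y1) (c2 : WCtx E B Q d2 y2)
    (w1 : BWalk E B Q d1 y1 h1 t1) (w2 : BWalk E B Q d2 y2 h2 t2) (e1 : WExit E B d1 y1 h1 t1 q)
    (e2 : WExit E B d2 y2 h2 t2 q) : (h1 :: t1) <+: (h2 :: t2) ∨ (h2 :: t2) <+: (h1 :: t1) := by
  have hh : h1 = h2 := by
    rcases hdeg.ba hq e1.adj.symm e2.adj.symm with h | h | h
    · exact absurd (h ▸ hqQ) (w1.notQ c1 h1 (by simp))
    · exact absurd (h ▸ hqQ) (w2.notQ c2 h2 (by simp))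
    · exact h
  subst hh
  have := chain_prefix hdeg t1 t2 q h1 (List.nodup_cons.2 ⟨e1.nx, w1.nodup⟩)
    (List.nodup_cons.2 ⟨e2.nx, w2.nodup⟩) (List.isChain_cons_cons.2 ⟨e1.adj.symm, w1.chain⟩)
    (List.isChain_cons_cons.2 ⟨e2.adj.symm, w2.chain⟩)
  simpa [List.cons_prefix_cons] using this

lemma pair_exit_ne (hdeg : Deg2 E B) {q q' p1 p2 h1 h2 : V} {t1 t2 : List V} (hq : BA E B q q') (hqQ : q' ∈ Q)
    (c1 : WCtx E B Q p1 p2) (c2 : WCtx E B Q p2 p1)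
    (w1 : BWalk E B Q p1 p2 h1 t1) (w2 : BWalk E B Q p2 p1 h2 t2) (e1 : WExit E B p1 p2 h1 t1 q)
    (e2 : WExit E B p2 p1 h2 t2 q) : False := by
  rcases same_exit hdeg hq hqQ c1 c2 w1 w2 e1 e2 with h | h
  · exact w2.noty c2 (h.subset w1.mem_d)
  · exact w1.noty c1 (h.subset w2.mem_d)

lemma prefix_eq {l l' : List V} {v : V} (h : l <+: l') (hv : v ∈ l) (hl : l'.Nodup) 
    (hne : l' ≠ []) (hlast : l'.getLast hne = v) : l = l' := by
  obtain ⟨r, rfl⟩ := h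
  rcases r.eq_nil_or_concat with rfl | ⟨r', b, rfl⟩
  · simp
  · exfalso
    have : b = v := by simpa using hlast
    subst this
    rw [List.nodup_append] at hl
    exact hl.2.2 b hv b (by simp) rfl

lemma row_exit_ne (hdeg : Deg2 E B) {q q' v y1 y2 h1 h2 : V} {t1 t2 : List V} (hq : BA E B q q') (hqQ : q' ∈ Q)
    (c1 : WCtx E B Q v y1) (c2 : WCtx E B Q v y2) (hy : y1 ≠ y2) (a1 : BA E B v y1) (a2 : BA E B v y2)
    (w1 : BWalk E B Q v y1 h1 t1) (w2 : BWalk E B Q v y2 h2 t2) (e1 : WExit E B v y1 h1 t1 q)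
    (e2 : WExit E B v y2 h2 t2 q) : False := by
  have heq : h1 :: t1 = h2 :: t2 := by
    rcases same_exit hdeg hq hqQ c1 c2 w1 w2 e1 e2 with h | h
    · exact prefix_eq h w1.mem_d w2.nodup (by simp) w2.last
    · exact (prefix_eq h w2.mem_d w1.nodup (by simp) w1.last).symm
  obtain ⟨w, hw, hwy, hA⟩ := walk_succ c1 w1 e1
  have hwy2 : w ≠ y2 := by
    rintro rfl
    rw [heq] at hw
    rcases List.mem_cons.1 hw with h | h
    · exact e2.xy h.symm
    · exact w2.noty c2 h
  rcases hdeg.ba a1 a2 hA with h | h | h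
  · exact hy h
  · exact hwy h.symm
  · exact hwy2 h.symm

lemma walk_d_nbr (hw : BWalk E B Q d y h t) : h = d ∨ ∃ w, BA E B d w := by
  induction hw with
  | base => left; rfl
  | ext _ h2 _ _ _ ih =>
    right
    rcases ih with rfl | ih
    · exact ⟨_, h2⟩
    · exact ih

lemma chain_reach {l : List V} {S : Set V} (hl : List.IsChain (BA E B) l) (hS : ∀ z ∈ l, z ∈ S) :
    ∀ a ∈ l, ∀ b ∈ l, RS E S a b := by
  induction l with
  | nil => simp
  | cons x l ih =>
    have ih := ih hl.tail (fun z hz => hS z (List.mem_cons_of_mem _ hz))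
    have hx : ∀ b ∈ l, RS E S x b := by
      intro b hb
      cases l with
      | nil => simp at hb
      | cons e l =>
        have := (List.isChain_cons_cons.1 hl).1
        exact (RS.single this.1 (hS _ (by simp)) (hS _ (by simp))).trans (ih e (by simp) b hb)
    intro a ha b hb
    rcases List.mem_cons.1 ha with ha' | ha' <;> rcases List.mem_cons.1 hb with hb' | hb'
    · rw [ha', hb']; exact Relation.ReflTransGen.refl
    · rw [ha']; exact hx b hb'
    · rw [hb']; exact (hx a ha').symm
    · exact ih a ha' b hb'

/-- A boundary cycle disjoint from a boundary edge `q1 q2` yields a split. -/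
lemma cycle_contra (H : GoodClass Good) (hG : Good E B) (hN : NoSplit E B) {l : List V} 
    (hnd : l.Nodup) (hlen : 3 ≤ l.length) (hch : Cycle.Chain (BA E B) (l : Cycle V)) {q1 q2 : V}
    (hq : BA E B q1 q2) (hq1 : q1 ∉ l) : False := by
  have hdeg := deg2_of_noSplit H hG hN
  set C : Set V := {z | z ∈ l} with hC
  set K : Set V := {v | RS E Cᶜ q1 v} with hK
  have hKC : ∀ v ∈ K, v ∉ C := fun v hv => RS.mem hv hq1
  have hq1K : q1 ∈ K := Relation.ReflTransGen.refl
  -- rotations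
  have rot : ∀ w ∈ l, ∃ a m b, (∀ z, z ∈ l ↔ z ∈ w :: a :: (m ++ [b])) ∧ (w :: a :: (m ++ [b])).Nodup ∧
      List.IsChain (BA E B) (w :: a :: (m ++ [b])) ∧ BA E B w b := by
    intro w hw
    obtain ⟨i, hi, rfl⟩ := List.getElem_of_mem hw
    have hr : l.rotate i ~r l := ⟨l.length - i, by rw [List.rotate_rotate]; rw [show i + (l.length - i) = l.length by omega]; simp⟩
    have hlen' : (l.rotate i).length = l.length := by simp
    have hnd' : (l.rotate i).Nodup := by simpa using hnd
    have hmem : ∀ z, z ∈ l ↔ z ∈ l.rotate i := by simp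
    have hch' : Cycle.Chain (BA E B) (l.rotate i : Cycle V) := by
      have : (l.rotate i : Cycle V) = (l : Cycle V) := Cycle.coe_eq_coe.2 hr
      rw [this]; exact hch
    have hhead : (l.rotate i)[0]? = some l[i] := by
      rw [List.getElem?_eq_getElem (by omega), List.getElem_rotate]; congr 2; simp [Nat.mod_eq_of_lt hi]
    revert hlen' hnd' hmem hch' hhead
    generalize l.rotate i = l'
    intro hlen' hnd' hmem hch' hhead
    cases l' with
    | nil => simp at hlen'; omega
    | cons w l'' =>
      cases l'' with
      | nil => simp at hlen'; omega
      | cons a l3 =>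
        rcases l3.eq_nil_or_concat with rfl | ⟨m, b, rfl⟩
        · simp at hlen'; omega
        · simp at hhead
          rw [← hhead]
          rw [Cycle.chain_coe_cons] at hch'
          refine ⟨a, m, b, by simpa using hmem, by simpa using hnd', ?_, ?_⟩
          · have h1 := hch'
            rw [← List.cons_append, List.isChain_append] at h1
            simpa using h1.1
          · have h1 := hch'
            rw [← List.cons_append, List.isChain_append] at h1
            have := h1.2.2 b (by rw [List.concat_eq_append, ← List.cons_append, ← List.cons_append, List.getLast?_append]; simp) w (by simp)
            exact this.symm
  -- split from attachments contained in an edge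
  have main : ∀ w ∈ l, ∀ u z, BA E B w u → u ∈ l → z ∈ l → z ≠ w → z ≠ u →
      (∀ a ∈ l, ∀ k ∈ K, s(k, a) ∈ E → a = w ∨ a = u) → False := by
    intro w hw u z hwu hu hz hzw hzu hatt
    refine hN w u K {v | v ∉ K ∧ v ≠ w ∧ v ≠ u} hwu.2.1 hwu.2.2 ⟨hwu.1, ?_, ?_, ?_, ?_, ?_, ?_, ?_, ?_, ?_⟩
    · intro v; simp only [Set.mem_ofPred_eq]; tauto
    · rintro v h1 ⟨h2, -⟩; exact h2 h1
    · exact fun h => hKC _ h hw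
    · exact fun h => hKC _ h hu
    · rintro ⟨-, h, -⟩; exact h rfl
    · rintro ⟨-, -, h⟩; exact h rfl
    · rintro a b hab ha ⟨hb, hb1, hb2⟩
      by_cases hbC : b ∈ l
      · rcases hatt b hbC a ha hab with h | h
        · exact hb1 h
        · exact hb2 h
      · exact hb (RS.trans ha (RS.single hab (hKC a ha) hbC))
    · exact ⟨q1, q2, hq.1, hq1K⟩
    · obtain ⟨a, m, b, -, -, hch, -⟩ := rot z hz
      exact ⟨z, a, (List.isChain_cons_cons.1 hch).1.1, fun h => hKC _ h hz, hzw, hzu⟩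
  by_cases hA : ∃ w ∈ l, ∃ k ∈ K, s(k, w) ∈ E
  · obtain ⟨w, hw, k, hk, hkw⟩ := hA
    obtain ⟨a, m, b, hmem, hnd', hch', hwb⟩ := rot w hw
    have hwa := (List.isChain_cons_cons.1 hch').1
    have hchl := (List.isChain_cons_cons.1 hch').2
    have ha : a ∈ l := (hmem a).2 (by simp)
    have hb : b ∈ l := (hmem b).2 (by simp)
    have hab : a ≠ b := by
      rintro rfl; simp at hnd'
    have haw : a ≠ w := by
      rintro rfl; simp at hnd'
    have hbw : b ≠ w := by
      rintro rfl; simp at hnd'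
    have hKs : ∀ v ∈ K, v ∉ l := hKC
    have hreachK : ∀ k' ∈ K, RS E K k' q1 := by
      intro k' hk'
      have hk2 : RS E Cᶜ q1 k' := hk'
      unfold RS at hk2
      apply RS.symm
      clear hk'
      induction hk2 with
      | refl => exact Relation.ReflTransGen.refl
      | @tail e f h1 h2 ih =>
        refine RS.trans ih (RS.single h2.1 h1 ?_)
        exact RS.trans h1 (RS.single h2.1 h2.2.1 h2.2.2)
    have hw1 : w ∉ a :: (m ++ [b]) := (List.nodup_cons.1 hnd').1
    have hnd2 := (List.nodup_cons.1 hnd').2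
    have hb1 : b ∉ a :: m := by
      intro h
      rw [← List.cons_append, List.nodup_append] at hnd2
      exact hnd2.2.2 b h b (by simp) rfl
    have ha1 : a ∉ m ++ [b] := (List.nodup_cons.1 hnd2).1
    refine H.sep hG hwa.2.1 hwa.2.2 hwb.2.2 hq.2.1 {w, a} {w, b} (insert w K) (by simp) (by simp) (by simp)
      (by simp) (by simp) (by simp [hq1K]) (by simp [hbw, hab.symm]) ?_ (by simp [haw, hab]) ?_ ?_ ?_
      (RS.single hwa.1 (by simp) (by simp)) (RS.single hwb.1 (by simp) (by simp)) ?_ ?_ ?_ ?_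
    · rintro (h | h) <;> exact hq1 (by rw [h]; assumption)
    · rintro (h | h) <;> exact hq1 (by rw [h]; assumption)
    · rintro (h | h)
      · exact haw h
      · exact hKs _ h ha
    · rintro (h | h)
      · exact hbw h
      · exact hKs _ h hb
    · exact (RS.single (by rw [Sym2.eq_swap]; exact hkw) (by simp) (by simp [hk])).trans
        ((hreachK k hk).mono (Set.subset_insert _ _))
    · refine chain_reach hchl ?_ a (by simp) b (by simp)
      intro z hz h
      rcases h with h | h
      · exact hw1 (h ▸ hz)
      · exact hKs _ h ((hmem z).2 (List.mem_cons_of_mem _ hz))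
    · by_contra hcon
      refine main w hw b a hwb hb ha haw hab ?_
      intro c hc k' hk' hkc
      by_contra hne
      push Not at hne
      apply hcon
      have hcm : c ∈ a :: m := by
        have := (hmem c).1 hc
        simp at this ⊢
        tauto
      have hchl' : List.IsChain (BA E B) (a :: m) := by
        rw [← List.cons_append, List.isChain_append] at hchl; exact hchl.1
      have hS : ∀ z ∈ a :: m, z ∈ ({w, b} : Set V)ᶜ := by
        rintro z hz (h | h)
        · exact hw1 (by rw [← h, ← List.cons_append]; exact List.mem_append_left _ hz)
        · exact hb1 (by rw [← (h : z = b)]; exact hz)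
      refine (chain_reach hchl' hS a (by simp) c hcm).trans ((RS.single (by rw [Sym2.eq_swap]; exact hkc) (hS c hcm) ?_).trans
        ((hreachK k' hk').mono ?_))
      · rintro (h | h) <;> exact hKs _ hk' (by rw [h]; assumption)
      · rintro v hv (h | h) <;> exact hKs _ hv (by rw [h]; assumption)
    · by_contra hcon
      refine main w hw a b hwa ha hb hbw hab.symm ?_
      intro c hc k' hk' hkc
      by_contra hne
      push Not at hne
      apply hcon
      have hcm : c ∈ m ++ [b] := by
        have := (hmem c).1 hc
        simp at this ⊢
        tauto
      have hchl' : List.IsChain (BA E B) (m ++ [b]) := hchl.tail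
      have hS : ∀ z ∈ m ++ [b], z ∈ ({w, a} : Set V)ᶜ := by
        rintro z hz (h | h)
        · exact hw1 (by rw [← h]; exact List.mem_cons_of_mem _ hz)
        · exact ha1 (by rw [← (h : z = a)]; exact hz)
      refine (chain_reach hchl' hS b (by simp) c hcm).trans ((RS.single (by rw [Sym2.eq_swap]; exact hkc) (hS c hcm) ?_).trans
        ((hreachK k' hk').mono ?_))
      · rintro (h | h) <;> exact hKs _ hk' (by rw [h]; assumption)
      · rintro v hv (h | h) <;> exact hKs _ hv (by rw [h]; assumption)
  · push Not at hA
    have hl0 : ∃ w, w ∈ l := by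
      cases l with
      | nil => simp at hlen
      | cons a l => exact ⟨a, by simp⟩
    obtain ⟨w, hw⟩ := hl0
    obtain ⟨a, m, b, hmem, hnd', hch', hwb⟩ := rot w hw
    have hwa := (List.isChain_cons_cons.1 hch').1
    refine main w hw a b hwa ((hmem a).2 (by simp)) ((hmem b).2 (by simp)) ?_ ?_ ?_
    · rintro rfl; simp at hnd'
    · rintro rfl; simp at hnd'
    · intro a ha k hk hka
      exact absurd hka (hA a ha k hk)

lemma walk_cycle_contra (H : GoodClass Good) (hG : Good E B) (hN : NoSplit E B) {q1 q2 : V} 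
    (hq : BA E B q1 q2) (c : WCtx E B {q1, q2} d y) (hw : BWalk E B {q1, q2} d y h t) (hhd : h ≠ d)
    (hhy : BA E B h y) : False := by
  have hdy : BA E B d y := by
    rcases c.hd with h' | h'
    · exact h'
    · rcases walk_d_nbr hw with h'' | ⟨w, h''⟩
      · exact absurd h'' hhd
      · exact absurd h'' (h' w)
  have hnQ := hw.notQ c
  have hyQ : y ∉ ({q1, q2} : Set V) := by
    have hhQ := hnQ h (by simp)
    have hdQ := c.dQ
    simp only [Set.mem_insert_iff, Set.mem_singleton_iff, not_or] at hhQ hdQ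
    rintro (h' | h')
    · subst h'
      rcases c.deg.ba hdy.symm hhy.symm hq with h1 | h1 | h1
      · exact hhd h1.symm
      · exact hdQ.2 h1
      · exact hhQ.2 h1
    · have h' : y = q2 := h'
      subst h'
      rcases c.deg.ba hdy.symm hhy.symm hq.symm with h1 | h1 | h1
      · exact hhd h1.symm
      · exact hdQ.1 h1
      · exact hhQ.1 h1
  refine cycle_contra H hG hN (l := y :: h :: t) (List.nodup_cons.2 ⟨hw.noty c, hw.nodup⟩) ?_ ?_ hq ?_
  · rcases t with _ | ⟨a, t⟩
    · rcases hw.head_nbr with h' | ⟨-, p, hp, -⟩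
      · exact absurd h'.1 hhd
      · simp at hp
    · simp
  · rw [Cycle.chain_coe_cons]
    have h1 := hw.chain
    have h2 := hw.last
    rw [List.cons_append, List.isChain_cons_cons]
    refine ⟨hhy.symm, ?_⟩
    rw [← List.cons_append, List.isChain_append]
    refine ⟨h1, by simp, ?_⟩
    intro a ha b hb
    simp at hb
    subst hb
    rw [List.getLast?_eq_getLast_of_ne_nil (by simp), h2] at ha
    simp at ha
    subst ha
    exact hdy
  · intro h'
    rcases List.mem_cons.1 h' with h' | h'
    · exact hyQ (by simp [h'])
    · exact hnQ q1 h' (by simp)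

end Comb

section Comb
open Classical
variable {V : Type u}
variable {Good : Finset (Sym2 V) → Set V → Prop}

structure Big (T : Set (ℕ × ℕ)) : Prop where
  ne : ∀ t ∈ T, t.1 ≠ t.2
  fst : ∀ a, ∃ t ∈ T, t.1 ≠ a
  snd : ∀ a, ∃ t ∈ T, t.2 ≠ a
  two : ∀ t1 t2, ∃ t ∈ T, t ≠ t1 ∧ t ≠ t2

inductive Start (V : Type u) : Type u
  | row : V → ℕ → Start V
  | pair : V → V → ℕ × ℕ → ℕ × ℕ → Start V

def Start.Ok (E : Finset (Sym2 V)) (B : Set V) : Start V → Prop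
  | .row v _ => v ∈ B
  | .pair p1 p2 t1 t2 => BA E B p1 p2 ∧ t1.1 ≠ t2.1 ∧ t1.2 ≠ t2.2

def Start.Sat (φ : V → ℕ) : Start V → Prop
  | .row v c => φ v ≠ c
  | .pair p1 p2 t1 t2 => (φ p1, φ p2) ≠ t1 ∧ (φ p1, φ p2) ≠ t2

def MS (Good : Finset (Sym2 V) → Set V → Prop) (n : ℕ) : Prop :=
  ∀ E B (L : V → Finset ℕ) q1 q2 T (st : Start V), E.card < n → Good E B → BA E B q1 q2 →
    OKL B L {q1, q2} → Big T → st.Ok E B →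
    ∃ φ, Proper E φ ∧ (∀ v, v ≠ q1 → v ≠ q2 → φ v ∈ L v) ∧ (φ q1, φ q2) ∈ T ∧ st.Sat φ

variable {E : Finset (Sym2 V)} {B : Set V} {d y h x q1 q2 : V} {t : List V} {L : V → Finset ℕ}
  {α β : ℕ} {T : Set (ℕ × ℕ)}

lemma del_walk (hq : BA E B q1 q2) 
    (c : WCtx E B {q1, q2} d y) (hw : BWalk E B {q1, q2} d y h t) (X : V → Prop)
    (out : ∀ z ∈ h :: t, ∀ w, BA E B z w → w ∈ h :: t ∨ (z = d ∧ w = y) ∨ (z = h ∧ X w))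
    {φ κ : V → ℕ} (hφ : Proper (delE E (h :: t)) φ)
    (hφL : ∀ v, v ≠ q1 → v ≠ q2 → φ v ∈ delL E B (h :: t) {α, β} L v)
    (hκ : ∀ z ∈ h :: t, κ z = α ∨ κ z = β)
    (hκp : ∀ a b, a ∈ h :: t → b ∈ h :: t → s(a, b) ∈ E → κ a ≠ κ b)
    (hy : φ y ≠ κ d) (hX : ∀ w, X w → κ h ≠ φ w) (hLz : ∀ z ∈ h :: t, α ∈ L z ∧ β ∈ L z) :
    ∃ ψ : V → ℕ, Proper E ψ ∧ (∀ v, v ∉ h :: t → ψ v = φ v) ∧ (ψ d = κ d) ∧ 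
      ∀ v, v ≠ q1 → v ≠ q2 → ψ v ∈ L v := by
  have hB := hw.memB c
  refine ⟨_, glue_del hφ hκp ?_, ?_, ?_, ?_⟩
  · intro a b ha hb hab
    by_cases hbB : b ∈ B
    · rcases out a ha b ⟨hab, hB a ha, hbB⟩ with h | ⟨rfl, rfl⟩ | ⟨rfl, h⟩
      · exact absurd h hb
      · exact hy.symm
      · exact hX _ h
    · have h1 := hφL b (fun h => hbB (h ▸ hq.2.1)) (fun h => hbB (h ▸ hq.2.2))
      have h2 := delL_not_mem hbB ha hab h1
      intro h3
      rw [← h3] at h2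
      rcases hκ a ha with h | h <;> simp [h] at h2
  · intro v hv; simp only [hv, if_false]
  · simp only [hw.mem_d, if_true]
  · intro v hv1 hv2
    by_cases hv : v ∈ h :: t
    · simp only [hv, if_true]
      rcases hκ v hv with h | h <;> rw [h]
      · exact (hLz v hv).1
      · exact (hLz v hv).2
    · simp only [hv, if_false]
      exact delL_sub _ (hφL v hv1 hv2)

lemma mem_ne (c : WCtx E B {q1, q2} d y) (hw : BWalk E B {q1, q2} d y h t) :
    q1 ∉ h :: t ∧ q2 ∉ h :: t :=
  ⟨fun h => hw.notQ c _ h (by simp), fun h => hw.notQ c _ h (by simp)⟩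

lemma use_Z (H : GoodClass Good) (hG : Good E B) (hq : BA E B q1 q2) (hL : OKL B L {q1, q2})
    (c : WCtx E B {q1, q2} d y) (hw : BWalk E B {q1, q2} d y h t) (X : V → Prop)
    (out : ∀ z ∈ h :: t, ∀ w, BA E B z w → w ∈ h :: t ∨ (z = d ∧ w = y) ∨ (z = h ∧ X w))
    (hLz : ∀ z ∈ h :: t, α ∈ L z ∧ β ∈ L z) (hαβ : α ≠ β) (δ : ℕ → ℕ) 
    (hδ : ∀ b, δ b = α ∨ δ b = β) (hδb : ∀ b, δ b ≠ b) (τ : ℕ × ℕ) (hτ : τ.1 ≠ τ.2)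
    (hX : ∀ w, X w → (w = q1 ∧ τ.1 ≠ α ∧ τ.1 ≠ β) ∨ (w = q2 ∧ τ.2 ≠ α ∧ τ.2 ≠ β)) :
    ∃ φ, Proper E φ ∧ (∀ v, v ≠ q1 → v ≠ q2 → φ v ∈ L v) ∧ (φ q1, φ q2) = τ ∧ φ d = δ (φ y) := by
  have hQ := mem_ne c hw
  obtain ⟨φ, h1, h2, h3, h4⟩ := thomassen H (H.delD hG (h :: t) (hw.memB c)) (p1 := q1) (p2 := q2)
    (mem_delE.2 ⟨hq.1, hQ.1, hQ.2⟩) (Or.inl hq.2.1) (Or.inl hq.2.2) hτ (OKL_del hL (R := {α, β}) Finset.card_le_two)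
  obtain ⟨κ, k1, k2, k3⟩ := hw.coloring c hαβ (hδ (φ y))
  have hXX : ∀ w, X w → κ h ≠ φ w := by
    intro w hw'
    rcases hX w hw' with ⟨rfl, ha, hb⟩ | ⟨rfl, ha, hb⟩
    · rw [h2]; rcases k2 h (by simp) with h' | h' <;> rw [h']
      · exact ha.symm
      · exact hb.symm
    · rw [h3]; rcases k2 h (by simp) with h' | h' <;> rw [h']
      · exact ha.symm
      · exact hb.symm
  obtain ⟨ψ, g1, g2, g3, g4⟩ := del_walk hq c hw X out h1 h4 k2 k3 (by rw [k1]; exact (hδb _).symm) hXX hLz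
  refine ⟨ψ, g1, g4, ?_, ?_⟩
  · rw [g2 _ hQ.1, g2 _ hQ.2, h2, h3]
  · rw [g3, k1, g2 _ (hw.noty c)]

lemma use_halt (H : GoodClass Good) {n : ℕ} (hM : MS Good n) (hE : E.card < n + 1) 
    (hG : Good E B) (hq : BA E B q1 q2) (hL : OKL B L {q1, q2}) (hT : Big T)
    (c : WCtx E B {q1, q2} d y) (hw : BWalk E B {q1, q2} d y h t) (he : WExit E B d y h t x)
    (hxQ : x ∉ ({q1, q2} : Set V)) (hx : ¬ (α ∈ L x ∧ β ∈ L x))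
    (hLz : ∀ z ∈ h :: t, α ∈ L z ∧ β ∈ L z) (hαβ : α ≠ β) (δ : ℕ → ℕ) 
    (hδ : ∀ b, δ b = α ∨ δ b = β) (hδb : ∀ b, δ b ≠ b) :
    ∃ φ, Proper E φ ∧ (∀ v, v ≠ q1 → v ≠ q2 → φ v ∈ L v) ∧ (φ q1, φ q2) ∈ T ∧ φ d = δ (φ y) := by
  have hQ := mem_ne c hw
  obtain ⟨f, hf⟩ := Infinite.exists_notMem_finset (L x)
  have hcard : 3 ≤ (insert f (L x \ {α, β})).card := by
    rw [Finset.card_insert_of_notMem (fun h => hf (Finset.mem_sdiff.1 h).1)]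
    have h3 := (hL x hxQ).1
    have : 2 ≤ (L x \ {α, β}).card := by
      by_cases ha : α ∈ L x
      · have hb : β ∉ L x := fun h => hx ⟨ha, h⟩
        have : L x \ {α, β} = L x \ {α} := by
          ext c; simp only [Finset.mem_sdiff, Finset.mem_insert, Finset.mem_singleton]
          constructor
          · tauto
          · rintro ⟨h1, h2⟩; exact ⟨h1, by rintro (h | h); exacts [h2 h, hb (h ▸ h1)]⟩
        rw [this]
        have := Finset.le_card_sdiff {α} (L x)
        simp at this; omega
      · have : L x \ {α, β} = L x \ {β} := by
          ext c; simp only [Finset.mem_sdiff, Finset.mem_insert, Finset.mem_singleton]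
          constructor
          · tauto
          · rintro ⟨h1, h2⟩; exact ⟨h1, by rintro (h | h); exacts [ha (h ▸ h1), h2 h]⟩
        rw [this]
        have := Finset.le_card_sdiff {β} (L x)
        simp at this; omega
    omega
  obtain ⟨φ, h1, h2, h3, h4⟩ := hM (delE E (h :: t)) (delB E B (h :: t))
    (Function.update (delL E B (h :: t) {α, β} L) x (insert f (L x \ {α, β}))) q1 q2 T (.row x f)
    (by have := delE_card_lt (D := h :: t) he.adj.1 (by simp); omega) (H.delD hG _ (hw.memB c))
    ⟨mem_delE.2 ⟨hq.1, hQ.1, hQ.2⟩, Or.inl hq.2.1, Or.inl hq.2.2⟩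
    (by
      intro v hv
      by_cases hvx : v = x
      · subst hvx
        rw [Function.update_self]
        exact ⟨hcard, fun h => absurd (Or.inl he.adj.2.2) h⟩
      · rw [Function.update_of_ne hvx]
        exact OKL_del hL Finset.card_le_two v hv) hT (Or.inl he.adj.2.2)
  have hxQ' : x ≠ q1 ∧ x ≠ q2 := by simpa using hxQ
  have hφx : φ x ∈ L x \ {α, β} := by
    have := h2 x hxQ'.1 hxQ'.2
    rw [Function.update_self] at this
    exact (Finset.mem_insert.1 this).resolve_left h4
  obtain ⟨κ, k1, k2, k3⟩ := hw.coloring c hαβ (hδ (φ y))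
  have hLL : ∀ v, v ≠ q1 → v ≠ q2 → φ v ∈ delL E B (h :: t) {α, β} L v := by
    intro v hv1 hv2
    by_cases hvx : v = x
    · subst hvx
      rw [delL_of_mem he.adj.2.2]
      exact (Finset.mem_sdiff.1 hφx).1
    · have := h2 v hv1 hv2
      rwa [Function.update_of_ne hvx] at this
  have hXX : ∀ w, w = x → κ h ≠ φ w := by
    rintro w rfl
    simp at hφx
    rcases k2 h (by simp) with h' | h' <;> rw [h']
    · exact Ne.symm hφx.2.1
    · exact Ne.symm hφx.2.2
  obtain ⟨ψ, g1, g2, g3, g4⟩ := del_walk (L := L) (α := α) (β := β) hq c hw (fun w => w = x) he.out h1 hLL k2 k3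
    (by rw [k1]; exact (hδb _).symm) hXX hLz
  refine ⟨ψ, g1, g4, ?_, ?_⟩
  · rw [g2 _ hQ.1, g2 _ hQ.2]; exact h3
  · rw [g3, k1, g2 _ (hw.noty c)]

/-- summary for a maximal walk -/
lemma use_walk (H : GoodClass Good) {n : ℕ} (hM : MS Good n) (hE : E.card < n + 1) 
    (hG : Good E B) (hN : NoSplit E B) (hq : BA E B q1 q2) (hL : OKL B L {q1, q2}) (hT : Big T)
    (c : WCtx E B {q1, q2} d y) :
    (∃ h t q, BWalk E B {q1, q2} d y h t ∧ (q = q1 ∨ q = q2) ∧ WExit E B d y h t q ∧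
      ∀ α β, α ≠ β → α ∈ L d → β ∈ L d → ∀ δ : ℕ → ℕ, (∀ b, δ b = α ∨ δ b = β) → (∀ b, δ b ≠ b) →
        (∃ φ, Proper E φ ∧ (∀ v, v ≠ q1 → v ≠ q2 → φ v ∈ L v) ∧ (φ q1, φ q2) ∈ T ∧ φ d = δ (φ y)) ∨
        ((∀ z ∈ h :: t, α ∈ L z ∧ β ∈ L z) ∧ ∀ τ ∈ T, (q = q1 → τ.1 = α ∨ τ.1 = β) ∧ 
          (q = q2 → τ.2 = α ∨ τ.2 = β))) ∨
    (∀ α β, α ≠ β → α ∈ L d → β ∈ L d → ∀ δ : ℕ → ℕ, (∀ b, δ b = α ∨ δ b = β) → (∀ b, δ b ≠ b) →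
        ∃ φ, Proper E φ ∧ (∀ v, v ≠ q1 → v ≠ q2 → φ v ∈ L v) ∧ (φ q1, φ q2) ∈ T ∧ φ d = δ (φ y)) := by
  obtain ⟨h, t, hw, hcases⟩ := walk_run c (H.fin hG)
  rcases hcases with ⟨h1, h2⟩ | hdead | ⟨q, hqQ, hex⟩
  · exact (walk_cycle_contra H hG hN hq c hw h1 h2).elim
  · right
    intro α β hαβ hα hβ δ hδ hδb
    rcases walk_halt c hw (fun z => α ∈ L z ∧ β ∈ L z) ⟨hα, hβ⟩ with hall | ⟨h', t', x, hw', hall, hex, hxQ, hx⟩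
    · obtain ⟨τ, hτ, -⟩ := hT.fst 0
      obtain ⟨φ, h1, h2, h3, h4⟩ := use_Z H hG hq hL c hw (fun _ => False)
        (fun z hz w hzw => by rcases hdead z hz w hzw with h | h <;> tauto) hall hαβ δ hδ hδb τ (hT.ne τ hτ) (by tauto)
      exact ⟨φ, h1, h2, h3 ▸ hτ, h4⟩
    · exact use_halt H hM hE hG hq hL hT c hw' hex hxQ hx hall hαβ δ hδ hδb
  · left
    have hqQ' : q = q1 ∨ q = q2 := by simpa using hqQ
    refine ⟨h, t, q, hw, hqQ', hex, ?_⟩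
    intro α β hαβ hα hβ δ hδ hδb
    rcases walk_halt c hw (fun z => α ∈ L z ∧ β ∈ L z) ⟨hα, hβ⟩ with hall | ⟨h', t', x, hw', hall, hex, hxQ, hx⟩
    · by_cases hcon : ∀ τ ∈ T, (q = q1 → τ.1 = α ∨ τ.1 = β) ∧ (q = q2 → τ.2 = α ∨ τ.2 = β)
      · exact Or.inr ⟨hall, hcon⟩
      · left
        push Not at hcon
        obtain ⟨τ, hτ, hcon⟩ := hcon
        obtain ⟨φ, h1, h2, h3, h4⟩ := use_Z H hG hq hL c hw (fun w => w = q) hex.out hall hαβ δ hδ hδb τ (hT.ne τ hτ) (by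
          rintro w rfl
          by_cases h : w = q1 → τ.1 = α ∨ τ.1 = β
          · exact Or.inr (by have := hcon h; tauto)
          · left; tauto)
        exact ⟨φ, h1, h2, h3 ▸ hτ, h4⟩
    · exact Or.inl (use_halt H hM hE hG hq hL hT c hw' hex hxQ hx hall hαβ δ hδ hδb)

end Comb

section Comb
open Classical
variable {V : Type u}
variable {Good : Finset (Sym2 V) → Set V → Prop}

def Dn (E : Finset (Sym2 V)) (L : V → Finset ℕ) (q1 q2 : V) (T : Set (ℕ × ℕ)) (st : Start V) : Prop :=
  ∃ φ, Proper E φ ∧ (∀ v, v ≠ q1 → v ≠ q2 → φ v ∈ L v) ∧ (φ q1, φ q2) ∈ T ∧ st.Sat φ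

variable {E : Finset (Sym2 V)} {B : Set V} {d y h x q1 q2 p1 p2 : V} {t : List V} {L : V → Finset ℕ}
  {α β : ℕ} {T : Set (ℕ × ℕ)} {st : Start V}

lemma Big.swap (h : Big T) : Big (Prod.swap ⁻¹' T) := by
  refine ⟨fun t ht => (h.ne _ ht).symm, fun a => ?_, fun a => ?_, fun t1 t2 => ?_⟩
  · obtain ⟨t, ht, h1⟩ := h.snd a; exact ⟨t.swap, by simpa using ht, h1⟩
  · obtain ⟨t, ht, h1⟩ := h.fst a; exact ⟨t.swap, by simpa using ht, h1⟩
  · obtain ⟨t, ht, h1, h2⟩ := h.two t1.swap t2.swap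
    refine ⟨t.swap, by simpa using ht, ?_, ?_⟩
    · intro h; apply h1; rw [← h]; simp
    · intro h; apply h2; rw [← h]; simp

lemma Dn.swapq (h : Dn E L q2 q1 (Prod.swap ⁻¹' T) st) : Dn E L q1 q2 T st := by
  obtain ⟨φ, h1, h2, h3, h4⟩ := h
  exact ⟨φ, h1, fun v a b => h2 v b a, h3, h4⟩

lemma sat_swap {φ : V → ℕ} {t1 t2 : ℕ × ℕ} (h : (Start.pair p2 p1 t1.swap t2.swap).Sat φ) :
    (Start.pair p1 p2 t1 t2).Sat φ := by
  refine ⟨fun h' => h.1 ?_, fun h' => h.2 ?_⟩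
  · rw [← h']; rfl
  · rw [← h']; rfl

lemma Dn.swapp {t1 t2 : ℕ × ℕ} (h : Dn E L q1 q2 T (.pair p2 p1 t1.swap t2.swap)) :
    Dn E L q1 q2 T (.pair p1 p2 t1 t2) := by
  obtain ⟨φ, h1, h2, h3, h4⟩ := h
  exact ⟨φ, h1, h2, h3, sat_swap h4⟩

lemma not_big {F : Set (ℕ × ℕ)} (hF : ∀ t ∈ F, t.1 ≠ t.2) (h : ¬ Big F) {E' : Finset (Sym2 V)} {u w : V}
    (hu : BA E' B u w) : ∃ st : Start V, st.Ok E' B ∧ ∀ φ : V → ℕ, st.Sat φ → (φ u, φ w) ∉ F := by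
  have row : (∃ a, ∀ t ∈ F, t.1 = a) → ∃ st : Start V, st.Ok E' B ∧ ∀ φ : V → ℕ, st.Sat φ → (φ u, φ w) ∉ F := by
    rintro ⟨a, ha⟩
    exact ⟨.row u a, hu.2.1, fun φ h1 h2 => h1 (ha _ h2)⟩
  have col : (∃ a, ∀ t ∈ F, t.2 = a) → ∃ st : Start V, st.Ok E' B ∧ ∀ φ : V → ℕ, st.Sat φ → (φ u, φ w) ∉ F := by
    rintro ⟨a, ha⟩
    exact ⟨.row w a, hu.2.2, fun φ h1 h2 => h1 (ha _ h2)⟩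
  by_cases h1 : ∀ a, ∃ t ∈ F, t.1 ≠ a
  swap
  · exact row (by push Not at h1; exact h1)
  by_cases h2 : ∀ a, ∃ t ∈ F, t.2 ≠ a
  swap
  · exact col (by push Not at h2; exact h2)
  by_cases h3 : ∀ t1 t2, ∃ t ∈ F, t ≠ t1 ∧ t ≠ t2
  · exact absurd ⟨hF, h1, h2, h3⟩ h
  push Not at h3
  obtain ⟨t1, t2, h3⟩ := h3
  by_cases h4 : t1.1 = t2.1
  · refine row ⟨t1.1, fun t ht => ?_⟩
    by_cases h : t = t1
    · rw [h]
    · rw [h3 t ht h, h4]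
  by_cases h5 : t1.2 = t2.2
  · refine col ⟨t1.2, fun t ht => ?_⟩
    by_cases h : t = t1
    · rw [h]
    · rw [h3 t ht h, h5]
  exact ⟨.pair u w t1 t2, ⟨hu, h4, h5⟩, fun φ h1 h2 => h1.2 (h3 _ h2 h1.1)⟩

/-- vertices of a start lie in a set -/
def Start.In (P : V → Prop) : Start V → Prop
  | .row v _ => P v
  | .pair p1 p2 _ _ => P p1 ∧ P p2

lemma Start.Sat.congr {P : V → Prop} {φ ψ : V → ℕ} (h : st.Sat φ) (hi : st.In P) (hP : ∀ v, P v → ψ v = φ v) :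
    st.Sat ψ := by
  cases st with
  | row v c => simp only [Start.Sat, Start.In] at *; rw [hP v hi]; exact h
  | pair a b c d => simp only [Start.Sat, Start.In] at *; rw [hP a hi.1, hP b hi.2]; exact h

lemma Start.Ok.side {u w : V} {K : Set V} (h : st.Ok E B) (hi : st.In (fun v => v ∈ K ∨ v = u ∨ v = w)) :
    st.Ok (side E u w K) B := by
  cases st with
  | row v c => exact h
  | pair a b c d => exact ⟨⟨mem_side.2 ⟨h.1.1, hi.1, hi.2⟩, h.1.2⟩, h.2⟩

lemma ms_split (H : GoodClass Good) {n : ℕ} (hM : MS Good n) (hE : E.card < n + 1) 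
    (hG : Good E B) (hq : BA E B q1 q2) (hL : OKL B L {q1, q2}) (hT : Big T) (hst : st.Ok E B)
    {u w : V} {K K' : Set V} (hu : u ∈ B) (hw : w ∈ B) (hs : Split E u w K K') 
    (hq1 : q1 ∉ K) (hq2 : q2 ∉ K) : Dn E L q1 q2 T st := by
  have cov : ∀ v, v ∉ K → v ∈ K' ∨ v = u ∨ v = w := fun v hv => by have := hs.cover v; tauto
  have hqK' : s(q1, q2) ∈ side E u w K' := mem_side.2 ⟨hq.1, cov _ hq1, cov _ hq2⟩
  have hc1 := hs.card_lt
  have hc2 := hs.symm.card_lt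
  have hcases : st.In (fun v => v ∈ K' ∨ v = u ∨ v = w) ∨ st.In (fun v => v ∈ K ∨ v = u ∨ v = w) := by
    cases st with
    | row v c => have := hs.cover v; simp only [Start.In]; tauto
    | pair a b c d => 
      rcases hs.cases hst.1.1 with h | h
      · exact Or.inr (mem_side.1 h).2
      · exact Or.inl (mem_side.1 h).2
  rcases hcases with hin | hin
  · obtain ⟨φ, h1, h2, h3, h4⟩ := hM (side E u w K') B L q1 q2 T st (by omega) (H.mono hG side_sub)
      ⟨hqK', hq.2⟩ hL hT (hst.side hin)
    obtain ⟨ψ, g1, g2, g3⟩ := hs.symm.extend H (ZZW H n).1 hG hu hw hE hL (by rintro x (rfl | rfl) <;> assumption) h1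
    refine ⟨ψ, g1, fun v a b => ?_, ?_, h4.congr hin ?_⟩
    · by_cases hv : v ∈ K
      · exact g3 v hv
      · rw [g2 v hv]; exact h2 v a b
    · rw [g2 _ hq1, g2 _ hq2]; exact h3
    · rintro v (hv | rfl | rfl)
      · exact g2 v (fun h => hs.disj v h hv)
      · exact g2 _ hs.uK
      · exact g2 _ hs.wK
  · set F : Set (ℕ × ℕ) := {t | t.1 ≠ t.2 ∧ ¬ ∃ φ, Proper (side E u w K) φ ∧ (∀ v ∈ K, φ v ∈ L v) ∧ st.Sat φ ∧
      φ u = t.1 ∧ φ w = t.2} with hF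
    have hnb : ¬ Big F := by
      intro hb
      obtain ⟨φ, h1, h2, h3, h4⟩ := hM (side E u w K) B (fixL L {q1, q2}) u w F st (by omega) (H.mono hG side_sub)
        ⟨hs.edge_mem, hu, hw⟩ (hL.fix _ _ (fun v hv => Or.inl hv)) hb (hst.side hin)
      refine h3.2 ⟨φ, h1, fun v hv => ?_, h4, rfl, rfl⟩
      have := h2 v (fun h => hs.uK (h ▸ hv)) (fun h => hs.wK (h ▸ hv))
      rwa [fixL_of_not_mem] at this
      rintro (rfl | rfl) <;> contradiction
    obtain ⟨st', k1, k2⟩ := not_big (fun t ht => ht.1) hnb (⟨hs.symm.edge_mem, hu, hw⟩ : BA (side E u w K') B u w)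
    obtain ⟨φ', h1, h2, h3, h4⟩ := hM (side E u w K') B L q1 q2 T st' (by omega) (H.mono hG side_sub)
      ⟨hqK', hq.2⟩ hL hT k1
    have h5 := k2 _ h4
    have h6 := h1 _ _ hs.symm.edge_mem
    rw [hF] at h5
    simp only [Set.mem_ofPred_eq, not_and, not_not] at h5
    obtain ⟨φ, g1, g2, g3, g4, g5⟩ := h5 h6
    refine ⟨_, hs.glue g1 h1 g4 g5, fun v a b => ?_, ?_, g3.congr hin ?_⟩
    · by_cases hv : v ∈ K
      · simp only [hv, if_true]; exact g2 v hv
      · simp only [hv, if_false]; exact h2 v a b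
    · simp only [hq1, hq2, if_false]; exact h3
    · rintro v (hv | rfl | rfl)
      · simp only [hv, if_true]
      · simp only [hs.uK, if_false]; exact g4.symm
      · simp only [hs.wK, if_false]; exact g5.symm

lemma ms_row_easy (H : GoodClass Good) 
    (hG : Good E B) (hq : BA E B q1 q2) (hL : OKL B L {q1, q2}) (hT : Big T) {v : V} {c : ℕ}
    (hv : v = q1 ∨ v = q2) : Dn E L q1 q2 T (.row v c) := by
  rcases hv with rfl | rfl
  · obtain ⟨τ, h1, h2⟩ := hT.fst c
    obtain ⟨φ, g1, g2, g3, g4⟩ := thomassen H hG hq.1 hq.2.1 hq.2.2 (hT.ne τ h1) hL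
    exact ⟨φ, g1, g4, by rw [g2, g3]; exact h1, by simp only [Start.Sat, g2]; exact h2⟩
  · obtain ⟨τ, h1, h2⟩ := hT.snd c
    obtain ⟨φ, g1, g2, g3, g4⟩ := thomassen H hG hq.1 hq.2.1 hq.2.2 (hT.ne τ h1) hL
    exact ⟨φ, g1, g4, by rw [g2, g3]; exact h1, by simp only [Start.Sat, g3]; exact h2⟩

lemma ms_pair_easy (H : GoodClass Good) 
    (hG : Good E B) (hq : BA E B q1 q2) (hL : OKL B L {q1, q2}) (hT : Big T) {t1 t2 : ℕ × ℕ} :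
    Dn E L q1 q2 T (.pair q1 q2 t1 t2) := by
  obtain ⟨τ, h1, h2⟩ := hT.two t1 t2
  obtain ⟨φ, g1, g2, g3, g4⟩ := thomassen H hG hq.1 hq.2.1 hq.2.2 (hT.ne τ h1) hL
  exact ⟨φ, g1, g4, by rw [g2, g3]; exact h1, by simp only [Start.Sat, g2, g3]; exact h2⟩

lemma exists_delta (hαβ : α ≠ β) : ∃ δ : ℕ → ℕ, (∀ b, δ b = α ∨ δ b = β) ∧ ∀ b, δ b ≠ b := by
  refine ⟨fun b => if b = α then β else α, fun b => ?_, fun b => ?_⟩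
  · dsimp only; split_ifs <;> simp
  · dsimp only; split_ifs with h
    · rw [h]; exact hαβ.symm
    · exact fun h' => h h'.symm

lemma Big.notdem (hT : Big T) (hαβ : α ≠ β) (h1 : ∀ τ ∈ T, τ.1 = α ∨ τ.1 = β) (h2 : ∀ τ ∈ T, τ.2 = α ∨ τ.2 = β) : False := by
  obtain ⟨⟨a, b⟩, ht, h3, h4⟩ := hT.two (α, β) (β, α)
  have h5 := hT.ne _ ht
  have h6 := h1 _ ht
  have h7 := h2 _ ht
  simp only [ne_eq, Prod.mk.injEq] at *
  rcases h6 with rfl | rfl <;> rcases h7 with rfl | rfl <;> simp_all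

lemma ms_row (H : GoodClass Good) {n : ℕ} (hM : MS Good n) (hE : E.card < n + 1) 
    (hG : Good E B) (hN : NoSplit E B) (hq : BA E B q1 q2) (hL : OKL B L {q1, q2}) (hT : Big T)
    {v : V} {c : ℕ} (hvB : v ∈ B) (hv1 : v ≠ q1) (hv2 : v ≠ q2) : Dn E L q1 q2 T (.row v c) := by
  have hdeg := deg2_of_noSplit H hG hN
  have irr : ∀ a b, BA E B a b → a ≠ b := fun a b h => h.ne H hG
  have hvQ : v ∉ ({q1, q2} : Set V) := by simp [hv1, hv2]
  obtain ⟨α, hα, β, hβ, hαβ, hαc, hβc⟩ := pickpair (hL v hvQ).1 c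
  obtain ⟨δ, hδ, hδb⟩ := exists_delta hαβ
  have fin : (∃ y, ∃ φ, Proper E φ ∧ (∀ v, v ≠ q1 → v ≠ q2 → φ v ∈ L v) ∧ (φ q1, φ q2) ∈ T ∧ φ v = δ (φ y)) →
      Dn E L q1 q2 T (.row v c) := by
    rintro ⟨y, φ, h1, h2, h3, h4⟩
    refine ⟨φ, h1, h2, h3, ?_⟩
    simp only [Start.Sat, h4]
    rcases hδ (φ y) with h | h <;> rw [h] <;> assumption
  by_cases hy : ∃ y1, BA E B v y1
  swap
  · push Not at hy
    have ctx : WCtx E B {q1, q2} v q1 := ⟨irr, hdeg, hvB, hvQ, hv1, Or.inr hy⟩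
    rcases use_walk H hM hE hG hN hq hL hT ctx with ⟨h, t, q, w1, -, w3, -⟩ | h
    · obtain ⟨w, -, -, h⟩ := walk_succ ctx w1 w3
      exact absurd h (hy w)
    · exact fin ⟨q1, h α β hαβ hα hβ δ hδ hδb⟩
  obtain ⟨y1, hy1⟩ := hy
  have ctx1 : WCtx E B {q1, q2} v y1 := ⟨irr, hdeg, hvB, hvQ, irr _ _ hy1, Or.inl hy1⟩
  rcases use_walk H hM hE hG hN hq hL hT ctx1 with ⟨h, t, q, w1, hqq, w3, w4⟩ | h
  swap
  · exact fin ⟨y1, h α β hαβ hα hβ δ hδ hδb⟩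
  obtain ⟨y2, -, hne, hy2⟩ := walk_succ ctx1 w1 w3
  have ctx2 : WCtx E B {q1, q2} v y2 := ⟨irr, hdeg, hvB, hvQ, irr _ _ hy2, Or.inl hy2⟩
  rcases use_walk H hM hE hG hN hq hL hT ctx2 with ⟨h', t', q', w1', hqq', w3', w4'⟩ | h
  swap
  · exact fin ⟨y2, h α β hαβ hα hβ δ hδ hδb⟩
  rcases w4 α β hαβ hα hβ δ hδ hδb with h | ⟨-, w5⟩
  · exact fin ⟨_, h⟩
  rcases w4' α β hαβ hα hβ δ hδ hδb with h | ⟨-, w5'⟩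
  · exact fin ⟨_, h⟩
  exfalso
  have hne' : q ≠ q' := by
    rintro rfl
    rcases hqq with rfl | rfl
    · exact row_exit_ne hdeg hq (by simp) ctx1 ctx2 hne.symm hy1 hy2 w1 w1' w3 w3'
    · exact row_exit_ne hdeg hq.symm (by simp) ctx1 ctx2 hne.symm hy1 hy2 w1 w1' w3 w3'
  rcases hqq with rfl | rfl <;> rcases hqq' with rfl | rfl
  · exact hne' rfl
  · exact hT.notdem hαβ (fun τ h => (w5 τ h).1 rfl) (fun τ h => (w5' τ h).2 rfl)
  · exact hT.notdem hαβ (fun τ h => (w5' τ h).1 rfl) (fun τ h => (w5 τ h).2 rfl)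
  · exact hne' rfl

end Comb

section Comb
open Classical
variable {V : Type u}
variable {Good : Finset (Sym2 V) → Set V → Prop}
variable {E : Finset (Sym2 V)} {B : Set V} {d y h x q1 q2 p1 p2 : V} {t : List V} {L : V → Finset ℕ}
  {α β : ℕ} {T : Set (ℕ × ℕ)} {st : Start V}

lemma delta_pair {t1 t2 : ℕ × ℕ} (hαβ : α ≠ β) (h1 : s(α, β) ≠ s(t1.1, t1.2)) (h2 : s(α, β) ≠ s(t2.1, t2.2))
    (ha : t1.1 ≠ t2.1) (hb : t1.2 ≠ t2.2) :
    ∃ δ : ℕ → ℕ, (∀ b, δ b = α ∨ δ b = β) ∧ (∀ b, δ b ≠ b) ∧ ∀ b, (δ b, b) ≠ t1 ∧ (δ b, b) ≠ t2 := by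
  have : ∀ b, ∃ e, (e = α ∨ e = β) ∧ e ≠ b ∧ (e, b) ≠ t1 ∧ (e, b) ≠ t2 := by
    intro b
    by_contra hcon
    push Not at hcon
    obtain ⟨a1, b1⟩ := t1
    obtain ⟨a2, b2⟩ := t2
    have g1 := hcon α (Or.inl rfl)
    have g2 := hcon β (Or.inr rfl)
    simp only [ne_eq, Sym2.eq_iff, Prod.mk.injEq] at *
    grind
  choose δ h1 h2 h3 using this
  exact ⟨δ, h1, h2, h3⟩

lemma fsel {S : Finset ℕ} (hS : 3 ≤ S.card) (s1 s2 : Sym2 ℕ) (P : ℕ → Prop) (hP : ∀ x, ∃ a, P a ∧ a ≠ x)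
    (h : ∀ α ∈ S, ∀ β ∈ S, α ≠ β → s(α, β) ≠ s1 → s(α, β) ≠ s2 → ∀ a, P a → a = α ∨ a = β) :
    ∃ x α β, x ≠ α ∧ x ≠ β ∧ α ≠ β ∧ s1 = s(x, α) ∧ s2 = s(x, β) ∧ ∀ a, P a → a = α ∨ a = β := by
  obtain ⟨x, hx, y, hy, hxy, -, -⟩ := pickpair hS 0
  obtain ⟨z, hz, hzx, hzy⟩ := pick2 hS x y
  have two : ∀ x ∈ S, ∀ y ∈ S, ∀ z ∈ S, x ≠ y → x ≠ z → y ≠ z → (s(x,y) ≠ s1 ∧ s(x,y) ≠ s2) → 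
      ¬ (s(x,z) ≠ s1 ∧ s(x,z) ≠ s2) := by
    rintro x hx y hy z hz hxy hxz hyz ⟨h1, h2⟩ ⟨h3, h4⟩
    obtain ⟨a, ha, hax⟩ := hP x
    rcases h x hx y hy hxy h1 h2 a ha with h5 | h5
    · exact hax h5
    rcases h x hx z hz hxz h3 h4 a ha with h6 | h6
    · exact hax h6
    exact hyz (h5 ▸ h6)
  have fin : ∀ x ∈ S, ∀ y ∈ S, ∀ z ∈ S, x ≠ y → x ≠ z → y ≠ z → ¬ (s(x,y) ≠ s1 ∧ s(x,y) ≠ s2) → 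
      ¬ (s(x,z) ≠ s1 ∧ s(x,z) ≠ s2) → 
      ∃ x α β, x ≠ α ∧ x ≠ β ∧ α ≠ β ∧ s1 = s(x, α) ∧ s2 = s(x, β) ∧ ∀ a, P a → a = α ∨ a = β := by
    intro x hx y hy z hz hxy hxz hyz h1 h2
    have n1 : s(x,y) ≠ s(x,z) := by rw [ne_eq, Sym2.eq_iff]; rintro (h | h); exacts [hyz h.2, hxz h.1]
    have n2 : s(y,z) ≠ s(x,z) := by rw [ne_eq, Sym2.eq_iff]; rintro (h | h); exacts [hxy h.1.symm, hyz h.1]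
    have n3 : s(y,z) ≠ s(x,y) := by rw [ne_eq, Sym2.eq_iff]; rintro (h | h); exacts [hxy h.1.symm, hxz h.2.symm]
    have hc : (s(x,y) = s1 ∧ s(x,z) = s2) ∨ (s(x,y) = s2 ∧ s(x,z) = s1) := by
      rw [not_and_or, not_ne_iff, not_ne_iff] at h1 h2
      rcases h1 with h1 | h1 <;> rcases h2 with h2 | h2
      · exact absurd (h1.trans h2.symm) n1
      · exact Or.inl ⟨h1, h2⟩
      · exact Or.inr ⟨h1, h2⟩
      · exact absurd (h1.trans h2.symm) n1
    rcases hc with ⟨rfl, rfl⟩ | ⟨rfl, rfl⟩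
    · exact ⟨x, y, z, hxy, hxz, hyz, rfl, rfl, h y hy z hz hyz n3 n2⟩
    · exact ⟨x, z, y, hxz, hxy, hyz.symm, rfl, rfl, fun a ha => (h y hy z hz hyz n2 n3 a ha).symm⟩
  by_cases c1 : s(x,y) ≠ s1 ∧ s(x,y) ≠ s2
  · have c2 := two x hx y hy z hz hxy hzx.symm hzy.symm c1
    have c3 := two y hy x hx z hz hxy.symm hzy.symm hzx.symm (by rw [Sym2.eq_swap]; exact c1)
    exact fin z hz x hx y hy hzx hzy hxy (by rw [Sym2.eq_swap]; exact c2) (by rw [Sym2.eq_swap]; exact c3)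
  · by_cases c2 : s(x,z) ≠ s1 ∧ s(x,z) ≠ s2
    · have c3 := two z hz x hx y hy hzx hzy hxy (by rw [Sym2.eq_swap]; exact c2)
      exact fin y hy x hx z hz hxy.symm hzy.symm hzx.symm (by rw [Sym2.eq_swap]; exact c1) (by rw [Sym2.eq_swap]; exact c3)
    · exact fin x hx y hy z hz hxy hzx.symm hzy.symm c1 c2

lemma ms_pair_disj (H : GoodClass Good) {n : ℕ} (hM : MS Good n) (hE : E.card < n + 1) 
    (hG : Good E B) (hN : NoSplit E B) (hq : BA E B q1 q2) (hL : OKL B L {q1, q2}) (hT : Big T)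
    {t1 t2 : ℕ × ℕ} (hst : (Start.pair p1 p2 t1 t2).Ok E B)
    (hp1 : p1 ∉ ({q1, q2} : Set V)) (hp2 : p2 ∉ ({q1, q2} : Set V)) : Dn E L q1 q2 T (.pair p1 p2 t1 t2) := by
  have hdeg := deg2_of_noSplit H hG hN
  have irr : ∀ a b, BA E B a b → a ≠ b := fun a b h => h.ne H hG
  obtain ⟨hpp, ha, hb⟩ := hst
  by_contra hcon
  have fin1 : ∀ δ : ℕ → ℕ, (∀ b, (δ b, b) ≠ t1 ∧ (δ b, b) ≠ t2) → ¬ (∃ φ, Proper E φ ∧ (∀ v, v ≠ q1 → v ≠ q2 → φ v ∈ L v) ∧ (φ q1, φ q2) ∈ T ∧ φ p1 = δ (φ p2)) := by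
    rintro δ hδ ⟨φ, h1, h2, h3, h4⟩
    exact hcon ⟨φ, h1, h2, h3, by simp only [Start.Sat, h4]; exact hδ _⟩
  have fin2 : ∀ δ : ℕ → ℕ, (∀ b, (δ b, b) ≠ t1.swap ∧ (δ b, b) ≠ t2.swap) → ¬ (∃ φ, Proper E φ ∧ (∀ v, v ≠ q1 → v ≠ q2 → φ v ∈ L v) ∧ (φ q1, φ q2) ∈ T ∧ φ p2 = δ (φ p1)) := by
    rintro δ hδ ⟨φ, h1, h2, h3, h4⟩
    exact hcon (Dn.swapp ⟨φ, h1, h2, h3, by simp only [Start.Sat, h4]; exact hδ _⟩)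
  have ok1 : ∃ α ∈ L p1, ∃ β ∈ L p1, α ≠ β ∧ s(α, β) ≠ s(t1.1, t1.2) ∧ s(α, β) ≠ s(t2.1, t2.2) := by
    by_contra h
    push Not at h
    obtain ⟨x, α, β, -, -, -, -, -, h5⟩ := fsel (hL p1 hp1).1 s(t1.1, t1.2) s(t2.1, t2.2) (fun _ => True) (fun x => ⟨x+1, trivial, by omega⟩)
      (fun α hα β hβ hαβ h1 h2 => absurd (h α hα β hβ hαβ h1) h2)
    have g1 := h5 (α + β + 1) trivial
    omega
  have ok2 : ∃ α ∈ L p2, ∃ β ∈ L p2, α ≠ β ∧ s(α, β) ≠ s(t1.2, t1.1) ∧ s(α, β) ≠ s(t2.2, t2.1) := by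
    by_contra h
    push Not at h
    obtain ⟨x, α, β, -, -, -, -, -, h5⟩ := fsel (hL p2 hp2).1 s(t1.2, t1.1) s(t2.2, t2.1) (fun _ => True) (fun x => ⟨x+1, trivial, by omega⟩)
      (fun α hα β hβ hαβ h1 h2 => absurd (h α hα β hβ hαβ h1) h2)
    have g1 := h5 (α + β + 1) trivial
    omega
  have ctx1 : WCtx E B {q1, q2} p1 p2 := ⟨irr, hdeg, hpp.2.1, hp1, irr _ _ hpp, Or.inl hpp⟩
  have ctx2 : WCtx E B {q1, q2} p2 p1 := ⟨irr, hdeg, hpp.2.2, hp2, irr _ _ hpp.symm, Or.inl hpp.symm⟩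
  rcases use_walk H hM hE hG hN hq hL hT ctx1 with ⟨h, t, q, w1, hqq, w3, w4⟩ | h
  swap
  · obtain ⟨α, hα, β, hβ, hαβ, h1, h2⟩ := ok1
    obtain ⟨δ, d1, d2, d3⟩ := delta_pair hαβ h1 h2 ha hb
    exact fin1 δ d3 (h α β hαβ hα hβ δ d1 d2)
  rcases use_walk H hM hE hG hN hq hL hT ctx2 with ⟨h', t', q', w1', hqq', w3', w4'⟩ | h
  swap
  · obtain ⟨α, hα, β, hβ, hαβ, h1, h2⟩ := ok2
    obtain ⟨δ, d1, d2, d3⟩ := delta_pair (t1 := t1.swap) (t2 := t2.swap) hαβ h1 h2 hb ha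
    exact fin2 δ d3 (h α β hαβ hα hβ δ d1 d2)
  have k1 : ∀ α ∈ L p1, ∀ β ∈ L p1, α ≠ β → s(α, β) ≠ s(t1.1, t1.2) → s(α, β) ≠ s(t2.1, t2.2) →
      ∀ τ ∈ T, (q = q1 → τ.1 = α ∨ τ.1 = β) ∧ (q = q2 → τ.2 = α ∨ τ.2 = β) := by
    intro α hα β hβ hαβ h1 h2
    obtain ⟨δ, d1, d2, d3⟩ := delta_pair hαβ h1 h2 ha hb
    exact ((w4 α β hαβ hα hβ δ d1 d2).resolve_left (fin1 δ d3)).2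
  have k2 : ∀ α ∈ L p2, ∀ β ∈ L p2, α ≠ β → s(α, β) ≠ s(t1.1, t1.2) → s(α, β) ≠ s(t2.1, t2.2) →
      ∀ τ ∈ T, (q' = q1 → τ.1 = α ∨ τ.1 = β) ∧ (q' = q2 → τ.2 = α ∨ τ.2 = β) := by
    intro α hα β hβ hαβ h1 h2
    obtain ⟨δ, d1, d2, d3⟩ := delta_pair (t1 := t1.swap) (t2 := t2.swap) hαβ (by rw [Sym2.eq_swap (a := t1.swap.1)]; exact h1)
      (by rw [Sym2.eq_swap (a := t2.swap.1)]; exact h2) hb ha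
    exact ((w4' α β hαβ hα hβ δ d1 d2).resolve_left (fin2 δ d3)).2
  have hne' : q ≠ q' := by
    rintro rfl
    rcases hqq with rfl | rfl
    · exact pair_exit_ne hdeg hq (by simp) ctx1 ctx2 w1 w1' w3 w3'
    · exact pair_exit_ne hdeg hq.symm (by simp) ctx1 ctx2 w1 w1' w3 w3'
  have e1 : ∀ x, ∃ a, (∃ τ ∈ T, τ.1 = a) ∧ a ≠ x := fun x => by
    obtain ⟨τ, h1, h2⟩ := hT.fst x; exact ⟨_, ⟨τ, h1, rfl⟩, h2⟩
  have e2 : ∀ x, ∃ a, (∃ τ ∈ T, τ.2 = a) ∧ a ≠ x := fun x => by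
    obtain ⟨τ, h1, h2⟩ := hT.snd x; exact ⟨_, ⟨τ, h1, rfl⟩, h2⟩
  have clash : ∀ {P Q : ℕ → Prop} {x α β x' α' β' : ℕ} {s1 s2 : Sym2 ℕ}, x ≠ α → x ≠ β → α ≠ β → s1 = s(x, α) → s2 = s(x, β) →
      (∀ a, P a → a = α ∨ a = β) → x' ≠ α' → x' ≠ β' → α' ≠ β' → s1 = s(x', α') → s2 = s(x', β') →
      (∀ a, Q a → a = α' ∨ a = β') → (∀ a, P a → a = α ∨ a = β) ∧ (∀ a, Q a → a = α ∨ a = β) := by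
    intro P Q x α β x' α' β' s1 s2 h1 h2 h3 h4 h5 h6 g1 g2 g3 g4 g5 g6
    subst h4 h5
    rw [Sym2.eq_iff] at g4 g5
    have : α = α' ∧ β = β' := by grind
    rw [this.1, this.2] at h6 ⊢
    exact ⟨h6, g6⟩
  rcases hqq with rfl | rfl <;> rcases hqq' with rfl | rfl
  · exact hne' rfl
  · obtain ⟨x, α, β, h1, h2, h3, h4, h5, h6⟩ := fsel (hL p1 hp1).1 s(t1.1, t1.2) s(t2.1, t2.2) _ e1 
      (by rintro α hα β hβ hαβ h1 h2 _ ⟨τ, hτ, rfl⟩; exact (k1 α hα β hβ hαβ h1 h2 τ hτ).1 rfl)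
    obtain ⟨x', α', β', g1, g2, g3, g4, g5, g6⟩ := fsel (hL p2 hp2).1 s(t1.1, t1.2) s(t2.1, t2.2) _ e2 
      (by rintro α hα β hβ hαβ h1 h2 _ ⟨τ, hτ, rfl⟩; exact (k2 α hα β hβ hαβ h1 h2 τ hτ).2 rfl)
    have := clash h1 h2 h3 h4 h5 h6 g1 g2 g3 g4 g5 g6
    exact hT.notdem h3 (fun τ h => this.1 _ ⟨τ, h, rfl⟩) (fun τ h => this.2 _ ⟨τ, h, rfl⟩)
  · obtain ⟨x, α, β, h1, h2, h3, h4, h5, h6⟩ := fsel (hL p2 hp2).1 s(t1.1, t1.2) s(t2.1, t2.2) _ e1 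
      (by rintro α hα β hβ hαβ h1 h2 _ ⟨τ, hτ, rfl⟩; exact (k2 α hα β hβ hαβ h1 h2 τ hτ).1 rfl)
    obtain ⟨x', α', β', g1, g2, g3, g4, g5, g6⟩ := fsel (hL p1 hp1).1 s(t1.1, t1.2) s(t2.1, t2.2) _ e2 
      (by rintro α hα β hβ hαβ h1 h2 _ ⟨τ, hτ, rfl⟩; exact (k1 α hα β hβ hαβ h1 h2 τ hτ).2 rfl)
    have := clash h1 h2 h3 h4 h5 h6 g1 g2 g3 g4 g5 g6
    exact hT.notdem h3 (fun τ h => this.1 _ ⟨τ, h, rfl⟩) (fun τ h => this.2 _ ⟨τ, h, rfl⟩)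
  · exact hne' rfl

lemma ms_touch_aux (H : GoodClass Good) {n : ℕ} (hM : MS Good n) (hE : E.card < n + 1) 
    (hG : Good E B) (hN : NoSplit E B) (hq : BA E B q1 q2) (hL : OKL B L {q1, q2}) (hT : Big T)
    {t1 t2 : ℕ × ℕ} (hst : (Start.pair p1 q1 t1 t2).Ok E B)
    (hp1 : p1 ∉ ({q1, q2} : Set V)) {c c' : ℕ} (hc : (t1.2, c) ∈ T) (hc' : (t1.2, c') ∈ T) (hcc : c ≠ c') :
    Dn E L q1 q2 T (.pair p1 q1 t1 t2) := by
  have hdeg := deg2_of_noSplit H hG hN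
  have irr : ∀ a b, BA E B a b → a ≠ b := fun a b h => h.ne H hG
  obtain ⟨hpp, ha, hb⟩ := hst
  obtain ⟨e, he, he1, he2⟩ := pick2 (hL p1 hp1).1 t1.2 t1.1
  obtain ⟨β, hβ, hβ1, hβ2⟩ := pick2 (hL p1 hp1).1 e (if e = t2.1 then t2.2 else t2.1)
  have s1 : s(e, β) ≠ s(t1.1, t1.2) := by rw [ne_eq, Sym2.eq_iff]; tauto
  have s2 : s(e, β) ≠ s(t2.1, t2.2) := by 
    rw [ne_eq, Sym2.eq_iff]
    split_ifs at hβ2 with h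
    · rintro (h1 | h1)
      · exact hβ2 h1.2
      · exact hβ1 (h1.2.trans h.symm)
    · tauto
  obtain ⟨δ, d1, d2, d3⟩ := delta_pair hβ1.symm s1 s2 ha hb
  have ctx1 : WCtx E B {q1, q2} p1 q1 := ⟨irr, hdeg, hpp.2.1, hp1, irr _ _ hpp, Or.inl hpp⟩
  have fin1 : (∃ φ, Proper E φ ∧ (∀ v, v ≠ q1 → v ≠ q2 → φ v ∈ L v) ∧ (φ q1, φ q2) ∈ T ∧ φ p1 = δ (φ q1)) →
      Dn E L q1 q2 T (.pair p1 q1 t1 t2) := by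
    rintro ⟨φ, h1, h2, h3, h4⟩
    exact ⟨φ, h1, h2, h3, by simp only [Start.Sat, h4]; exact d3 _⟩
  rcases use_walk H hM hE hG hN hq hL hT ctx1 with ⟨h, t, q, w1, hqq, w3, w4⟩ | h
  swap
  · exact fin1 (h e β hβ1.symm he hβ δ d1 d2)
  rcases w4 e β hβ1.symm he hβ δ d1 d2 with h | ⟨w5, -⟩
  · exact fin1 h
  obtain rfl : q = q2 := hqq.resolve_left w3.xy
  obtain ⟨κ, k1, k2, k3⟩ := w1.coloring ctx1 hβ1.symm (Or.inl rfl : e = e ∨ e = β)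
  obtain ⟨c, hc, hch⟩ : ∃ c, (t1.2, c) ∈ T ∧ κ h ≠ c := by
    by_cases hk : κ h = c
    · exact ⟨c', hc', fun h => hcc (hk.symm.trans h)⟩
    · exact ⟨c, hc, hk⟩
  have hQ := mem_ne ctx1 w1
  obtain ⟨φ, h1, h2, h3, h4⟩ := thomassen H (H.delD hG (h :: t) (w1.memB ctx1)) (p1 := q1) (p2 := q)
    (mem_delE.2 ⟨hq.1, hQ.1, hQ.2⟩) (Or.inl hq.2.1) (Or.inl hq.2.2) (hT.ne _ hc) (OKL_del hL (R := {e, β}) Finset.card_le_two)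
  obtain ⟨ψ, g1, g2, g3, g4⟩ := del_walk hq ctx1 w1 (fun w => w = q) w3.out h1 h4 k2 k3 (by rw [k1, h2]; exact he1.symm) 
    (by rintro w rfl; rw [h3]; exact hch) w5
  refine ⟨ψ, g1, g4, ?_, ?_⟩
  · rw [g2 _ hQ.1, g2 _ hQ.2, h2, h3]; exact hc
  · simp only [Start.Sat]
    rw [g3, k1, g2 _ hQ.1, h2]
    exact ⟨fun h => he2 (by rw [← h]), fun h => hb (by rw [← h])⟩

lemma ms_touch (H : GoodClass Good) {n : ℕ} (hM : MS Good n) (hE : E.card < n + 1) 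
    (hG : Good E B) (hN : NoSplit E B) (hq : BA E B q1 q2) (hL : OKL B L {q1, q2}) (hT : Big T)
    {t1 t2 : ℕ × ℕ} (hst : (Start.pair p1 q1 t1 t2).Ok E B)
    (hp1 : p1 ∉ ({q1, q2} : Set V))  :
    Dn E L q1 q2 T (.pair p1 q1 t1 t2) := by
  by_cases hτ : ∃ τ ∈ T, τ.1 ≠ t1.2 ∧ τ.1 ≠ t2.2
  · obtain ⟨τ, h1, h2, h3⟩ := hτ
    obtain ⟨φ, g1, g2, g3, g4⟩ := thomassen H hG hq.1 hq.2.1 hq.2.2 (hT.ne τ h1) hL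
    refine ⟨φ, g1, g4, by rw [g2, g3]; exact h1, ?_⟩
    simp only [Start.Sat, g2]
    exact ⟨fun h => h2 (by rw [← h]), fun h => h3 (by rw [← h])⟩
  push Not at hτ
  obtain ⟨x, hx, hx1⟩ := hT.fst t2.2
  obtain ⟨y, hy, hy1⟩ := hT.fst t1.2
  have hx1 : x.1 = t1.2 := by by_contra h; exact hx1 (hτ x hx h)
  have hy1 : y.1 = t2.2 := hτ y hy hy1
  obtain ⟨z, hz, hzx, hzy⟩ := hT.two x y
  by_cases hz1 : z.1 = t1.2
  · refine ms_touch_aux H hM hE hG hN hq hL hT hst hp1 (c := x.2) (c' := z.2) (by rw [← hx1]; exact hx) 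
      (by rw [← hz1]; exact hz) (fun h => hzx (Prod.ext (hz1.trans hx1.symm) h.symm))
  · have hz1 := hτ z hz hz1
    obtain ⟨φ, h1, h2, h3, h4⟩ := ms_touch_aux H hM hE hG hN hq hL hT (t1 := t2) (t2 := t1) ⟨hst.1, hst.2.1.symm, hst.2.2.symm⟩
      hp1 (c := y.2) (c' := z.2) (by rw [← hy1]; exact hy) 
      (by rw [← hz1]; exact hz) (fun h => hzy (Prod.ext (hz1.trans hy1.symm) h.symm))
    exact ⟨φ, h1, h2, h3, h4.2, h4.1⟩

lemma okl_swap (hL : OKL B L {q1, q2}) : OKL B L {q2, q1} := by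
  rw [Set.pair_comm]; exact hL

/-- one end of the start edge is in the target edge -/
lemma ms_touch2 (H : GoodClass Good) {n : ℕ} (hM : MS Good n) (hE : E.card < n + 1) 
    (hG : Good E B) (hN : NoSplit E B) (hq : BA E B q1 q2) (hL : OKL B L {q1, q2}) (hT : Big T)
    {t1 t2 : ℕ × ℕ} (hst : (Start.pair p1 p2 t1 t2).Ok E B) (hp2 : p2 = q1 ∨ p2 = q2) :
    Dn E L q1 q2 T (.pair p1 p2 t1 t2) := by
  have hne := hst.1.ne H hG
  rcases hp2 with rfl | rfl
  · by_cases h : p1 = q2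
    · subst h
      exact Dn.swapq (ms_pair_easy H hG hq.symm (okl_swap hL) hT.swap)
    · exact ms_touch H hM hE hG hN hq hL hT hst (by simp [hne, h])
  · by_cases h : p1 = q1
    · subst h
      exact ms_pair_easy H hG hq hL hT
    · exact Dn.swapq (ms_touch H hM hE hG hN hq.symm (okl_swap hL) hT.swap hst (by simp [hne, h]))

lemma ms_all (H : GoodClass Good) (n : ℕ) : MS Good n := by
  induction n with
  | zero => exact fun _ _ _ _ _ _ _ h => absurd h (by simp)
  | succ n hM =>
    intro E B L q1 q2 T st hE hG hq hL hT hst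
    change Dn E L q1 q2 T st
    by_cases hN : NoSplit E B
    · cases st with
      | row v c =>
        by_cases hv : v = q1 ∨ v = q2
        · exact ms_row_easy H hG hq hL hT hv
        · push Not at hv
          exact ms_row H hM hE hG hN hq hL hT hst hv.1 hv.2
      | pair p1 p2 t1 t2 =>
        by_cases h2 : p2 = q1 ∨ p2 = q2
        · exact ms_touch2 H hM hE hG hN hq hL hT hst h2
        by_cases h1 : p1 = q1 ∨ p1 = q2
        · exact Dn.swapp (ms_touch2 H hM hE hG hN hq hL hT ⟨hst.1.symm, hst.2.2, hst.2.1⟩ h1)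
        exact ms_pair_disj H hM hE hG hN hq hL hT hst (by simpa using h1) (by simpa using h2)
    · simp only [NoSplit] at hN
      push Not at hN
      obtain ⟨u, w, K, K', hu, hw, hs⟩ := hN
      rcases hs.cases hq.1 with h | h
      · have h := mem_side.1 h
        refine ms_split H hM hE hG hq hL hT hst hu hw hs.symm ?_ ?_
        · intro hk; rcases h.2.1 with h | rfl | rfl
          exacts [hs.disj _ h hk, hs.uK' hk, hs.wK' hk]
        · intro hk; rcases h.2.2 with h | rfl | rfl
          exacts [hs.disj _ h hk, hs.uK' hk, hs.wK' hk]
      · have h := mem_side.1 h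
        refine ms_split H hM hE hG hq hL hT hst hu hw hs ?_ ?_
        · intro hk; rcases h.2.1 with h | rfl | rfl
          exacts [hs.disj _ hk h, hs.uK hk, hs.wK hk]
        · intro hk; rcases h.2.2 with h | rfl | rfl
          exacts [hs.disj _ hk h, hs.uK hk, hs.wK hk]

lemma partA (H : GoodClass Good) (hG : Good E B) {v1 v2 : V} (hv : v1 ≠ v2) (h1 : v1 ∈ B) (h2 : v2 ∈ B)
    (hL : OKL B L {v1, v2}) (c1 : 2 ≤ (L v1).card) (c2 : 2 ≤ (L v2).card) : 
    ∃ φ, Proper E φ ∧ ∀ v, φ v ∈ L v := by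
  by_cases hq : ∃ q, BA E B v2 q
  · obtain ⟨q, hq⟩ := hq
    have hne := hq.ne H hG
    by_cases hq1 : q = v1
    · subst hq1
      obtain ⟨a, ha⟩ := Finset.card_pos.1 (by omega : 0 < (L q).card)
      obtain ⟨b, hb, hba⟩ := Finset.exists_mem_ne (by omega : 1 < (L v2).card) a
      obtain ⟨φ, g1, g2, g3, g4⟩ := thomassen H hG hq.symm.1 h1 h2 hba.symm hL
      refine ⟨φ, g1, fun v => ?_⟩
      by_cases hv1 : v = q
      · rw [hv1, g2]; exact ha
      by_cases hv2 : v = v2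
      · rw [hv2, g3]; exact hb
      exact g4 v hv1 hv2
    · obtain ⟨f, hf⟩ := Infinite.exists_notMem_finset (L v1)
      have hqc := (hL q (by simp [hq1, hne.symm])).1
      obtain ⟨φ, g1, g2, g3, g4⟩ := ms_all H (E.card + 1) E B (Function.update L v1 (insert f (L v1))) v2 q
        {t | t.1 ∈ L v2 ∧ t.2 ∈ L q ∧ t.1 ≠ t.2} (.row v1 f) (by omega) hG hq 
        (by
          intro v hvx
          simp only [Set.mem_insert_iff, Set.mem_singleton_iff, not_or] at hvx
          by_cases hvv : v = v1
          · subst hvv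
            rw [Function.update_self, Finset.card_insert_of_notMem hf]
            exact ⟨by omega, fun h => absurd h1 h⟩
          · rw [Function.update_of_ne hvv]
            exact hL v (by simp [hvv, hvx.1]))
        (by
          obtain ⟨a, ha, b, hb, hab⟩ := Finset.one_lt_card.1 (by omega : 1 < (L v2).card)
          refine ⟨fun t ht => ht.2.2, fun x => ?_, fun x => ?_, fun x y => ?_⟩
          · obtain ⟨b, hb, hba⟩ := Finset.exists_mem_ne (by omega : 1 < (L v2).card) x
            obtain ⟨c, hc, hcb, -⟩ := pick2 hqc b b
            exact ⟨(b, c), ⟨hb, hc, hcb.symm⟩, hba⟩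
          · obtain ⟨c, hc, hcb, hcx⟩ := pick2 hqc a x
            exact ⟨(a, c), ⟨ha, hc, hcb.symm⟩, hcx⟩
          · obtain ⟨c, hc, d, hd, hcd, hca, hda⟩ := pickpair hqc a
            obtain ⟨e, he, heb, -⟩ := pick2 hqc b b
            by_contra hcon
            push Not at hcon
            have k1 := hcon (a, c) ⟨ha, hc, hca.symm⟩
            have k2 := hcon (a, d) ⟨ha, hd, hda.symm⟩
            have k3 := hcon (b, e) ⟨hb, he, heb.symm⟩
            clear hcon
            obtain ⟨x1, x2⟩ := x
            obtain ⟨y1, y2⟩ := y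
            simp only [ne_eq, Prod.mk.injEq] at k1 k2 k3
            omega) h1
      refine ⟨φ, g1, fun v => ?_⟩
      by_cases hv2 : v = v2
      · rw [hv2]; exact g3.1
      by_cases hvq : v = q
      · rw [hvq]; exact g3.2.1
      have := g2 v hv2 hvq
      by_cases hv1 : v = v1
      · subst hv1
        rw [Function.update_self] at this
        exact (Finset.mem_insert.1 this).resolve_left g4
      · rwa [Function.update_of_ne hv1] at this
  · push Not at hq
    obtain ⟨a, ha⟩ := Finset.card_pos.1 (by omega : 0 < (L v1).card)
    obtain ⟨c, hc⟩ := Finset.card_pos.1 (by omega : 0 < (L v2).card)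
    have hL' := OKL_del (E := E) (D := [v2]) (R := {c}) hL (by simp)
    obtain ⟨φ, g1, g2, g3⟩ := thomassen_v H a (H.delD hG [v2] (by simpa using h2)) (p := v1) (Or.inl h1)
      (hL'.fix {v2} {v1} (by rintro v (h | h); exacts [Or.inr h, Or.inl h]))
    refine ⟨_, glue_del (κ := fun _ => c) g1 ?_ ?_, ?_⟩
    · intro x y hx hy hxy
      simp only [List.mem_singleton] at hx hy
      subst hx hy
      exact absurd hxy (H.noloop hG _)
    · intro x y hx hy hxy
      simp only [List.mem_singleton] at hx hy
      subst hx
      have hyB : y ∉ B := fun h => hq y ⟨hxy, h2, h⟩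
      have := g3 y (fun h => hyB (h ▸ h1))
      rw [fixL_of_not_mem (by simpa using hy)] at this
      have := delL_not_mem hyB (by simp) hxy this
      simp at this
      exact fun h => this h.symm
    · intro v
      by_cases hv2 : v = v2
      · simp [hv2, hc]
      · simp only [List.mem_singleton, hv2, if_false]
        by_cases hv1 : v = v1
        · rw [hv1, g2]; exact ha
        · have := g3 v hv1
          rw [fixL_of_not_mem (by simpa using hv2)] at this
          exact delL_sub _ this

end Comb

section Topo

lemma exists_log {X : Type} [TopologicalSpace X] [ContractibleSpace X] [LocallyPathConnectedSpace X] {g : X → ℂ}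
    (hg : Continuous g) (h0 : ∀ x, g x ≠ 0) : ∃ f : X → ℂ, Continuous f ∧ ∀ x, Complex.exp (f x) = g x := by
  have hsc : IsSimplyConnected (univ : Set X) := by
    have : ContractibleSpace (univ : Set X) := (Homeomorph.Set.univ X).contractibleSpace
    exact (inferInstance : SimplyConnectedSpace (univ : Set X))
  obtain ⟨f, h1, h2⟩ := Complex.exists_continuousOn_eqOn_exp_comp hsc isOpen_univ hg.continuousOn
    (by rintro ⟨x, -, hx⟩; exact h0 x hx)
  exact ⟨f, continuousOn_univ.1 h1, fun x => h2 (mem_univ x)⟩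

lemma log_unique {f g : ℝ → ℂ} (hf : Continuous f) (hg : Continuous g) 
    (h : ∀ x, Complex.exp (f x) = Complex.exp (g x)) : f 1 - f 0 = g 1 - g 0 := by
  have key : ∀ x, ∃ n : ℤ, f x = g x + n * (2 * Real.pi * Complex.I) := fun x => Complex.exp_eq_exp_iff_exists_int.1 (h x)
  choose n hn using key
  have hpi : (2 * Real.pi * Complex.I : ℂ) ≠ 0 := Complex.two_pi_I_ne_zero
  have hc : Continuous n := by
    have h1 : Continuous (fun x => ((n x : ℤ) : ℂ)) := by
      have : (fun x => ((n x : ℤ) : ℂ)) = fun x => (f x - g x) / (2 * Real.pi * Complex.I) := by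
        funext x; rw [hn x]; field_simp; ring
      rw [this]; fun_prop
    have h2 : Continuous (fun x => ((n x : ℤ) : ℝ)) := by
      have h3 := Complex.continuous_re.comp h1
      simpa [Function.comp_def] using h3
    exact Int.isClosedEmbedding_coe_real.isEmbedding.continuous_iff.2 h2
  have := IsPreconnected.constant (isPreconnected_univ (α := ℝ)) hc.continuousOn (mem_univ 1) (mem_univ 0)
  rw [hn 1, hn 0, this]; ring

open Classical in
/-- variation of the logarithm along a curve. -/
noncomputable def dlog (g : ℝ → ℂ) : ℂ :=
  if h : ∃ f : ℝ → ℂ, Continuous f ∧ ∀ x, Complex.exp (f x) = g x then h.choose 1 - h.choose 0 else 0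

lemma dlog_eq {g f : ℝ → ℂ} (hf : Continuous f) (h : ∀ x, Complex.exp (f x) = g x) : dlog g = f 1 - f 0 := by
  have hex : ∃ f : ℝ → ℂ, Continuous f ∧ ∀ x, Complex.exp (f x) = g x := ⟨f, hf, h⟩
  rw [dlog, dif_pos hex]
  exact log_unique hex.choose_spec.1 hf (fun x => by rw [hex.choose_spec.2, h])

lemma exp_dlog {g : ℝ → ℂ} (hg : Continuous g) (h0 : ∀ x, g x ≠ 0) : Complex.exp (dlog g) = g 1 / g 0 := by
  obtain ⟨f, h1, h2⟩ := exists_log hg h0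
  rw [dlog_eq h1 h2, Complex.exp_sub, h2, h2]

lemma dlog_neg {g : ℝ → ℂ} (hg : Continuous g) (h0 : ∀ x, g x ≠ 0) : dlog (fun x => - g x) = dlog g := by
  obtain ⟨f, h1, h2⟩ := exists_log hg h0
  rw [dlog_eq h1 h2, dlog_eq (f := fun x => f x + Real.pi * Complex.I) (by fun_prop)
    (fun x => by rw [Complex.exp_add, Complex.exp_pi_mul_I, h2]; ring)]
  ring

noncomputable def DD (γ : ℝ → ℂ) (p : ℂ) : ℂ := dlog (fun t => γ t - p)

lemma square {γ η : ℝ → ℂ} (hγ : Continuous γ) (hη : Continuous η) (h : ∀ s t, γ s ≠ η t) :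
    DD γ (η 0) + DD η (γ 1) = DD η (γ 0) + DD γ (η 1) := by
  obtain ⟨f, h1, h2⟩ := exists_log (X := ℝ × ℝ) (g := fun p => γ p.1 - η p.2) (by fun_prop) 
    (fun p => sub_ne_zero.2 (h _ _))
  have key : ∀ a, DD η (γ a) = f (a, 1) - f (a, 0) := by
    intro a
    have e : (fun t => η t - γ a) = fun t => - (γ a - η t) := by funext t; ring
    rw [DD, e, dlog_neg (by fun_prop) (fun t => sub_ne_zero.2 (h _ _))]
    exact dlog_eq (f := fun t => f (a, t)) (by fun_prop) (fun t => h2 (a, t))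
  have key' : ∀ b, DD γ (η b) = f (1, b) - f (0, b) := by
    intro b
    exact dlog_eq (f := fun t => f (t, b)) (by fun_prop) (fun t => h2 (t, b))
  rw [key, key, key', key']; ring

lemma exp_DD {γ : ℝ → ℂ} (hγ : Continuous γ) {p : ℂ} (h : ∀ t, γ t ≠ p) :
    Complex.exp (DD γ p) = (γ 1 - p) / (γ 0 - p) := exp_dlog (by fun_prop) (fun t => sub_ne_zero.2 (h t))

/-- a log of the quotient on a compact set -/
lemma lemE {K C : Set ℂ} (hK : IsCompact K) (hC : IsPreconnected C) (hd : Disjoint C K) {p q : ℂ} (hp : p ∈ C)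
    (hq : q ∈ C) : ∃ f : ℂ → ℂ, ContinuousOn f K ∧ ∀ w ∈ K, Complex.exp (f w) * (w - q) = w - p := by
  refine hC.induction₂ (fun p q => ∃ f : ℂ → ℂ, ContinuousOn f K ∧ ∀ w ∈ K, Complex.exp (f w) * (w - q) = w - p) ?_ ?_ ?_ hp hq
  · intro p hp
    have hpK : p ∉ K := fun h => Set.disjoint_left.1 hd hp h
    obtain ⟨ε, hε, hb⟩ := Metric.isOpen_iff.1 hK.isClosed.isOpen_compl p hpK
    refine Filter.eventually_iff_exists_mem.2 ⟨Metric.ball p ε, mem_nhdsWithin_of_mem_nhds (Metric.ball_mem_nhds _ hε), ?_⟩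
    intro q hq
    refine ⟨fun w => - Complex.log ((w - q) / (w - p)), ?_, ?_⟩
    · refine ContinuousOn.neg (ContinuousOn.clog (ContinuousOn.div (by fun_prop) (by fun_prop) ?_) ?_)
      · intro w hw h; rw [sub_eq_zero] at h; exact hpK (h ▸ hw)
      · intro w hw
        have hwp : w - p ≠ 0 := fun h => by rw [sub_eq_zero] at h; exact hpK (h ▸ hw)
        have hdist : ε ≤ ‖w - p‖ := by
          by_contra hlt
          exact hb (by rw [Metric.mem_ball, dist_eq_norm]; push Not at hlt; exact hlt) hw
        have e : (w - q) / (w - p) = 1 + (p - q) / (w - p) := by field_simp; ring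
        rw [e]
        apply Complex.mem_slitPlane_of_norm_lt_one
        rw [norm_div, div_lt_one (norm_pos_iff.2 hwp)]
        have : ‖p - q‖ < ε := by rw [← dist_eq_norm, dist_comm]; exact hq
        linarith
    · intro w hw
      have hwp : w - p ≠ 0 := fun h => by rw [sub_eq_zero] at h; exact hpK (h ▸ hw)
      have hwq : w - q ≠ 0 := fun h => by rw [sub_eq_zero] at h; exact hb hq (h ▸ hw)
      rw [Complex.exp_neg, Complex.exp_log (div_ne_zero hwq hwp)]
      field_simp
  · rintro x y z hx hy hz ⟨f, f1, f2⟩ ⟨g, g1, g2⟩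
    refine ⟨fun w => f w + g w, f1.add g1, fun w hw => ?_⟩
    rw [Complex.exp_add, mul_assoc, g2 w hw, f2 w hw]
  · rintro x y hx hy ⟨f, f1, f2⟩
    refine ⟨fun w => - f w, f1.neg, fun w hw => ?_⟩
    rw [← f2 w hw, ← mul_assoc, ← Complex.exp_add]; simp

lemma DD_diff {γ : ℝ → ℂ} (hγ : Continuous γ) {p q : ℂ} (hp : ∀ t, γ t ≠ p) (hq : ∀ t, γ t ≠ q) {f : ℂ → ℂ} {K : Set ℂ}
    (hf : ContinuousOn f K) (hK : ∀ t, γ t ∈ K) (h : ∀ w ∈ K, Complex.exp (f w) * (w - q) = w - p) :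
    DD γ p - DD γ q = f (γ 1) - f (γ 0) := by
  obtain ⟨g, g1, g2⟩ := exists_log (X := ℝ) (g := fun t => γ t - q) (by fun_prop) (fun t => sub_ne_zero.2 (hq t))
  have hfc : Continuous (fun t => f (γ t)) := hf.comp_continuous hγ hK
  have e1 : DD γ q = g 1 - g 0 := dlog_eq g1 g2
  have e2 : DD γ p = (f (γ 1) + g 1) - (f (γ 0) + g 0) := 
    dlog_eq (f := fun t => f (γ t) + g t) (hfc.add g1) (fun t => by rw [Complex.exp_add, g2, h _ (hK t)])
  rw [e1, e2]; ring

lemma T4 {x z y1 y2 y3 : ℂ} {e1 e2 e3 r1 r2 r3 a : ℝ → ℂ} 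
    (ce1 : Continuous e1) (ce2 : Continuous e2) (ce3 : Continuous e3) 
    (cr1 : Continuous r1) (cr2 : Continuous r2) (cr3 : Continuous r3) (ca : Continuous a)
    (he10 : e1 0 = x) (he11 : e1 1 = y1) (he20 : e2 0 = x) (he21 : e2 1 = y2) (he30 : e3 0 = x) (he31 : e3 1 = y3)
    (hr10 : r1 0 = y1) (hr11 : r1 1 = z) (hr20 : r2 0 = y2) (hr21 : r2 1 = z) (hr30 : r3 0 = y3) (hr31 : r3 1 = z)
    (ha0 : a 0 = x) (ha1 : a 1 = z)
    (h12 : ∀ s t, e1 s ≠ r2 t) (h13 : ∀ s t, e1 s ≠ r3 t) (h21 : ∀ s t, e2 s ≠ r1 t) 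
    (h23 : ∀ s t, e2 s ≠ r3 t) (h31 : ∀ s t, e3 s ≠ r1 t) (h32 : ∀ s t, e3 s ≠ r2 t)
    (hy1 : ∀ t, a t ≠ y1) (hy2 : ∀ t, a t ≠ y2) (hy3 : ∀ t, a t ≠ y3)
    {K1 K2 K3 C1 C2 C3 : Set ℂ} (hK1 : IsCompact K1) (hK2 : IsCompact K2) (hK3 : IsCompact K3)
    (hC1 : IsPreconnected C1) (hC2 : IsPreconnected C2) (hC3 : IsPreconnected C3)
    (hd1 : Disjoint C1 K1) (hd2 : Disjoint C2 K2) (hd3 : Disjoint C3 K3)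
    (he1 : ∀ t, e1 t ∈ K1) (hr1 : ∀ t, r1 t ∈ K1) (haK1 : ∀ t, a t ∈ K1)
    (he2 : ∀ t, e2 t ∈ K2) (hr2 : ∀ t, r2 t ∈ K2) (haK2 : ∀ t, a t ∈ K2)
    (he3 : ∀ t, e3 t ∈ K3) (hr3 : ∀ t, r3 t ∈ K3) (haK3 : ∀ t, a t ∈ K3)
    (m12 : y2 ∈ C1) (m13 : y3 ∈ C1) (m21 : y1 ∈ C2) (m23 : y3 ∈ C2) (m31 : y1 ∈ C3) (m32 : y2 ∈ C3) : False := by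
  have s12 := square ce1 cr2 h12
  have s13 := square ce1 cr3 h13
  have s21 := square ce2 cr1 h21
  have s23 := square ce2 cr3 h23
  have s31 := square ce3 cr1 h31
  have s32 := square ce3 cr2 h32
  simp only [he10, he11, he20, he21, he30, he31, hr10, hr11, hr20, hr21, hr30, hr31] at s12 s13 s21 s23 s31 s32
  have n : ∀ {γ : ℝ → ℂ} {K C : Set ℂ} {p}, (∀ t, γ t ∈ K) → Disjoint C K → p ∈ C → ∀ t, γ t ≠ p := by
    intro γ K C p h1 h2 h3 t h
    exact Set.disjoint_left.1 h2 h3 (h ▸ h1 t)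
  obtain ⟨f1, k1, l1⟩ := lemE hK1 hC1 hd1 m12 m13
  obtain ⟨f2, k2, l2⟩ := lemE hK2 hC2 hd2 m21 m23
  obtain ⟨f3, k3, l3⟩ := lemE hK3 hC3 hd3 m31 m32
  have u1 := DD_diff ce1 (n he1 hd1 m12) (n he1 hd1 m13) k1 he1 l1
  have u2 := DD_diff cr1 (n hr1 hd1 m12) (n hr1 hd1 m13) k1 hr1 l1
  have u3 := DD_diff ca hy2 hy3 k1 haK1 l1
  have v1 := DD_diff ce2 (n he2 hd2 m21) (n he2 hd2 m23) k2 he2 l2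
  have v2 := DD_diff cr2 (n hr2 hd2 m21) (n hr2 hd2 m23) k2 hr2 l2
  have v3 := DD_diff ca hy1 hy3 k2 haK2 l2
  have w1 := DD_diff ce3 (n he3 hd3 m31) (n he3 hd3 m32) k3 he3 l3
  have w2 := DD_diff cr3 (n hr3 hd3 m31) (n hr3 hd3 m32) k3 hr3 l3
  have w3 := DD_diff ca hy1 hy2 k3 haK3 l3
  simp only [he10, he11, he20, he21, he30, he31, hr10, hr11, hr20, hr21, hr30, hr31, ha0, ha1] at u1 u2 u3 v1 v2 v3 w1 w2 w3
  have nx2 : ∀ t, r2 t ≠ x := fun t h => h12 0 t (by rw [he10, h])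
  have nz2 : ∀ t, e2 t ≠ z := fun t h => h21 t 1 (by rw [hr11, h])
  have main : DD r2 x + DD e2 z = DD a y2 - DD a y3 + (DD e2 y3 + DD r2 y3) := by
    linear_combination (1/2 : ℂ) * (u1 + u2 - u3 + (v1 + v2 - v3) - (w1 + w2 - w3) - s12 - s21 + s13 + s31 - s23 - s32)
  have hexp := congrArg Complex.exp main
  rw [Complex.exp_add, Complex.exp_add, Complex.exp_sub, Complex.exp_add, exp_DD cr2 nx2, exp_DD ce2 nz2,
    exp_DD ca hy2, exp_DD ca hy3, exp_DD ce2 (n he2 hd2 m23), exp_DD cr2 (n hr2 hd2 m23)] at hexp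
  simp only [he20, he21, hr20, hr21, ha0, ha1] at hexp
  have d1 : y2 - x ≠ 0 := sub_ne_zero.2 (by rw [← hr20]; exact nx2 0)
  have d2 : x - z ≠ 0 := sub_ne_zero.2 (by rw [← he20]; exact nz2 0)
  have d3 : x - y2 ≠ 0 := sub_ne_zero.2 (by rw [← ha0]; exact hy2 0)
  have d4 : x - y3 ≠ 0 := sub_ne_zero.2 (by rw [← ha0]; exact hy3 0)
  have d5 : z - y3 ≠ 0 := sub_ne_zero.2 (by rw [← ha1]; exact hy3 1)
  have d6 : y2 - y3 ≠ 0 := sub_ne_zero.2 (by rw [← he21]; exact n he2 hd2 m23 1)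
  have d7 : z - y2 ≠ 0 := sub_ne_zero.2 (by rw [← ha1]; exact hy2 1)
  field_simp at hexp
  have h2 : (2 : ℂ) * ((z - x) * (z - y2) * (x - y2)) = 0 := by linear_combination -hexp
  have d8 : z - x ≠ 0 := sub_ne_zero.2 (fun h => d2 (by rw [h]; ring))
  exact absurd h2 (by simp [d8, d7, d3])

end Topo

section Plane
open Classical
variable {V : Type u}

/-- union of the arcs of the edges in `E` -/
def imE (G : PlaneGraph V) (E : Finset (Sym2 V)) : Set (ℝ × ℝ) := ⋃ e ∈ E, G.arc e

/-- all elements of `E` are edges of `G` -/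
def EdgesOf (G : PlaneGraph V) (E : Finset (Sym2 V)) : Prop := ∀ u v, s(u, v) ∈ E → G.Adj u v

lemma mem_imE {G : PlaneGraph V} {E : Finset (Sym2 V)} {p : ℝ × ℝ} :
    p ∈ imE G E ↔ ∃ u v, s(u, v) ∈ E ∧ p ∈ G.arc s(u, v) := by
  simp only [imE, mem_iUnion]
  constructor
  · rintro ⟨e, he, hp⟩
    induction e using Sym2.ind with
    | h u v => exact ⟨u, v, he, hp⟩
  · rintro ⟨u, v, he, hp⟩; exact ⟨_, he, hp⟩

lemma arc_compact {G : PlaneGraph V} {u v : V} (h : G.Adj u v) : IsCompact (G.arc s(u, v)) := by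
  obtain ⟨f, hf, -, hi, -, -⟩ := G.arc_arc u v h
  rw [← hi]; exact isCompact_Icc.image_of_continuousOn hf

lemma imE_closed {G : PlaneGraph V} {E : Finset (Sym2 V)} (h : EdgesOf G E) : IsClosed (imE G E) := by
  refine (Finset.isCompact_biUnion E (fun e he => ?_)).isClosed
  induction e using Sym2.ind with
  | h u v => exact arc_compact (h u v he)

/-- `Z` is an open connected set avoiding the edges in `E` and touching all vertices of `B`. -/
def GoodP (G : PlaneGraph V) (E : Finset (Sym2 V)) (B : Set V) : Prop :=
  EdgesOf G E ∧ B ⊆ G.verts ∧ ∃ Z : Set (ℝ × ℝ), IsOpen Z ∧ IsConnected Z ∧ Disjoint Z (imE G E) ∧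
    ∀ b ∈ B, G.pos b ∈ closure Z

lemma adj_mem' {G : PlaneGraph V} {u v : V} (h : G.Adj u v) : v ∈ G.verts := G.adj_mem v u (G.adj_symm u v h)

lemma imE_mono {G : PlaneGraph V} {E E' : Finset (Sym2 V)} (h : E' ⊆ E) : imE G E' ⊆ imE G E := by
  intro p hp; rw [mem_imE] at *
  obtain ⟨u, v, h1, h2⟩ := hp; exact ⟨u, v, h h1, h2⟩

lemma closure_of_Ioo {f : ℝ → ℝ × ℝ} (hf : ContinuousOn f (Icc 0 1)) {Z : Set (ℝ × ℝ)} (h : f '' Ioo 0 1 ⊆ Z) {t : ℝ}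
    (ht : t ∈ Icc (0 : ℝ) 1) : f t ∈ closure Z := by
  have h1 : Icc (0 : ℝ) 1 = closure (Ioo 0 1) := (closure_Ioo (by norm_num)).symm
  rw [h1] at hf ht
  exact closure_mono h (hf.image_closure (mem_image_of_mem f ht))

lemma goodP_del {G : PlaneGraph V} {E : Finset (Sym2 V)} {B : Set V} {x : V} (h : GoodP G E B) (hx : x ∈ B) :
    GoodP G (E.filter (fun e => x ∉ e)) (B ∪ {n | s(x, n) ∈ E}) := by
  obtain ⟨hE, hB, Z, Zo, Zc, Zd, Zb⟩ := h
  set E' := E.filter (fun e => x ∉ e) with hE'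
  have hsub : E' ⊆ E := Finset.filter_subset _ _
  have hE1 : EdgesOf G E' := fun u v h => hE u v (hsub h)
  obtain ⟨z, hz⟩ := Zc.nonempty
  have hZ' : Z ⊆ (imE G E')ᶜ := fun p hp hq => Set.disjoint_left.1 Zd hp (imE_mono hsub hq)
  have hZsub : Z ⊆ connectedComponentIn (imE G E')ᶜ z := Zc.isPreconnected.subset_connectedComponentIn hz hZ'
  refine ⟨hE1, ?_, connectedComponentIn (imE G E')ᶜ z, ?_, ?_, ?_, ?_⟩
  · rintro b (hb | hb)
    · exact hB hb
    · exact adj_mem' (hE x b hb)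
  · exact (imE_closed hE1).isOpen_compl.connectedComponentIn
  · exact isConnected_connectedComponentIn_iff.2 (hZ' hz)
  · exact Set.disjoint_left.2 fun p hp => connectedComponentIn_subset _ _ hp
  · rintro n (hn | hn)
    · exact closure_mono hZsub (Zb n hn)
    · have hn : s(x, n) ∈ E := hn
      obtain ⟨f, fc, fi, fim, f0, f1⟩ := G.arc_arc x n (hE x n hn)
      have hco : IsPreconnected ((Z ∪ {G.pos x}) ∪ f '' Ico 0 1) := by
        refine IsPreconnected.union (G.pos x) (by simp) ⟨0, by simp, f0⟩ ?_ ?_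
        · refine Zc.isPreconnected.subset_closure subset_union_left ?_
          rintro p (hp | hp)
          · exact subset_closure hp
          · rw [hp]; exact Zb x hx
        · exact isPreconnected_Ico.image f (fc.mono Ico_subset_Icc_self)
      have hav : f '' Ico 0 1 ⊆ (imE G E')ᶜ := by
        rintro _ ⟨t, ht, rfl⟩ hp
        obtain ⟨a, b, hab, hp⟩ := mem_imE.1 hp
        rw [hE', Finset.mem_filter] at hab
        have hne : s(x, n) ≠ s(a, b) := by
          intro he; apply hab.2; rw [← he]; simp
        have hm := G.arc_meet x n a b (hE x n hn) (hE a b hab.1) hne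
          ⟨by rw [← fim]; exact mem_image_of_mem f (Ico_subset_Icc_self ht), hp⟩
        obtain ⟨w, ⟨hw1, hw2⟩, hw⟩ := hm
        have hwx : w ≠ x := by
          rintro rfl; apply hab.2; rw [Sym2.mem_iff]; simpa using hw2
        have hwn : w = n := by
          rcases hw1 with h | h
          · exact absurd h hwx
          · exact h
        rw [hwn, ← f1] at hw
        have := fi (by simp) (Ico_subset_Icc_self ht) hw
        rw [← this] at ht; exact lt_irrefl _ ht.2
      have hx' : G.pos x ∈ (imE G E')ᶜ := hav ⟨0, by simp, f0⟩
      have hs : ((Z ∪ {G.pos x}) ∪ f '' Ico 0 1) ⊆ connectedComponentIn (imE G E')ᶜ z := by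
        refine hco.subset_connectedComponentIn (Or.inl (Or.inl hz)) ?_
        rintro p ((hp | hp) | hp)
        · exact hZ' hp
        · rw [hp]; exact hx'
        · exact hav hp
      rw [← f1]
      refine closure_of_Ioo fc (subset_trans (image_mono Ioo_subset_Ico_self) (subset_trans subset_union_right hs)) (by simp)

lemma goodP_edge {G : PlaneGraph V} {E : Finset (Sym2 V)} {B : Set V} {u v : V} (h : GoodP G E B) (huv : s(u, v) ∈ E) :
    GoodP G (E.erase s(u, v)) {u, v} := by
  obtain ⟨hE, -, -⟩ := h
  set E' := E.erase s(u, v) with hE'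
  have hsub : E' ⊆ E := Finset.erase_subset _ _
  have hE1 : EdgesOf G E' := fun u v h => hE u v (hsub h)
  have hadj := hE u v huv
  obtain ⟨f, fc, fi, fim, f0, f1⟩ := G.arc_arc u v hadj
  have hav : f '' Ioo 0 1 ⊆ (imE G E')ᶜ := by
    rintro _ ⟨t, ht, rfl⟩ hp
    obtain ⟨a, b, hab, hp⟩ := mem_imE.1 hp
    rw [hE', Finset.mem_erase] at hab
    have hm := G.arc_meet u v a b hadj (hE a b hab.2) hab.1.symm
      ⟨by rw [← fim]; exact mem_image_of_mem f (Ioo_subset_Icc_self ht), hp⟩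
    obtain ⟨w, ⟨hw1, -⟩, hw⟩ := hm
    rcases hw1 with h | h
    · rw [h, ← f0] at hw
      have := fi (by simp) (Ioo_subset_Icc_self ht) hw
      rw [← this] at ht; exact lt_irrefl _ ht.1
    · have h : w = v := h
      rw [h, ← f1] at hw
      have := fi (by simp) (Ioo_subset_Icc_self ht) hw
      rw [← this] at ht; exact lt_irrefl _ ht.2
  have hmid : f (1/2) ∈ f '' Ioo 0 1 := ⟨1/2, by norm_num, rfl⟩
  have hs : f '' Ioo 0 1 ⊆ connectedComponentIn (imE G E')ᶜ (f (1/2)) :=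
    (isPreconnected_Ioo.image f (fc.mono Ioo_subset_Icc_self)).subset_connectedComponentIn hmid hav
  refine ⟨hE1, ?_, connectedComponentIn (imE G E')ᶜ (f (1/2)), ?_, ?_, ?_, ?_⟩
  · rintro b (rfl | hb)
    · exact G.adj_mem _ _ hadj
    · have hb : b = v := hb
      rw [hb]; exact adj_mem' hadj
  · exact (imE_closed hE1).isOpen_compl.connectedComponentIn
  · exact isConnected_connectedComponentIn_iff.2 (hav hmid)
  · exact Set.disjoint_left.2 fun p hp => connectedComponentIn_subset _ _ hp
  · rintro b (rfl | hb)
    · rw [← f0]; exact closure_of_Ioo fc hs (by simp)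
    · have hb : b = v := hb
      rw [hb, ← f1]; exact closure_of_Ioo fc hs (by simp)

/-- arcs of edges inside `S` -/
def arcsIn (G : PlaneGraph V) (E : Finset (Sym2 V)) (S : Set V) : Set (ℝ × ℝ) :=
  {p | ∃ a b, s(a, b) ∈ E ∧ a ∈ S ∧ b ∈ S ∧ p ∈ G.arc s(a, b)}

/-- the part of the drawing not touching `w` -/
def farFrom (G : PlaneGraph V) (E : Finset (Sym2 V)) (w : V) : Set (ℝ × ℝ) :=
  G.pos '' (G.verts \ {w}) ∪ imE G (E.filter (fun e => w ∉ e))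

lemma arc_ends {G : PlaneGraph V} {u v : V} (h : G.Adj u v) : G.pos u ∈ G.arc s(u, v) ∧ G.pos v ∈ G.arc s(u, v) := by
  obtain ⟨f, -, -, hi, f0, f1⟩ := G.arc_arc u v h
  rw [← hi, ← f0, ← f1]
  exact ⟨mem_image_of_mem f (by simp), mem_image_of_mem f (by simp)⟩

lemma farFrom_closed {G : PlaneGraph V} {E : Finset (Sym2 V)} (hE : EdgesOf G E) (w : V) : IsClosed (farFrom G E w) := by
  refine IsClosed.union ?_ (imE_closed fun u v h => hE u v (Finset.filter_subset _ _ h))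
  exact ((G.finite_verts.subset sdiff_subset).image _).isClosed

lemma notMem_farFrom {G : PlaneGraph V} {E : Finset (Sym2 V)} (hE : EdgesOf G E) {w : V} (hw : w ∈ G.verts) :
    G.pos w ∉ farFrom G E w := by
  rintro (⟨v, hv, he⟩ | h)
  · exact hv.2 (G.pos_injOn hv.1 hw he)
  · obtain ⟨a, b, hab, hp⟩ := mem_imE.1 h
    rw [Finset.mem_filter] at hab
    apply hab.2; rw [Sym2.mem_iff]
    exact G.arc_avoid a b (hE a b hab.1) w hw hp

lemma arcsIn_far {G : PlaneGraph V} {E : Finset (Sym2 V)} {S : Set V} {w : V} (hw : w ∉ S) :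
    arcsIn G E S ⊆ farFrom G E w := by
  rintro p ⟨a, b, hab, ha, hb, hp⟩
  refine Or.inr (mem_imE.2 ⟨a, b, Finset.mem_filter.2 ⟨hab, ?_⟩, hp⟩)
  rw [Sym2.mem_iff]; rintro (rfl | rfl) <;> exact hw (by assumption)

lemma arcsIn_disj {G : PlaneGraph V} {E : Finset (Sym2 V)} (hE : EdgesOf G E) {S : Set V} {p : ℝ × ℝ} (h1 : p ∈ arcsIn G E S)
    (h2 : p ∈ arcsIn G E Sᶜ) : False := by
  obtain ⟨a, b, hab, ha, hb, hp⟩ := h1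
  obtain ⟨c, d, hcd, hc, hd, hq⟩ := h2
  have hne : s(a, b) ≠ s(c, d) := by
    intro he
    have : a ∈ s(c, d) := by rw [← he]; simp
    rcases Sym2.mem_iff.1 this with rfl | rfl
    · exact hc ha
    · exact hd ha
  obtain ⟨w, ⟨hw1, hw2⟩, -⟩ := G.arc_meet a b c d (hE _ _ hab) (hE _ _ hcd) hne ⟨hp, hq⟩
  have k1 : w ∈ S := by
    rcases hw1 with h | h
    · rw [h]; exact ha
    · rw [show w = b from h]; exact hb
  have k2 : w ∈ Sᶜ := by
    rcases hw2 with h | h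
    · rw [h]; exact hc
    · rw [show w = d from h]; exact hd
  exact k2 k1

lemma arc_joined {G : PlaneGraph V} {u v : V} (h : G.Adj u v) : JoinedIn (G.arc s(u, v)) (G.pos u) (G.pos v) := by
  obtain ⟨f, fc, -, fim, f0, f1⟩ := G.arc_arc u v h
  have hp : IsPathConnected (Icc (0:ℝ) 1) := (convex_Icc (0:ℝ) 1).isPathConnected ⟨0, by simp⟩
  have h2 := hp.image' fc
  rw [fim] at h2
  exact h2.joinedIn _ (arc_ends h).1 _ (arc_ends h).2

lemma rs_joined {G : PlaneGraph V} {E : Finset (Sym2 V)} (hE : EdgesOf G E) {S : Set V} {u v : V} (h : RS E S u v) 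
    (hne : u ≠ v) : JoinedIn (arcsIn G E S) (G.pos u) (G.pos v) := by
  have key : u = v ∨ JoinedIn (arcsIn G E S) (G.pos u) (G.pos v) := by
    unfold RS at h
    induction h with
    | refl => exact Or.inl rfl
    | @tail b c _ hbc ih =>
      right
      have h1 : JoinedIn (arcsIn G E S) (G.pos b) (G.pos c) :=
        (arc_joined (hE _ _ hbc.1)).mono (fun p hp => ⟨b, c, hbc.1, hbc.2.1, hbc.2.2, hp⟩)
      by_cases hub : u = b
      · rw [hub]; exact h1
      · exact (((ih hub).resolve_left hub)).trans h1
  exact key.resolve_left hne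

lemma tail_joined {Z F : Set (ℝ × ℝ)} (Zo : IsOpen Z) (Zc : IsConnected Z) (hF : IsClosed F) {w z : ℝ × ℝ} (hw : w ∉ F)
    (hwZ : w ∈ closure Z) (hz : z ∈ Z) : JoinedIn (Z ∪ Fᶜ) w z := by
  obtain ⟨ε, hε, hb⟩ := Metric.isOpen_iff.1 hF.isOpen_compl w hw
  obtain ⟨q, hq, hd⟩ := Metric.mem_closure_iff.1 hwZ ε hε
  have h1 : JoinedIn (Z ∪ Fᶜ) w q := by
    refine JoinedIn.mono (U := Metric.ball w ε) ?_ (subset_trans hb subset_union_right)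
    refine ((convex_ball w ε).isPathConnected ⟨w, Metric.mem_ball_self hε⟩).joinedIn _ (Metric.mem_ball_self hε) _ ?_
    rw [Metric.mem_ball, dist_comm]; exact hd
  have h2 : JoinedIn (Z ∪ Fᶜ) q z :=
    ((Zo.isConnected_iff_isPathConnected.1 Zc).joinedIn q hq z hz).mono subset_union_left
  exact h1.trans h2

/-- the plane as the complex numbers -/
noncomputable def toC (p : ℝ × ℝ) : ℂ := Complex.equivRealProdCLM.symm p

lemma toC_inj {p q : ℝ × ℝ} (h : toC p = toC q) : p = q := Complex.equivRealProdCLM.symm.injective h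

lemma toC_cont : Continuous toC := Complex.equivRealProdCLM.symm.continuous

lemma joined_curve {S : Set (ℝ × ℝ)} {a b : ℝ × ℝ} (h : JoinedIn S a b) : ∃ g : ℝ → ℂ, Continuous g ∧ g 0 = toC a ∧
    g 1 = toC b ∧ (∀ t, ∃ p ∈ S, g t = toC p) ∧ IsCompact (range g) := by
  obtain ⟨γ, hγ⟩ := h
  refine ⟨fun t => toC (γ.extend t), toC_cont.comp γ.continuous_extend, by simp, by simp, ?_, ?_⟩
  · intro t
    refine ⟨γ.extend t, ?_, rfl⟩
    have : γ.extend t ∈ range γ := by rw [← γ.extend_range]; exact mem_range_self t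
    obtain ⟨s, hs⟩ := this
    rw [← hs]; exact hγ s
  · have : range (fun t => toC (γ.extend t)) = toC '' range γ := by
      rw [← γ.extend_range, ← range_comp]; rfl
    rw [this]
    exact (isCompact_range γ.continuous).image toC_cont

lemma goodP_sep {G : PlaneGraph V} {E : Finset (Sym2 V)} {B : Set V} {x y1 y2 y3 : V} (h : GoodP G E B) (hx : x ∈ B)
    (hy1 : y1 ∈ B) (hy2 : y2 ∈ B) (hy3 : y3 ∈ B) (S1 S2 S3 : Set V) (x1 : x ∈ S1) (x2 : x ∈ S2) (x3 : x ∈ S3)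
    (m1 : y1 ∈ S1) (m2 : y2 ∈ S2) (m3 : y3 ∈ S3) (n21 : y2 ∉ S1) (n31 : y3 ∉ S1) (n12 : y1 ∉ S2) (n32 : y3 ∉ S2) 
    (n13 : y1 ∉ S3) (n23 : y2 ∉ S3) (r1 : RS E S1 x y1) (r2 : RS E S2 x y2) (r3 : RS E S3 x y3)
    (q3 : RS E S3ᶜ y1 y2) (q2 : RS E S2ᶜ y1 y3) (q1 : RS E S1ᶜ y2 y3) : False := by
  obtain ⟨hE, hB, Z, Zo, Zc, Zd, Zb⟩ := h
  obtain ⟨z, hz⟩ := Zc.nonempty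
  have d1 : x ≠ y1 := fun h => n12 (h ▸ x2)
  have d2 : x ≠ y2 := fun h => n21 (h ▸ x1)
  have d3 : x ≠ y3 := fun h => n31 (h ▸ x1)
  have d12 : y1 ≠ y2 := fun h => n21 (h ▸ m1)
  have d13 : y1 ≠ y3 := fun h => n31 (h ▸ m1)
  have d23 : y2 ≠ y3 := fun h => n32 (h ▸ m2)
  have arcZ : ∀ {S : Set V} {p}, p ∈ arcsIn G E S → p ∉ Z := by
    rintro S p ⟨a, b, hab, -, -, hp⟩ hpZ
    exact Set.disjoint_left.1 Zd hpZ (mem_imE.2 ⟨a, b, hab, hp⟩)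
  have tl : ∀ {w}, w ∈ B → ∃ g : ℝ → ℂ, Continuous g ∧ g 0 = toC (G.pos w) ∧
      g 1 = toC z ∧ (∀ t, ∃ p ∈ Z ∪ (farFrom G E w)ᶜ, g t = toC p) ∧ IsCompact (range g) := fun {w} hw =>
    joined_curve (tail_joined Zo Zc (farFrom_closed hE w) (notMem_farFrom hE (hB hw)) (Zb w hw) hz)
  have wk : ∀ {S : Set V} {u v}, RS E S u v → u ≠ v → ∃ g : ℝ → ℂ, Continuous g ∧ g 0 = toC (G.pos u) ∧
      g 1 = toC (G.pos v) ∧ (∀ t, ∃ p ∈ arcsIn G E S, g t = toC p) ∧ IsCompact (range g) := fun hr hne =>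
    joined_curve (rs_joined hE hr hne)
  obtain ⟨e1, ce1, e10, e11, me1, ke1⟩ := wk r1 d1
  obtain ⟨e2, ce2, e20, e21, me2, ke2⟩ := wk r2 d2
  obtain ⟨e3, ce3, e30, e31, me3, ke3⟩ := wk r3 d3
  obtain ⟨g1, cg1, g10, g11, mg1, kg1⟩ := tl hy1
  obtain ⟨g2, cg2, g20, g21, mg2, kg2⟩ := tl hy2
  obtain ⟨g3, cg3, g30, g31, mg3, kg3⟩ := tl hy3
  obtain ⟨a, ca, a0, a1, ma, ka⟩ := tl hx
  obtain ⟨c1, cc1, c10, c11, mc1, -⟩ := wk q1 d23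
  obtain ⟨c2, cc2, c20, c21, mc2, -⟩ := wk q2 d13
  obtain ⟨c3, cc3, c30, c31, mc3, -⟩ := wk q3 d12
  -- a curve in arcs inside `S` avoids a tail at `w ∉ S`
  have av : ∀ {S : Set V} {w : V} {e g : ℝ → ℂ}, w ∉ S → (∀ t, ∃ p ∈ arcsIn G E S, e t = toC p) → 
      (∀ t, ∃ p ∈ Z ∪ (farFrom G E w)ᶜ, g t = toC p) → ∀ s t, e s ≠ g t := by
    intro S w e g hw he hg s t heq
    obtain ⟨p, hp, hp'⟩ := he s
    obtain ⟨q, hq, hq'⟩ := hg t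
    have hpq : p = q := toC_inj (by rw [← hp', ← hq', heq])
    rw [← hpq] at hq
    rcases hq with hq | hq
    · exact arcZ hp hq
    · exact hq (arcsIn_far hw hp)
  have av2 : ∀ {S : Set V} {e g : ℝ → ℂ}, (∀ t, ∃ p ∈ arcsIn G E S, e t = toC p) → 
      (∀ t, ∃ p ∈ arcsIn G E Sᶜ, g t = toC p) → ∀ s t, e s ≠ g t := by
    intro S e g he hg s t heq
    obtain ⟨p, hp, hp'⟩ := he s
    obtain ⟨q, hq, hq'⟩ := hg t
    have hpq : p = q := toC_inj (by rw [← hp', ← hq', heq])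
    rw [← hpq] at hq
    exact arcsIn_disj hE hp hq
  have aY : ∀ {y}, y ∈ B → x ≠ y → ∀ S, RS E S x y → ∀ t, a t ≠ toC (G.pos y) := by
    intro y hy hne S hr t heq
    obtain ⟨q, hq, hq'⟩ := ma t
    have hpq : q = G.pos y := toC_inj (by rw [← hq', heq])
    rw [hpq] at hq
    rcases hq with hq | hq
    · exact arcZ (rs_joined hE hr hne).target_mem hq
    · exact hq (Or.inl ⟨y, ⟨hB hy, fun h => hne h.symm⟩, rfl⟩)
  have dis : ∀ {S : Set V} {y : V} {c e g : ℝ → ℂ}, x ∈ S → y ∈ S → (∀ t, ∃ p ∈ arcsIn G E Sᶜ, c t = toC p) →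
      (∀ t, ∃ p ∈ arcsIn G E S, e t = toC p) → (∀ t, ∃ p ∈ Z ∪ (farFrom G E y)ᶜ, g t = toC p) →
      Disjoint (range c) (range a ∪ range e ∪ range g) := by
    intro S y c e g hxS hyS hc he hg
    rw [Set.disjoint_left]
    rintro _ ⟨t, rfl⟩ ((⟨s, hs⟩ | ⟨s, hs⟩) | ⟨s, hs⟩)
    · exact av (not_not.2 hxS) hc ma t s hs.symm
    · exact av2 he hc s t hs
    · exact av (not_not.2 hyS) hc hg t s hs.symm
  exact T4 ce1 ce2 ce3 cg1 cg2 cg3 ca e10 e11 e20 e21 e30 e31 g10 g11 g20 g21 g30 g31 a0 a1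
    (av n21 me1 mg2) (av n31 me1 mg3) (av n12 me2 mg1) (av n32 me2 mg3) (av n13 me3 mg1) (av n23 me3 mg2)
    (aY hy1 d1 _ r1) (aY hy2 d2 _ r2) (aY hy3 d3 _ r3)
    ((ka.union ke1).union kg1) ((ka.union ke2).union kg2) ((ka.union ke3).union kg3)
    (isPreconnected_range cc1) (isPreconnected_range cc2) (isPreconnected_range cc3)
    (dis x1 m1 mc1 me1 mg1) (dis x2 m2 mc2 me2 mg2) (dis x3 m3 mc3 me3 mg3)
    (fun t => Or.inl (Or.inr ⟨t, rfl⟩)) (fun t => Or.inr ⟨t, rfl⟩) (fun t => Or.inl (Or.inl ⟨t, rfl⟩))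
    (fun t => Or.inl (Or.inr ⟨t, rfl⟩)) (fun t => Or.inr ⟨t, rfl⟩) (fun t => Or.inl (Or.inl ⟨t, rfl⟩))
    (fun t => Or.inl (Or.inr ⟨t, rfl⟩)) (fun t => Or.inr ⟨t, rfl⟩) (fun t => Or.inl (Or.inl ⟨t, rfl⟩))
    ⟨0, c10⟩ ⟨1, c11⟩ ⟨0, c20⟩ ⟨1, c21⟩ ⟨0, c30⟩ ⟨1, c31⟩

lemma goodP_class (G : PlaneGraph V) : GoodClass (GoodP G) where
  noloop := fun h v hv => G.adj_irrefl v (h.1 v v hv)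
  fin := fun h => G.finite_verts.subset h.2.1
  mono := by
    rintro E B E' ⟨hE, hB, Z, Zo, Zc, Zd, Zb⟩ hs
    exact ⟨fun u v h => hE u v (hs h), hB, Z, Zo, Zc, Zd.mono_right (imE_mono hs), Zb⟩
  del := fun h hx => goodP_del h hx
  edge := fun h he => goodP_edge h he
  sep := fun h a b c d S1 S2 S3 => goodP_sep h a b c d S1 S2 S3

lemma edges_finite (G : PlaneGraph V) : {e : Sym2 V | ∃ u v, G.Adj u v ∧ e = s(u, v)}.Finite := by
  refine ((G.finite_verts.prod G.finite_verts).image (fun p => s(p.1, p.2))).subset ?_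
  rintro e ⟨u, v, h, rfl⟩
  exact ⟨(u, v), ⟨G.adj_mem u v h, adj_mem' h⟩, rfl⟩

lemma outside_connected (R : ℝ) : IsConnected (Metric.closedBall (0 : ℝ × ℝ) R)ᶜ := by
  rcases lt_or_ge R 0 with hR | hR
  · rw [Metric.closedBall_eq_empty.2 hR, compl_empty]; exact isConnected_univ
  have hrank : 1 < Module.rank ℝ (ℝ × ℝ) := by
    rw [← Module.finrank_eq_rank, Module.finrank_prod]; simp
  have h0 : IsConnected ({0}ᶜ : Set (ℝ × ℝ)) := isConnected_compl_singleton_of_one_lt_rank hrank 0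
  have him : (fun p : ℝ × ℝ => (1 + R / ‖p‖) • p) '' {0}ᶜ = (Metric.closedBall (0 : ℝ × ℝ) R)ᶜ := by
    ext q
    simp only [mem_image, mem_compl_iff, mem_singleton_iff, Metric.mem_closedBall, dist_zero_right, not_le]
    constructor
    · rintro ⟨p, hp, rfl⟩
      have hp' : 0 < ‖p‖ := norm_pos_iff.2 hp
      rw [norm_smul, Real.norm_of_nonneg (by positivity), add_mul, div_mul_cancel₀ _ hp'.ne']
      linarith
    · intro hq
      have hq' : 0 < ‖q‖ := by linarith
      have hc : 0 < 1 - R / ‖q‖ := by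
        rw [sub_pos, div_lt_one hq']; exact hq
      refine ⟨(1 - R / ‖q‖) • q, smul_ne_zero hc.ne' (norm_pos_iff.1 hq'), ?_⟩
      have hn : ‖(1 - R / ‖q‖) • q‖ = ‖q‖ - R := by
        rw [norm_smul, Real.norm_of_nonneg hc.le, sub_mul, div_mul_cancel₀ _ hq'.ne', one_mul]
      rw [hn, smul_smul]
      have : (1 + R / (‖q‖ - R)) * (1 - R / ‖q‖) = 1 := by
        have : ‖q‖ - R ≠ 0 := by linarith
        field_simp; ring
      rw [this, one_smul]
  rw [← him]
  refine h0.image _ ?_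
  refine ContinuousOn.smul (ContinuousOn.add continuousOn_const (ContinuousOn.div continuousOn_const continuous_norm.continuousOn ?_)) continuousOn_id
  intro p hp; exact norm_ne_zero_iff.2 hp

lemma goodP_init (G : PlaneGraph V) : GoodP G (edges_finite G).toFinset G.boundaryVerts := by
  set E := (edges_finite G).toFinset with hEdef
  have memE : ∀ u v, s(u, v) ∈ E ↔ G.Adj u v := by
    intro u v
    rw [hEdef, Set.Finite.mem_toFinset]
    constructor
    · rintro ⟨a, b, hab, he⟩
      rcases Sym2.eq_iff.1 he with ⟨rfl, rfl⟩ | ⟨rfl, rfl⟩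
      · exact hab
      · exact G.adj_symm _ _ hab
    · intro h; exact ⟨u, v, h, rfl⟩
  have hE : EdgesOf G E := fun u v h => (memE u v).1 h
  have him : G.image = G.pos '' G.verts ∪ imE G E := by
    rw [PlaneGraph.image]
    congr 1
    ext p
    rw [mem_imE]
    simp only [mem_iUnion, memE]
    simp only [exists_prop]
  have hcomp : IsCompact G.image := by
    rw [him]
    refine (G.finite_verts.image _).isCompact.union ?_
    refine Finset.isCompact_biUnion E (fun e he => ?_)
    induction e using Sym2.ind with
    | h u v => exact arc_compact (hE u v he)
  obtain ⟨R, hR⟩ := hcomp.isBounded.subset_closedBall (0 : ℝ × ℝ)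
  have hcon := outside_connected R
  obtain ⟨p0, hp0⟩ := hcon.nonempty
  have hsub : (Metric.closedBall (0 : ℝ × ℝ) R)ᶜ ⊆ G.imageᶜ := compl_subset_compl.2 hR
  have hout : G.outerFace ⊆ connectedComponentIn G.imageᶜ p0 := by
    rintro p ⟨hp, hub⟩
    have : ∃ q ∈ connectedComponentIn G.imageᶜ p, q ∉ Metric.closedBall (0 : ℝ × ℝ) R := by
      by_contra hno
      push Not at hno
      exact hub (Metric.isBounded_closedBall.subset hno)
    obtain ⟨q, hq1, hq2⟩ := this
    have h1 := connectedComponentIn_eq hq1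
    have h2 : q ∈ connectedComponentIn G.imageᶜ p0 := hcon.isPreconnected.subset_connectedComponentIn hp0 hsub hq2
    rw [connectedComponentIn_eq h2, ← h1]
    exact mem_connectedComponentIn hp
  refine ⟨hE, fun v hv => hv.1, connectedComponentIn G.imageᶜ p0, ?_, ?_, ?_, ?_⟩
  · exact hcomp.isClosed.isOpen_compl.connectedComponentIn
  · exact isConnected_connectedComponentIn_iff.2 (hsub hp0)
  · exact Set.disjoint_left.2 fun p hp hq => connectedComponentIn_subset _ _ hp (him ▸ Or.inr hq)
  · intro b hb
    exact closure_mono hout (frontier_subset_closure hb.2)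

end Plane

/-- Theorem 2.3, Two with List of Size Two Theorem: if
`(G, S, L)` is a canvas with `V(S) = {v₁, v₂}` (and `S` edgeless),
`|L(v₁)| ≥ 2` and `|L(v₂)| ≥ 2`, then `G` has an `L`-coloring. -/
theorem two_with_list_of_size_two {V : Type u} (G : PlaneGraph V)
    (v1 v2 : V) (L : V → Finset ℕ)
    (hv : v1 ≠ v2)
    (h : IsCanvas G {v1, v2} (fun _ _ => False) L)
    (h1 : 2 ≤ (L v1).card) (h2 : 2 ≤ (L v2).card) :
    G.HasLColoring L := by
  classical
  have m1 : v1 ∈ G.verts := h.sverts_sub (by simp)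
  have m2 : v2 ∈ G.verts := h.sverts_sub (by simp)
  obtain ⟨φ, hp, hφ⟩ := partA (L := fun v => if v ∈ G.verts then L v else Finset.range 5) (goodP_class G) (goodP_init G) hv
    ⟨m1, h.sverts_outer v1 (by simp)⟩ ⟨m2, h.sverts_outer v2 (by simp)⟩
    (by
      intro v hvS
      by_cases hvG : v ∈ G.verts
      · simp only [hvG, if_true]
        exact ⟨h.card_outside_S v hvG hvS, fun hB => h.card_inner v hvG (fun ho => hB ⟨hvG, ho⟩)⟩
      · simp [hvG])
    (by simpa [m1] using h1) (by simpa [m2] using h2)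
  refine ⟨φ, fun v hvG => by have := hφ v; simpa [hvG] using this, fun u v huv => hp u v ?_⟩
  rw [Set.Finite.mem_toFinset]
  exact ⟨u, v, huv, rfl⟩
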